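/- There exists a constant c₄ > 0 such that R_{g,t}(x) = Li(x)/[ℚ(ζ_t, g^{1/t}) : ℚ] + O(x·e^{−c₄√(log x)}), where Li(x) = ∫₂^x dt/log t and ℚ(ζ_t, g^{1/t}) is the splitting field of X^t − g over ℚ. -/

import Mathlib

/-!
Let `K = ℚ(ζ_t, g^{1/t})`. For a prime `p` not dividing `2 t` or the numerator or denominator of
`g`, one has `t ∣ r_g(p)` exactly when `p ≡ 1 (mod t)` and `g` is a `t`-th power modulo `p`, that is,
when `p` splits completely in `K`. So `R_{g,t}(x)` counts completely split primes, up to finitely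
many exceptions, and the theorem is the prime ideal theorem for `K` with the classical error term:
each completely split prime is the norm of `[K : ℚ]` prime ideals, and no other prime ideal of `K`
has norm a prime outside the finite exceptional set.

*Continuation of the Dedekind zeta function.* The ideals in one ideal class, counted with the smooth
weight `bump (N(I) / X)`, correspond to orbits of the units on a lattice in the mixed space. The sum
over orbits becomes a sum over all lattice points with a weight that multiplies `bump` of the norm by
tents in the coordinates of the unit lattice: integer translates of the tent form a partition of
unity, and a unit translates the coordinates by integers (`SmoothCount.hasSum_units`). The weight is
Lipschitz with compact support, so the sum equals the volume up to a boundary term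
(`SmoothCount.lattice_sum`, `SmoothCount.ideal_sum`). This gives
`κ X + O(X ^ (1 - 1 / [K : ℚ]))` for the smoothed number of ideals
(`SmoothCount.smoothCount_asymp`), and by a Mellin transform `(s - 1) ζ_K(s)` extends to
`Re s > 1 - 1 / [K : ℚ]` with polynomial growth (`SmoothCount.exists_continuation`). Unique
factorisation yields `-ζ_K' = ζ_K · ∑ Λ_K(n) n ^ (-s)` (`PrimeIdeals.LSeries_logMul`).

*Prime number theorem.* These facts are collected in the structure `ZetaData`, from which the prime
number theorem follows: Landau's local expansion of the logarithmic derivative (`landau_expansion`)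
and the inequality `3 + 4 cos θ + cos 2θ ≥ 0` (`ZetaData.three_four_one`) give the classical zero-free
region (`ZetaData.zero_free`) and a bound for the logarithmic derivative there
(`ZetaData.logDeriv_region`). The Riesz mean of `Λ_K` is an absolutely convergent contour integral
(`ZetaData.perron`), which is shifted into the zero-free region (`ZetaData.perron_bound`); as
`Λ_K ≥ 0`, difference quotients of the Riesz mean recover the summatory function (`ZetaData.pnt`,
`PrimeIdeals.pnt_mangoldt`).

*Back to rational primes.* `Splitting.card_norm_eq` and `Splitting.mangoldt_splitField` compute
`Λ_K(p)` as `[K : ℚ] log p` or `0`. Proper prime powers and the exceptional primes contribute `O(√x)`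
(`PrimeCount.summ_sub_le`), and partial summation replaces the weight `log p` by `1`
(`PrimeCount.countPrimes_bound`).
-/

open Polynomial Filter
open scoped Classical Pointwise

noncomputable section

/-- The reduction of a rational number mod `p`. -/
def ratRed (g : ℚ) (p : ℕ) : ZMod p := (g.num : ZMod p) * ((g.den : ℕ) : ZMod p)⁻¹

/-- `ord_p(g) = 0`: `p` divides neither the numerator nor the denominator of `g`. -/
def OrdZero (g : ℚ) (p : ℕ) : Prop := ¬ (p : ℤ) ∣ g.num ∧ ¬ p ∣ g.den

/-- The residual index `r_g(p) = [(ℤ/pℤ)^* : ⟨g mod p⟩]`. -/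
def resIndex (g : ℚ) (p : ℕ) : ℕ := (p - 1) / orderOf (ratRed g p)

/-- The decomposition `g = ± g₀ ^ h` with `g₀ > 0` not an exact power of a rational,
`h ≥ 1`, for `g ∈ ℚ ∖ {-1,0,1}`. -/
structure Decomp (g g₀ : ℚ) (h : ℕ) : Prop where
  ne_neg_one : g ≠ -1
  ne_zero : g ≠ 0
  ne_one : g ≠ 1
  g₀_pos : 0 < g₀
  not_power : ¬ ∃ (r : ℚ) (k : ℕ), 2 ≤ k ∧ r ^ k = g₀
  h_pos : 1 ≤ h
  eq : g = g₀ ^ h ∨ g = -(g₀ ^ h)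

instance (f : ℚ[X]) : NumberField (SplittingField f) where

/-- The splitting field `ℚ(ζ_m, g^{1/m})` of `X^m - g` over `ℚ`. -/
abbrev splitField (g : ℚ) (m : ℕ) : Type := SplittingField (X ^ m - C g)

/-- The quadratic field `ℚ(√g₀)`, realised as the splitting field of `X² - g₀`. -/
abbrev quadField (g₀ : ℚ) : Type := SplittingField (X ^ 2 - C g₀)

/-- `d(g₀)`, the discriminant of the quadratic field `ℚ(√g₀)`. -/
def discQuad (g₀ : ℚ) : ℤ := NumberField.discr (quadField g₀)

/-- The field `ℚ(ζ_m, √g₀)`. -/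
abbrev cycQuadField (g₀ : ℚ) (m : ℕ) : Type :=
  SplittingField ((X ^ m - 1) * (X ^ 2 - C g₀))

/-- A rational prime `p` splits completely in the number field `K`:
there are `[K:ℚ]` maximal ideals of the ring of integers above `p`. -/
def SplitsCompletely (K : Type*) [Field K] [NumberField K] (p : ℕ) : Prop :=
  Nat.card {P : Ideal (NumberField.RingOfIntegers K) //
      P.IsMaximal ∧ (p : NumberField.RingOfIntegers K) ∈ P} = Module.finrank ℚ K

/-- The number of primes `p ≤ x` satisfying the predicate `P`. -/
def countPrimes (x : ℝ) (P : ℕ → Prop) : ℕ :=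
  ((Finset.range (⌊x⌋₊ + 1)).filter fun p => p.Prime ∧ P p).card

/-- `N_{g,t}(x)`: the number of odd primes `p ≤ x` with `ord_p(g) = 0` and `r_g(p) = t`. -/
def Ngt (g : ℚ) (t : ℕ) (x : ℝ) : ℕ :=
  countPrimes x fun p => Odd p ∧ OrdZero g p ∧ resIndex g p = t

/-- `R_{g,t}(x)`: the number of odd primes `p ≤ x` with `ord_p(g) = 0` and `t ∣ r_g(p)`. -/
def Rgt (g : ℚ) (t : ℕ) (x : ℝ) : ℕ :=
  countPrimes x fun p => Odd p ∧ OrdZero g p ∧ t ∣ resIndex g p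

/-- `π(x; m, 1)`: the number of odd primes `p ≤ x` with `ord_p(g) = 0` and `p ≡ 1 (mod m)`. -/
def piCount (g : ℚ) (m : ℕ) (x : ℝ) : ℕ :=
  countPrimes x fun p => Odd p ∧ OrdZero g p ∧ p ≡ 1 [MOD m]

/-- `P_K(x)` restricted to odd primes `p` with `ord_p(g) = 0`. -/
def PKg (g : ℚ) (K : Type*) [Field K] [NumberField K] (x : ℝ) : ℕ :=
  countPrimes x fun p => Odd p ∧ OrdZero g p ∧ SplitsCompletely K p

/-- The logarithmic integral `Li(x) = ∫₂ˣ dt / log t`. -/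
def Li (x : ℝ) : ℝ := ∫ t in (2:ℝ)..x, 1 / Real.log t

/-- `ψ_d(p) = Σ_{ord χ = d} χ(g mod p)`, the sum over the complex multiplicative
characters of `(ℤ/pℤ)^*` of order exactly `d`. -/
def psiSum (g : ℚ) (p d : ℕ) : ℂ :=
  ∑ᶠ χ ∈ {χ : MulChar (ZMod p) ℂ | orderOf χ = d}, χ (ratRed g p)

/-- The finset of odd primes `p ≤ x` with `ord_p(g) = 0` and `p ≡ 1 (mod t)`. -/
def primesTo (g : ℚ) (t : ℕ) (x : ℝ) : Finset ℕ :=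
  (Finset.range (⌊x⌋₊ + 1)).filter fun p => p.Prime ∧ Odd p ∧ OrdZero g p ∧ p ≡ 1 [MOD t]

/-- The `linear' contribution `L_{g,t}(x)`. -/
def Lgt (g : ℚ) (h t : ℕ) (x : ℝ) : ℂ :=
  (1 / (t : ℂ)) * ∑ p ∈ primesTo g t x, ∑ d ∈ (Nat.gcd h t).divisors, psiSum g p d

/-- The `quadratic' contribution `Q_{g,t}(x)`. -/
def Qgt (g : ℚ) (h t : ℕ) (x : ℝ) : ℂ :=
  (1 / (t : ℂ)) * ∑ p ∈ primesTo g t x,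
    ∑ d ∈ (Nat.gcd (2 * h) t).divisors.filter (fun d => ¬ d ∣ h), psiSum g p d

/-- `M_{g,t}(x) = L_{g,t}(x) + Q_{g,t}(x)`. -/
def Mgt (g : ℚ) (h t : ℕ) (x : ℝ) : ℂ := Lgt g h t x + Qgt g h t x

/-- The weight `w_{g,t}(p)` of Theorem 1 of the paper. -/
def wgt (g g₀ : ℚ) (h t p : ℕ) : ℚ :=
  let e := padicValNat 2 h
  let τ := padicValNat 2 t
  let ht := h / Nat.gcd h t
  let ε₁ : ℚ := if τ < e then 0 else if τ = e then -1 else 1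
  if 0 < g ∧ p ≡ 1 [MOD t] ∧ Nat.gcd ((p - 1) / t) ht = 1 then
    1 + ε₁ / 2 * (1 + (-1 : ℚ) ^ ((p - 1) / 2 ^ e)) * (jacobiSym (discQuad g₀) p : ℚ)
  else if g < 0 ∧ ¬ 2 ∣ ht ∧ p ≡ 1 [MOD Nat.lcm (2 ^ (e + 1)) t] ∧
      Nat.gcd ((p - 1) / t) ht = 1 then
    1 + ε₁ * (-1 : ℚ) ^ ((p - 1) / 2 ^ (e + 1)) * (jacobiSym (discQuad g₀) p : ℚ)
  else if g < 0 ∧ 2 ∣ ht ∧ p ≡ 1 [MOD 2 * t] ∧ Nat.gcd ((p - 1) / (2 * t)) ht = 1 then 2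
  else 0

/-- `G^m = {x^m : x ∈ G}`. -/
def powSet (G : Type*) [Monoid G] (m : ℕ) : Set G := Set.range fun x : G => x ^ m

/-- `ρ`: the density `|a·G^{2h} ∩ G^t| / |G^{2h}|` in a group `G` of order `n`
(and `0` if `t ∤ n`). -/
def rhoDen (G : Type*) [Group G] (n : ℕ) (a : G) (h t : ℕ) : ℚ :=
  if t ∣ n then
    (((a • powSet G (2 * h)) ∩ powSet G t).ncard : ℚ) / ((powSet G (2 * h)).ncard : ℚ)
  else 0

/-- `r_{g,t}(p) = t_h · ρ_{sgn g, (d(g₀)/p), t}`, computed with respect to the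
generator `γ` of `(ℤ/pℤ)^*`. -/
def rgt (g g₀ : ℚ) (h t p : ℕ) (γ : (ZMod p)ˣ) : ℚ :=
  (t / Nat.gcd t h : ℕ) *
    rhoDen (ZMod p)ˣ (p - 1)
      ((if 0 < g then 1 else -1) * (if jacobiSym (discQuad g₀) p = 1 then 1 else γ ^ h)) h t

/-- The coefficients of the Dedekind zeta function of `K`: the number of ideals of
the ring of integers of `K` of absolute norm `n`. -/
def zetaCoeff (K : Type*) [Field K] [NumberField K] (n : ℕ) : ℂ :=
  (Nat.card {I : Ideal (NumberField.RingOfIntegers K) // Ideal.absNorm I = n} : ℂ)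

/-- The Riemann Hypothesis for the Dedekind zeta function `ζ_K` of a number field `K`:
any analytic continuation of the Dirichlet series `Σ_I N(I)^{-s}` off `s = 1` has all
its zeros in the critical strip on the line `Re s = 1/2`. -/
def DedekindRH (K : Type*) [Field K] [NumberField K] : Prop :=
  ∀ Z : ℂ → ℂ, (∀ s : ℂ, s ≠ 1 → AnalyticAt ℂ Z s) →
    (∀ s : ℂ, 1 < s.re → Z s = LSeries (zetaCoeff K) s) →
    ∀ s : ℂ, 0 < s.re → s.re < 1 → Z s = 0 → s.re = 1 / 2

/-- The Ramanujan sum `c_d(m)`. -/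
def ramanujanSum (d m : ℕ) : ℂ :=
  ∑ k ∈ (Finset.Icc 1 d).filter (fun k => Nat.gcd k d = 1),
    Complex.exp (2 * Real.pi * Complex.I * k * m / d)

/-- The sum `Σ_{ord χ = d} χ(γ)` over the complex characters of `G` of order exactly `d`. -/
def charOrdSum {G : Type*} [Group G] (d : ℕ) (γ : G) : ℂ :=
  ∑ᶠ χ ∈ {χ : G →* ℂˣ | orderOf χ = d}, ((χ γ : ℂˣ) : ℂ)

end

/-! ### Holomorphic functions without zeros in a disc: bounds for the logarithmic derivative -/

/-- Removing the zeros `ρ i` of `f` from the disc of radius `R / 3`: on the circle of radius `R` each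
factor `z - ρ i` is at least twice its value at `0`, so by the maximum principle the quotient `g`
inherits the bound for `f` with a gain of `2` per zero. The gain bounds the number of zeros. -/
theorem factor_bound {f g : ℂ → ℂ} {R R' M : ℝ} (hR : 0 < R) (hRR' : R < R')
    (h0 : f 0 ≠ 0)
    (hM : ∀ z ∈ Metric.sphere (0 : ℂ) R, ‖f z‖ ≤ Real.exp M * ‖f 0‖)
    {N : ℕ} {ρ : Fin N → ℂ} (hρ : ∀ i, ‖ρ i‖ ≤ R / 3)
    (hg : DifferentiableOn ℂ g (Metric.ball 0 R'))
    (hfg : ∀ z ∈ Metric.ball (0 : ℂ) R', f z = (∏ i, (z - ρ i)) * g z) :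
    g 0 ≠ 0 ∧ ∀ z ∈ Metric.closedBall (0 : ℂ) R, ‖g z‖ * 2 ^ N ≤ Real.exp M * ‖g 0‖ := by
  have h0' : f 0 = (∏ i, (0 - ρ i)) * g 0 := hfg 0 (by simp; linarith)
  have hg0 : g 0 ≠ 0 := by
    intro h
    rw [h, mul_zero] at h0'
    exact h0 h0'
  refine ⟨hg0, ?_⟩
  have hf0 : ‖f 0‖ ≤ (R / 3) ^ N * ‖g 0‖ := by
    rw [h0', norm_mul, norm_prod]
    gcongr
    calc ∏ i, ‖0 - ρ i‖ ≤ ∏ _i : Fin N, (R / 3) := by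
          apply Finset.prod_le_prod
          · intros; positivity
          · intro i _; simpa using hρ i
      _ = (R / 3) ^ N := by rw [Finset.prod_const]; simp
  have key : ∀ z ∈ Metric.closedBall (0 : ℂ) R,
      ‖g z‖ ≤ Real.exp M * ‖g 0‖ / 2 ^ N := by
    intro z hz
    refine Complex.norm_le_of_forall_mem_frontier_norm_le (U := Metric.ball 0 R)
      Metric.isBounded_ball ?_ ?_ ?_
    · apply DifferentiableOn.diffContOnCl
      rw [closure_ball _ hR.ne']
      exact hg.mono (Metric.closedBall_subset_ball hRR')
    · intro w hw
      rw [frontier_ball _ hR.ne'] at hw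
      have hwn : ‖w‖ = R := by simpa using hw
      have h1 := hM w hw
      rw [hfg w (by simp; linarith), norm_mul, norm_prod] at h1
      have h2 : (2 * R / 3) ^ N ≤ ∏ i, ‖w - ρ i‖ := by
        calc (2 * R / 3) ^ N = ∏ _i : Fin N, (2 * R / 3) := by rw [Finset.prod_const]; simp
          _ ≤ _ := by
            apply Finset.prod_le_prod
            · intros; positivity
            · intro i _
              have := norm_sub_norm_le w (ρ i)
              have := hρ i
              linarith
      rw [le_div_iff₀ (by positivity)]
      have h3 : (2 * R / 3) ^ N * ‖g w‖ ≤ Real.exp M * ((R / 3) ^ N * ‖g 0‖) :=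
        calc (2 * R / 3) ^ N * ‖g w‖ ≤ (∏ i, ‖w - ρ i‖) * ‖g w‖ := by gcongr
          _ ≤ Real.exp M * ‖f 0‖ := h1
          _ ≤ _ := by gcongr
      have h4 : (2 * R / 3) ^ N = 2 ^ N * (R / 3) ^ N := by rw [← mul_pow]; ring
      rw [h4] at h3
      have h5 : 0 < (R / 3) ^ N := by positivity
      nlinarith [h3, h5]
    · rw [closure_ball _ hR.ne']; exact hz
  intro z hz
  have := key z hz
  rwa [le_div_iff₀ (by positivity)] at this

/-- Dividing out the zeros in the disc of radius `R / 3`, the number of which is controlled by the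
growth exponent `M`. -/
theorem zeros_extract {f : ℂ → ℂ} {R R' M : ℝ} (hR : 0 < R) (hRR' : R < R')
    (hf : DifferentiableOn ℂ f (Metric.ball 0 R')) (h0 : f 0 ≠ 0)
    (hM : ∀ z ∈ Metric.sphere (0 : ℂ) R, ‖f z‖ ≤ Real.exp M * ‖f 0‖) :
    ∃ (N : ℕ) (ρ : Fin N → ℂ) (g : ℂ → ℂ), N * Real.log 2 ≤ M ∧
      (∀ i, ‖ρ i‖ ≤ R / 3 ∧ f (ρ i) = 0) ∧ DifferentiableOn ℂ g (Metric.ball 0 R') ∧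
      (∀ z ∈ Metric.ball (0 : ℂ) R', f z = (∏ i, (z - ρ i)) * g z) ∧
      (∀ z ∈ Metric.closedBall (0 : ℂ) (R / 3), g z ≠ 0) ∧
      ∀ z ∈ Metric.closedBall (0 : ℂ) R, ‖g z‖ ≤ Real.exp M * ‖g 0‖ := by
  let P : ℕ → Prop := fun N => ∃ (ρ : Fin N → ℂ) (g : ℂ → ℂ),
      (∀ i, ‖ρ i‖ ≤ R / 3 ∧ f (ρ i) = 0) ∧ DifferentiableOn ℂ g (Metric.ball 0 R') ∧
      (∀ z ∈ Metric.ball (0 : ℂ) R', f z = (∏ i, (z - ρ i)) * g z)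
  have hP0 : P 0 := ⟨fun i => i.elim0, f, fun i => i.elim0, hf, by simp⟩
  have hPN : ∀ N, P N → N * Real.log 2 ≤ M := by
    rintro N ⟨ρ, g, h1, h2, h3⟩
    obtain ⟨hg0, hb⟩ := factor_bound hR hRR' h0 hM (fun i => (h1 i).1) h2 h3
    have := hb 0 (by simp [hR.le])
    have hgpos : 0 < ‖g 0‖ := norm_pos_iff.mpr hg0
    have h4 : (2 : ℝ) ^ N ≤ Real.exp M := by nlinarith
    have := Real.log_le_log (by positivity) h4
    rwa [Real.log_pow, Real.log_exp] at this
  obtain ⟨N, hN, hN1⟩ : ∃ N, P N ∧ ¬ P (N + 1) := by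
    by_contra! hcon
    have hall : ∀ N, P N := fun N => by
      induction N with
      | zero => exact hP0
      | succ k ih => exact hcon k ih
    obtain ⟨N, hN⟩ := exists_nat_gt (M / Real.log 2)
    have h2 : 0 < Real.log 2 := Real.log_pos (by norm_num)
    have := hPN N (hall N)
    rw [div_lt_iff₀ h2] at hN
    linarith
  have hNM := hPN N hN
  obtain ⟨ρ, g, h1, h2, h3⟩ := hN
  obtain ⟨hg0, hb⟩ := factor_bound hR hRR' h0 hM (fun i => (h1 i).1) h2 h3
  refine ⟨N, ρ, g, hNM, h1, h2, h3, ?_, ?_⟩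
  · intro w hw hgw
    apply hN1
    have hwn : ‖w‖ ≤ R / 3 := by simpa using hw
    have hwb : w ∈ Metric.ball (0 : ℂ) R' := by simp; linarith
    refine ⟨Fin.cons w ρ, dslope g w, ?_, ?_, ?_⟩
    · intro i
      refine Fin.cases ?_ (fun j => ?_) i
      · simp only [Fin.cons_zero]
        exact ⟨hwn, by rw [h3 w hwb, hgw, mul_zero]⟩
      · simpa using h1 j
    · exact (Complex.differentiableOn_dslope (Metric.isOpen_ball.mem_nhds hwb)).mpr h2
    · intro z hz
      rw [h3 z hz, Fin.prod_univ_succ]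
      simp only [Fin.cons_zero, Fin.cons_succ]
      have := sub_smul_dslope g w z
      rw [hgw, sub_zero, smul_eq_mul] at this
      rw [← this]; ring
  · intro z hz
    have h5 := hb z hz
    have : (1 : ℝ) ≤ 2 ^ N := one_le_pow₀ (by norm_num)
    nlinarith [norm_nonneg (g z)]

/-- A bound for the logarithmic derivative of a function without zeros. -/
theorem logDeriv_bound_of_ne_zero {g : ℂ → ℂ} {r M : ℝ} (hr : 0 < r) (hM : 0 < M)
    (hg : DifferentiableOn ℂ g (Metric.ball 0 r)) (h0 : ∀ z ∈ Metric.ball (0 : ℂ) r, g z ≠ 0)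
    (hb : ∀ z ∈ Metric.ball (0 : ℂ) r, ‖g z‖ ≤ Real.exp M * ‖g 0‖)
    {z : ℂ} (hz : ‖z‖ ≤ r / 4) : ‖logDeriv g z‖ ≤ 8 * M / r := by
  have hd : DifferentiableOn ℂ (logDeriv g) (Metric.ball 0 r) := by
    have : DifferentiableOn ℂ (deriv g) (Metric.ball 0 r) := hg.deriv Metric.isOpen_ball
    exact this.div hg h0
  obtain ⟨h, hh⟩ := hd.isExactOn_ball
  -- normalise the primitive so that it vanishes at the centre
  let k : ℂ → ℂ := fun w => h w - h 0
  have hk : ∀ w ∈ Metric.ball (0 : ℂ) r, HasDerivAt k (logDeriv g w) w :=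
    fun w hw => (hh w hw).sub_const _
  have h00 : (0 : ℂ) ∈ Metric.ball (0 : ℂ) r := by simp [hr]
  have hgd : ∀ w ∈ Metric.ball (0 : ℂ) r, HasDerivAt g (deriv g w) w := fun w hw =>
    ((hg w hw).differentiableAt (Metric.isOpen_ball.mem_nhds hw)).hasDerivAt
  have hexp : ∀ w ∈ Metric.ball (0 : ℂ) r, g w = g 0 * Complex.exp (k w) := by
    intro w hw
    have hder : ∀ u ∈ Metric.ball (0 : ℂ) r,
        HasDerivAt (fun u => g u * Complex.exp (-k u)) 0 u := by
      intro u hu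
      have := (hgd u hu).mul ((hk u hu).neg.cexp)
      have h2 : deriv g u * Complex.exp (-k u) + g u * (Complex.exp (-k u) * -logDeriv g u)
          = 0 := by
        rw [logDeriv_apply]
        field_simp [h0 u hu]
        ring
      rw [← h2]
      exact this
    have := IsOpen.is_const_of_deriv_eq_zero Metric.isOpen_ball
      (convex_ball (0 : ℂ) r).isPreconnected
      (fun u hu => (hder u hu).differentiableAt.differentiableWithinAt)
      (fun u hu => (hder u hu).deriv) hw h00
    have hk0 : k 0 = 0 := by simp [k]
    simp only [hk0, neg_zero, Complex.exp_zero, mul_one] at this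
    rw [← this, mul_assoc, ← Complex.exp_add]
    simp
  have hre : ∀ w ∈ Metric.ball (0 : ℂ) r, (k w).re ≤ M := by
    intro w hw
    have h1 := hb w hw
    rw [hexp w hw, norm_mul, Complex.norm_exp, mul_comm] at h1
    have h2 : 0 < ‖g 0‖ := norm_pos_iff.mpr (h0 0 h00)
    exact Real.exp_le_exp.mp (le_of_mul_le_mul_right h1 h2)
  have hkd : DifferentiableOn ℂ k (Metric.ball 0 r) :=
    fun u hu => (hk u hu).differentiableAt.differentiableWithinAt
  have hbc : ∀ w, ‖w‖ ≤ r / 2 → ‖k w‖ ≤ 2 * M := by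
    intro w hw
    have := Complex.borelCaratheodory_zero hM hkd (fun u hu => hre u hu) hr
      (z := w) (by simp; linarith) (by simp [k])
    refine this.trans ?_
    rw [div_le_iff₀ (by linarith)]
    nlinarith
  have hder := Complex.norm_deriv_le_of_forall_mem_sphere_norm_le (f := k) (c := z) (R := r / 4)
    (C := 2 * M) (by linarith) (by
      apply DifferentiableOn.diffContOnCl
      rw [closure_ball _ (by linarith)]
      refine hkd.mono fun w hw => ?_
      have := norm_le_norm_add_norm_sub' w z
      simp [dist_eq_norm] at hw ⊢
      linarith) (by
      intro w hw
      apply hbc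
      have := norm_le_norm_add_norm_sub' w z
      simp at hw
      linarith)
  rw [(hk z (by simp; linarith)).deriv] at hder
  refine hder.trans (le_of_eq ?_)
  field_simp
  ring

/-- Landau's local expansion of the logarithmic derivative as a sum over nearby zeros. -/
theorem landau_expansion {f : ℂ → ℂ} {R R' M : ℝ} (hR : 0 < R) (hRR' : R < R') (hMpos : 0 < M)
    (hf : DifferentiableOn ℂ f (Metric.ball 0 R')) (h0 : f 0 ≠ 0)
    (hM : ∀ z ∈ Metric.sphere (0 : ℂ) R, ‖f z‖ ≤ Real.exp M * ‖f 0‖) :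
    ∃ (N : ℕ) (ρ : Fin N → ℂ), N * Real.log 2 ≤ M ∧
      (∀ i, ‖ρ i‖ ≤ R / 3 ∧ f (ρ i) = 0) ∧
      (∀ z, ‖z‖ ≤ R / 3 → f z = 0 → ∃ i, ρ i = z) ∧
      ∀ z, ‖z‖ ≤ R / 12 → f z ≠ 0 → ‖logDeriv f z - ∑ i, 1 / (z - ρ i)‖ ≤ 24 * M / R := by
  obtain ⟨N, ρ, g, hN, hρ, hg, hfg, hg0, hgb⟩ := zeros_extract hR hRR' hf h0 hM
  refine ⟨N, ρ, hN, hρ, ?_, ?_⟩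
  · intro z hz hfz
    rw [hfg z (by simp; linarith), mul_eq_zero] at hfz
    rcases hfz with h | h
    · obtain ⟨i, -, hi⟩ := Finset.prod_eq_zero_iff.mp h
      exact ⟨i, (sub_eq_zero.mp hi).symm⟩
    · exact absurd h (hg0 z (by simpa using hz))
  · intro z hz hfz
    have hzb : z ∈ Metric.ball (0 : ℂ) R' := by simp; linarith
    have hne : ∀ i, z - ρ i ≠ 0 := fun i h => by
      apply hfz
      rw [sub_eq_zero.mp h]
      exact (hρ i).2
    have hgz : g z ≠ 0 := hg0 z (by simp; linarith)
    have hev : f =ᶠ[nhds z] fun z => (∏ i, (z - ρ i)) * g z := by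
      filter_upwards [Metric.isOpen_ball.mem_nhds hzb] with w hw using hfg w hw
    have h1 : logDeriv f z = logDeriv (fun z => (∏ i, (z - ρ i)) * g z) z := by
      rw [logDeriv_apply, logDeriv_apply, hev.deriv_eq, hfg z hzb]
    have hgd : DifferentiableAt ℂ g z :=
      (hg z hzb).differentiableAt (Metric.isOpen_ball.mem_nhds hzb)
    rw [h1, logDeriv_mul z (Finset.prod_ne_zero_iff.mpr fun i _ => hne i) hgz (by fun_prop) hgd,
      logDeriv_prod (fun i _ => hne i) (fun i _ => by fun_prop)]
    have h2 : ∑ i, logDeriv (fun z => z - ρ i) z = ∑ i, 1 / (z - ρ i) := by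
      refine Finset.sum_congr rfl fun i _ => ?_
      rw [logDeriv_apply]
      simp
    rw [h2, add_sub_cancel_left]
    have := logDeriv_bound_of_ne_zero (g := g) (r := R / 3) (by linarith) hMpos
      (hg.mono (Metric.ball_subset_ball (by linarith)))
      (fun w hw => hg0 w (Metric.ball_subset_closedBall hw))
      (fun w hw => hgb w (Metric.closedBall_subset_closedBall (by linarith)
        (Metric.ball_subset_closedBall hw))) (z := z) (by linarith)
    refine this.trans (le_of_eq ?_)
    field_simp
    ring

/-! ### Zeta data: the abstract input of the prime number theorem -/

/-- The data behind a prime number theorem: a non-negative function `b` of von Mangoldt type whose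
Dirichlet series is `1 / (s - 1) - H' / H`, where `H` is holomorphic of polynomial growth in
`Re s > 1 - δ`, does not vanish for `Re s > 1`, and `H 1 ≠ 0`. For a zeta function `Z` one takes
`H s = (s - 1) * Z s`. -/
structure ZetaData (b : ℕ → ℝ) (H : ℂ → ℂ) (δ : ℝ) : Prop where
  b_nonneg : ∀ n, 0 ≤ b n
  b_le : ∃ C, 0 ≤ C ∧ ∀ n, b n ≤ C * ArithmeticFunction.vonMangoldt n
  δ_pos : 0 < δ
  δ_le : δ ≤ 1
  diff : DifferentiableOn ℂ H {s | 1 - δ < s.re}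
  bound : ∃ C, 0 < C ∧ ∀ s : ℂ, 1 - δ < s.re → s.re ≤ 3 → ‖H s‖ ≤ C * (1 + |s.im|) ^ 3
  one : H 1 ≠ 0
  ne : ∀ s : ℂ, 1 < s.re → H s ≠ 0
  rel : ∀ s : ℂ, 1 < s.re → logDeriv H s = 1 / (s - 1) - LSeries (fun n => (b n : ℂ)) s

/-- The logarithmic height `log (|t| + 3)`, normalised to be at least `1`. -/
noncomputable def logHt (t : ℝ) : ℝ := Real.log (|t| + 3)

theorem one_le_logHt (t : ℝ) : 1 ≤ logHt t := by
  rw [logHt, Real.le_log_iff_exp_le (by positivity)]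
  have := Real.exp_one_lt_d9
  have := abs_nonneg t
  linarith

theorem logHt_zero_le (t : ℝ) : logHt 0 ≤ logHt t := by
  unfold logHt
  apply Real.log_le_log (by positivity)
  have := abs_nonneg t
  rw [abs_zero]
  linarith

theorem logHt_le_two_mul {t u : ℝ} (h : |u| ≤ 2 * |t| + 3) : logHt u ≤ 2 * logHt t := by
  unfold logHt
  rw [← Real.log_rpow (by positivity)]
  apply Real.log_le_log (by positivity)
  have := abs_nonneg t
  norm_num
  nlinarith

namespace ZetaData

variable {b : ℕ → ℝ} {H : ℂ → ℂ} {δ : ℝ}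

theorem b_zero (h : ZetaData b H δ) : b 0 = 0 := by
  obtain ⟨C, -, hC⟩ := h.b_le
  have := hC 0
  simp at this
  exact le_antisymm this (h.b_nonneg 0)

theorem b_one (h : ZetaData b H δ) : b 1 = 0 := by
  obtain ⟨C, -, hC⟩ := h.b_le
  have := hC 1
  simp at this
  exact le_antisymm this (h.b_nonneg 1)

theorem summable (h : ZetaData b H δ) {s : ℂ} (hs : 1 < s.re) :
    LSeriesSummable (fun n => (b n : ℂ)) s := by
  obtain ⟨C, hC0, hC⟩ := h.b_le
  have h1 := (ArithmeticFunction.LSeriesSummable_vonMangoldt hs).smul (C : ℂ)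
  refine Summable.of_norm_bounded h1.norm fun n => ?_
  apply LSeries.norm_term_le
  have h2 := hC n
  have h3 : 0 ≤ ArithmeticFunction.vonMangoldt n := ArithmeticFunction.vonMangoldt_nonneg
  simp [abs_of_nonneg (h.b_nonneg n), abs_of_nonneg hC0, abs_of_nonneg h3]
  exact h2

theorem isOpen_dom (δ : ℝ) : IsOpen {s : ℂ | 1 - δ < s.re} :=
  isOpen_lt continuous_const Complex.continuous_re

theorem differentiableAt (h : ZetaData b H δ) {s : ℂ} (hs : 1 - δ < s.re) :
    DifferentiableAt ℂ H s :=
  (h.diff s hs).differentiableAt ((isOpen_dom δ).mem_nhds hs)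

/-- A lower bound on a vertical line, obtained by comparing `H s / (s - 1)` with the exponential of
the Dirichlet series with coefficients `b n / log n`. -/
theorem lower (h : ZetaData b H δ) {κ : ℝ} (hκ : 0 < κ) :
    ∃ m, 0 < m ∧ ∀ t : ℝ, m ≤ ‖H (1 + κ + t * Complex.I)‖ := by
  let e : ℕ → ℂ := fun n => (b n : ℂ) / Real.log n
  have he : ∀ s : ℂ, 1 < s.re → LSeriesSummable e s := by
    intro s hs
    have h1 := (h.summable hs).smul ((1 / Real.log 2 : ℝ) : ℂ)
    refine Summable.of_norm_bounded h1.norm fun n => ?_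
    apply LSeries.norm_term_le
    have h2 : 0 < Real.log 2 := Real.log_pos (by norm_num)
    rcases Nat.lt_or_ge n 2 with hn | hn
    · interval_cases n <;> simp [e, h.b_zero, h.b_one]
    · have h3 : Real.log 2 ≤ Real.log n := Real.log_le_log (by norm_num) (by exact_mod_cast hn)
      simp only [e, norm_div, Complex.norm_real, Real.norm_eq_abs, abs_of_nonneg (h.b_nonneg n),
        abs_of_pos (h2.trans_le h3), Pi.smul_apply, smul_eq_mul, norm_mul, abs_of_pos h2, abs_one]
      rw [div_mul_eq_mul_div, one_mul]
      exact div_le_div_of_nonneg_left (h.b_nonneg n) h2 h3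
  have habs : LSeries.abscissaOfAbsConv e ≤ ((1 : ℝ) : EReal) :=
    LSeries.abscissaOfAbsConv_le_of_forall_lt_LSeriesSummable fun y hy => he y (by simpa using hy)
  have hlog : LSeries.logMul e = fun n => (b n : ℂ) := by
    funext n
    rcases Nat.lt_or_ge n 2 with hn | hn
    · interval_cases n <;> simp [e, LSeries.logMul, h.b_zero, h.b_one]
    · have h3 : (Real.log n : ℂ) ≠ 0 := by
        exact_mod_cast (Real.log_pos (by exact_mod_cast hn)).ne'
      simp only [LSeries.logMul, e]
      rw [← Complex.natCast_log]
      field_simp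
  have hder : ∀ s : ℂ, 1 < s.re →
      HasDerivAt (LSeries e) (-LSeries (fun n => (b n : ℂ)) s) s := by
    intro s hs
    have := LSeries_hasDerivAt (f := e) (s := s) (lt_of_le_of_lt habs (by exact_mod_cast hs))
    rwa [hlog] at this
  -- `H s / (s - 1) * exp (- L(e, s))` has derivative zero
  let W : ℂ → ℂ := fun s => H s / (s - 1) * Complex.exp (-LSeries e s)
  let U : Set ℂ := {s | 1 < s.re}
  have hUo : IsOpen U := isOpen_lt continuous_const Complex.continuous_re
  have hUc : IsPreconnected U := (convex_halfSpace_re_gt 1).isPreconnected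
  have hW : ∀ s ∈ U, HasDerivAt W 0 s := by
    intro s hs
    have hs1 : s - 1 ≠ 0 := by
      intro h0
      have : s = 1 := sub_eq_zero.mp h0
      simp [U, this] at hs
    have hH := (h.differentiableAt (s := s) (by
      have : 1 < s.re := hs
      have := h.δ_pos
      linarith)).hasDerivAt
    have hHne := h.ne s hs
    have hrel := h.rel s hs
    rw [logDeriv_apply, div_eq_iff hHne] at hrel
    have h1 := (hH.div ((hasDerivAt_id s).sub_const 1) hs1).mul ((hder s hs).neg.cexp)
    have h2 : (deriv H s * (s - 1) - H s * 1) / (s - 1) ^ 2 * Complex.exp (-LSeries e s) +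
        H s / (s - 1) * (Complex.exp (-LSeries e s) * -(-LSeries (fun n => (b n : ℂ)) s)) = 0 := by
      rw [hrel]
      field_simp
      ring
    rw [← h2]
    exact h1
  have hconst : ∀ s ∈ U, W s = W 2 := fun s hs =>
    hUo.is_const_of_deriv_eq_zero hUc (fun u hu => (hW u hu).differentiableAt.differentiableWithinAt)
      (fun u hu => (hW u hu).deriv) hs (by simp [U])
  have hW2 : W 2 ≠ 0 := by
    simp only [W]
    exact mul_ne_zero (div_ne_zero (h.ne 2 (by simp)) (by norm_num)) (Complex.exp_ne_zero _)
  set B : ℝ := ∑' n, ‖LSeries.term e ((1 + κ : ℝ) : ℂ) n‖ with hB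
  refine ⟨κ * ‖W 2‖ * Real.exp (-B), by positivity, fun t => ?_⟩
  set s : ℂ := 1 + κ + t * Complex.I with hs
  have hsre : s.re = 1 + κ := by simp [hs]
  have hsU : s ∈ U := by simp only [U, Set.mem_ofPred_eq, hsre]; linarith
  have hs1 : κ ≤ ‖s - 1‖ := by
    have := Complex.abs_re_le_norm (s - 1)
    simp only [Complex.sub_re, hsre, Complex.one_re, add_sub_cancel_left, abs_of_pos hκ] at this
    exact this
  have hs1' : s - 1 ≠ 0 := by
    intro h0
    rw [h0, norm_zero] at hs1
    linarith
  have hHs : H s = (s - 1) * W 2 * Complex.exp (LSeries e s) := by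
    rw [← hconst s hsU]
    simp only [W]
    rw [mul_assoc, mul_assoc, ← Complex.exp_add]
    simp
    field_simp
  have hL : -B ≤ (LSeries e s).re := by
    have h1 : ‖LSeries e s‖ ≤ ∑' n, ‖LSeries.term e s n‖ :=
      norm_tsum_le_tsum_norm (he s hsU).norm
    have h2 : ∑' n, ‖LSeries.term e s n‖ = B := by
      rw [hB]
      congr 1
      funext n
      rw [LSeries.norm_term_eq, LSeries.norm_term_eq, hsre]
      simp
    have h3 := Complex.abs_re_le_norm (LSeries e s)
    have h4 := neg_abs_le (LSeries e s).re
    linarith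
  rw [hHs]
  generalize W 2 = w at hW2
  rw [norm_mul, norm_mul, Complex.norm_exp]
  gcongr

/-- Landau's expansion of `H' / H` near the line `Re s = 1`, uniformly in the height. -/
theorem expansion (h : ZetaData b H δ) : ∃ A, 1 ≤ A ∧ ∀ t : ℝ, ∃ (N : ℕ) (ρ : Fin N → ℂ),
    (N : ℝ) ≤ A * logHt t ∧
    (∀ i, H (ρ i) = 0 ∧ 1 - δ < (ρ i).re ∧ |(ρ i).im - t| ≤ 1) ∧
    (∀ z : ℂ, ‖z - (1 + (δ / 100 : ℝ) + t * Complex.I)‖ ≤ δ / 6 → H z = 0 → ∃ i, ρ i = z) ∧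
    ∀ z : ℂ, ‖z - (1 + (δ / 100 : ℝ) + t * Complex.I)‖ ≤ δ / 24 → H z ≠ 0 →
      ‖logDeriv H z - ∑ i, 1 / (z - ρ i)‖ ≤ A * logHt t := by
  have hδ := h.δ_pos
  have hδ1 := h.δ_le
  obtain ⟨m, hm, hlow⟩ := h.lower (κ := δ / 100) (by positivity)
  obtain ⟨C, hC, hbd⟩ := h.bound
  set D := 3 + |Real.log (C / m)| with hD
  have hD3 : 3 ≤ D := by rw [hD]; have := abs_nonneg (Real.log (C / m)); linarith
  refine ⟨(2 + 48 / δ) * D, ?_, fun t => ?_⟩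
  · have : 0 < 48 / δ := by positivity
    nlinarith
  set s₀ : ℂ := 1 + (δ / 100 : ℝ) + t * Complex.I with hs₀
  have hre : s₀.re = 1 + δ / 100 := by
    rw [hs₀]; simp
  have him : s₀.im = t := by
    rw [hs₀]; simp
  let f : ℂ → ℂ := fun z => H (s₀ + z)
  have hl1 := one_le_logHt t
  have hMpos : 0 < D * logHt t := by positivity
  have habs : ∀ z : ℂ, |z.re| ≤ ‖z‖ ∧ |z.im| ≤ ‖z‖ :=
    fun z => ⟨Complex.abs_re_le_norm z, Complex.abs_im_le_norm z⟩
  have hdom : ∀ z : ℂ, ‖z‖ < 9 / 10 * δ → 1 - δ < (s₀ + z).re := by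
    intro z hz
    have h1 := (habs z).1
    have h2 := neg_abs_le z.re
    rw [Complex.add_re, hre]
    linarith
  have hf : DifferentiableOn ℂ f (Metric.ball 0 (9 / 10 * δ)) := by
    intro z hz
    have hz' : ‖z‖ < 9 / 10 * δ := by simpa using hz
    have : DifferentiableAt ℂ H (s₀ + z) := h.differentiableAt (hdom z hz')
    exact (this.comp z (by fun_prop : DifferentiableAt ℂ (fun z => s₀ + z) z)).differentiableWithinAt
  have hf0 : m ≤ ‖f 0‖ := by
    simp only [f, add_zero]
    exact hlow t
  have hsph : ∀ z ∈ Metric.sphere (0 : ℂ) (δ / 2), ‖f z‖ ≤ Real.exp (D * logHt t) * ‖f 0‖ := by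
    intro z hz
    have hz' : ‖z‖ = δ / 2 := by simpa using hz
    have h1 := habs z
    have h2 : ‖f z‖ ≤ C * (1 + |(s₀ + z).im|) ^ 3 := by
      apply hbd
      · exact hdom z (by linarith)
      · rw [Complex.add_re, hre]
        have := le_abs_self z.re
        linarith
    have h3 : 1 + |(s₀ + z).im| ≤ |t| + 3 := by
      rw [Complex.add_im, him]
      have := abs_add_le t z.im
      linarith
    have h4 : Real.exp (logHt t) = |t| + 3 := Real.exp_log (by positivity)
    have h5 : C / m ≤ Real.exp (|Real.log (C / m)| * logHt t) := by
      calc C / m = Real.exp (Real.log (C / m)) := (Real.exp_log (by positivity)).symm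
        _ ≤ _ := by
          apply Real.exp_le_exp.mpr
          have := le_abs_self (Real.log (C / m))
          nlinarith [abs_nonneg (Real.log (C / m))]
    have h6 : Real.exp (D * logHt t) =
        (|t| + 3) ^ 3 * Real.exp (|Real.log (C / m)| * logHt t) := by
      rw [hD, add_mul, Real.exp_add, ← h4, ← Real.exp_nat_mul]
      norm_num
    rw [h6]
    calc ‖f z‖ ≤ C * (|t| + 3) ^ 3 := h2.trans (by gcongr)
      _ = (|t| + 3) ^ 3 * (C / m) * m := by field_simp
      _ ≤ _ := by gcongr
  obtain ⟨N, ρ, hN, hρ, hall, hexp⟩ := landau_expansion (R := δ / 2) (R' := 9 / 10 * δ)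
    (by positivity) (by linarith) hMpos hf
    (by rw [← norm_pos_iff]; linarith) hsph
  refine ⟨N, fun i => s₀ + ρ i, ?_, ?_, ?_, ?_⟩
  · have := Real.log_two_gt_d9
    have h7 : (N : ℝ) ≤ 2 * (D * logHt t) := by
      have : (0 : ℝ) ≤ N := Nat.cast_nonneg N
      nlinarith
    refine h7.trans ?_
    rw [← mul_assoc]
    gcongr
    have : 0 < 48 / δ := by positivity
    linarith
  · intro i
    have h1 := hρ i
    refine ⟨h1.2, hdom _ (by linarith), ?_⟩
    rw [Complex.add_im, him, add_sub_cancel_left]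
    have := (habs (ρ i)).2
    linarith
  · intro z hz hHz
    obtain ⟨i, hi⟩ := hall (z - s₀) (by linarith) (by simp [f, hHz])
    exact ⟨i, by simp [hi]⟩
  · intro z hz hHz
    have := hexp (z - s₀) (by linarith) (by simpa [f] using hHz)
    have h8 : logDeriv f (z - s₀) = logDeriv H z := by
      simp only [logDeriv_apply, f]
      rw [deriv_comp_const_add]
      simp
    rw [h8] at this
    have h9 : ∑ i, 1 / (z - s₀ - ρ i) = ∑ i, 1 / (z - (s₀ + ρ i)) := by
      refine Finset.sum_congr rfl fun i _ => ?_
      ring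
    rw [h9] at this
    refine this.trans ?_
    have h10 : 24 * (D * logHt t) / (δ / 2) = 48 / δ * D * logHt t := by
      field_simp
      ring
    rw [h10]
    gcongr
    linarith

end ZetaData

/-! ### The zero-free region -/

namespace ZetaData

variable {b : ℕ → ℝ} {H : ℂ → ℂ} {δ : ℝ}

/-- The inequality `3 + 4 cos θ + cos 2θ ≥ 0`, summed against `b n / n ^ σ`. -/
theorem three_four_one (h : ZetaData b H δ) {σ : ℝ} (hσ : 1 < σ) (t : ℝ) :
    0 ≤ 3 * (LSeries (fun n => (b n : ℂ)) σ).re +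
      4 * (LSeries (fun n => (b n : ℂ)) (σ + t * Complex.I)).re +
      (LSeries (fun n => (b n : ℂ)) (σ + (2 * t : ℝ) * Complex.I)).re := by
  set f : ℕ → ℂ := fun n => (b n : ℂ) with hf
  have hs : ∀ u : ℝ, HasSum (LSeries.term f (σ + u * Complex.I)) (LSeries f (σ + u * Complex.I)) :=
    fun u => (h.summable (s := σ + u * Complex.I) (by simpa using hσ)).hasSum
  have h0 := hs 0
  simp only [Complex.ofReal_zero, zero_mul, add_zero] at h0
  have hsum := Complex.hasSum_re (((h0.mul_left 3).add ((hs t).mul_left 4)).add (hs (2 * t)))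
  suffices hre : 0 ≤ (3 * LSeries f σ + 4 * LSeries f (σ + t * Complex.I) +
      LSeries f (σ + (2 * t : ℝ) * Complex.I)).re by simpa using hre
  refine hsum.nonneg fun n => ?_
  rcases Nat.eq_zero_or_pos n with rfl | hn
  · simp
  have hn0 : n ≠ 0 := hn.ne'
  have hnC : (n : ℂ) ≠ 0 := by exact_mod_cast hn0
  set w : ℂ := (n : ℂ) ^ (-(t * Complex.I)) with hw
  have hw1 : ‖w‖ = 1 := by
    rw [hw, Complex.norm_natCast_cpow_of_pos hn]
    simp
  have e0 : LSeries.term f σ n = ((b n * (n : ℝ) ^ (-σ) : ℝ) : ℂ) := by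
    rw [LSeries.term_of_ne_zero hn0, hf, div_eq_mul_inv, ← Complex.cpow_neg]
    push_cast
    rw [Complex.ofReal_cpow (Nat.cast_nonneg n)]
    push_cast
    rfl
  have e1 : LSeries.term f (σ + t * Complex.I) n = LSeries.term f σ n * w := by
    rw [LSeries.term_of_ne_zero hn0, LSeries.term_of_ne_zero hn0, hw, Complex.cpow_neg,
      Complex.cpow_add _ _ hnC]
    field_simp
  have e2 : LSeries.term f (σ + (2 * t : ℝ) * Complex.I) n = LSeries.term f σ n * w ^ 2 := by
    have : ((2 * t : ℝ) : ℂ) * Complex.I = t * Complex.I + t * Complex.I := by push_cast; ring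
    rw [LSeries.term_of_ne_zero hn0, LSeries.term_of_ne_zero hn0, hw, Complex.cpow_neg, this,
      Complex.cpow_add _ _ hnC, Complex.cpow_add _ _ hnC]
    field_simp
  rw [e1, e2, e0]
  have e3 : (3 * ((b n * (n : ℝ) ^ (-σ) : ℝ) : ℂ) + 4 * (((b n * (n : ℝ) ^ (-σ) : ℝ) : ℂ) * w) +
      ((b n * (n : ℝ) ^ (-σ) : ℝ) : ℂ) * w ^ 2).re =
      (b n * (n : ℝ) ^ (-σ)) * (3 + 4 * w.re + (w.re ^ 2 - w.im ^ 2)) := by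
    generalize b n * (n : ℝ) ^ (-σ) = r
    simp [pow_two]
    ring
  have e4 : w.re ^ 2 + w.im ^ 2 = 1 := by
    have := Complex.sq_norm w
    rw [hw1, Complex.normSq_apply] at this
    linarith
  rw [e3]
  have h5 := h.b_nonneg n
  have : 3 + 4 * w.re + (w.re ^ 2 - w.im ^ 2) = 2 * (1 + w.re) ^ 2 := by linarith
  rw [this]
  positivity

theorem zero_re_le (h : ZetaData b H δ) {ρ : ℂ} (hρ : H ρ = 0) : ρ.re ≤ 1 := by
  by_contra hc
  exact h.ne ρ (not_le.mp hc) hρ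

theorem re_inv_nonneg {z : ℂ} (hz : 0 ≤ z.re) : 0 ≤ (1 / z).re := by
  rw [one_div, Complex.inv_re]
  exact div_nonneg hz (Complex.normSq_nonneg z)

/-- Near the line `Re s = 1`, all zeros contribute non-negatively to `Re (H' / H)`; a zero of
real part `β` at the same height contributes `1 / (σ - β)`. -/
theorem re_logDeriv_lower (h : ZetaData b H δ) : ∃ A, 1 ≤ A ∧
    (∀ σ t : ℝ, 1 < σ → σ ≤ 1 + δ / 50 →
      -(logDeriv H (σ + t * Complex.I)).re ≤ A * logHt t) ∧
    (∀ σ t β : ℝ, 1 < σ → σ ≤ 1 + δ / 50 → 1 - δ / 50 ≤ β → H (β + t * Complex.I) = 0 →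
      -(logDeriv H (σ + t * Complex.I)).re ≤ A * logHt t - 1 / (σ - β)) := by
  obtain ⟨A, hA, hexp⟩ := h.expansion
  have hδ := h.δ_pos
  have key : ∀ σ t : ℝ, 1 < σ → σ ≤ 1 + δ / 50 →
      ‖((σ : ℂ) + t * Complex.I) - (1 + (δ / 100 : ℝ) + t * Complex.I)‖ ≤ δ / 24 := by
    intro σ t h1 h2
    have : ((σ : ℂ) + t * Complex.I) - (1 + (δ / 100 : ℝ) + t * Complex.I) =
        ((σ - 1 - δ / 100 : ℝ) : ℂ) := by push_cast; ring
    rw [this, Complex.norm_real, Real.norm_eq_abs, abs_le]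
    constructor <;> linarith
  refine ⟨A, hA, ?_, ?_⟩
  · intro σ t h1 h2
    obtain ⟨N, ρ, -, hρ, -, he⟩ := hexp t
    have h3 := he _ (key σ t h1 h2) (h.ne _ (by simpa using h1))
    have h4 := (Complex.abs_re_le_norm _).trans h3
    rw [Complex.sub_re, Complex.re_sum] at h4
    have h5 : 0 ≤ ∑ i, (1 / ((σ : ℂ) + t * Complex.I - ρ i)).re := by
      refine Finset.sum_nonneg fun i _ => re_inv_nonneg ?_
      have := h.zero_re_le (hρ i).1
      simp
      linarith
    have := (abs_le.mp h4).1
    linarith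
  · intro σ t β h1 h2 h6 hz
    obtain ⟨N, ρ, -, hρ, hall, he⟩ := hexp t
    have h3 := he _ (key σ t h1 h2) (h.ne _ (by simpa using h1))
    have h4 := (Complex.abs_re_le_norm _).trans h3
    rw [Complex.sub_re, Complex.re_sum] at h4
    have hβ : β ≤ 1 := by simpa using h.zero_re_le hz
    obtain ⟨i, hi⟩ := hall (β + t * Complex.I) (by
      have : ((β : ℂ) + t * Complex.I) - (1 + (δ / 100 : ℝ) + t * Complex.I) =
        ((β - 1 - δ / 100 : ℝ) : ℂ) := by push_cast; ring
      rw [this, Complex.norm_real, Real.norm_eq_abs, abs_le]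
      constructor <;> linarith) hz
    have h5 : (1 / ((σ : ℂ) + t * Complex.I - ρ i)).re ≤
        ∑ i, (1 / ((σ : ℂ) + t * Complex.I - ρ i)).re := by
      refine Finset.single_le_sum (f := fun i => (1 / ((σ : ℂ) + t * Complex.I - ρ i)).re)
        (fun i _ => re_inv_nonneg ?_) (Finset.mem_univ i)
      have := h.zero_re_le (hρ i).1
      simp
      linarith
    have h7 : (1 / ((σ : ℂ) + t * Complex.I - ρ i)).re = 1 / (σ - β) := by
      have : (1 / ((σ : ℂ) + t * Complex.I - ρ i)) = ((1 / (σ - β) : ℝ) : ℂ) := by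
        rw [hi]; push_cast; congr 1; ring
      rw [this, Complex.ofReal_re]
    have := (abs_le.mp h4).1
    linarith

/-- The classical zero-free region. -/
theorem zero_free (h : ZetaData b H δ) : ∃ c, 0 < c ∧ c ≤ δ / 50 ∧
    ∀ ρ : ℂ, H ρ = 0 → ρ.re ≤ 1 - c / logHt ρ.im := by
  obtain ⟨A, hA, hup, hzero⟩ := h.re_logDeriv_lower
  have hδ := h.δ_pos
  -- a zero-free disc around `1`
  obtain ⟨r, hr, hball⟩ : ∃ r, 0 < r ∧ ∀ z : ℂ, ‖z - 1‖ < r → H z ≠ 0 := by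
    have hc : ContinuousAt H 1 := (h.differentiableAt (by simp [hδ])).continuousAt
    obtain ⟨r, hr, hb⟩ := Metric.eventually_nhds_iff.mp (hc.eventually_ne h.one)
    exact ⟨r, hr, fun z hz => hb (by rwa [dist_eq_norm])⟩
  set B : ℝ := 9 * A + 10 / r + 25 / δ with hB
  have hr' : 0 < 10 / r := by positivity
  have hδ' : 0 < 25 / δ := by positivity
  have hB0 : 0 < B := by positivity
  refine ⟨min (δ / 50) (min (r / 2) (1 / (14 * B))), by positivity, min_le_left _ _, ?_⟩
  intro ρ hρ
  set c := min (δ / 50) (min (r / 2) (1 / (14 * B))) with hc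
  have hc0 : 0 < c := by positivity
  have hc1 : c ≤ δ / 50 := min_le_left _ _
  have hc2 : c ≤ r / 2 := (min_le_right _ _).trans (min_le_left _ _)
  have hc3 : c ≤ 1 / (14 * B) := (min_le_right _ _).trans (min_le_right _ _)
  set β := ρ.re with hβ
  set t := ρ.im with ht
  have hl := one_le_logHt t
  have hl0 : 0 < logHt t := by linarith
  have hcl : c / logHt t ≤ c := div_le_self hc0.le hl
  have hρe : ρ = β + t * Complex.I := (Complex.re_add_im ρ).symm
  have hβ1 : β ≤ 1 := h.zero_re_le hρ
  rcases lt_or_ge (δ / 50) (1 - β) with h1 | h1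
  · linarith
  rcases lt_or_ge |t| (r / 2) with h2 | h2
  · have h3 : r ≤ ‖ρ - 1‖ := by
      by_contra hcon
      exact hball ρ (not_le.mp hcon) hρ
    have h4 := Complex.norm_le_abs_re_add_abs_im (ρ - 1)
    simp only [Complex.sub_re, Complex.one_re, Complex.sub_im, Complex.one_im, sub_zero] at h4
    rw [← hβ, ← ht, abs_sub_comm, abs_of_nonneg (by linarith : 0 ≤ 1 - β)] at h4
    linarith
  · have ht0 : 0 < |t| := by linarith
    -- the choice of `σ` balances `4 / (σ - β)` against `3 / (σ - 1)`
    set η := 1 / (2 * B * logHt t) with hη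
    have hη0 : 0 < η := by positivity
    have hη1 : η ≤ δ / 50 := by
      rw [hη, div_le_iff₀ (by positivity)]
      have : 25 / δ ≤ B := by rw [hB]; linarith
      have : 1 ≤ δ / 50 * (2 * B) := by
        rw [div_le_iff₀ hδ] at this
        linarith
      nlinarith
    have hσ1 : 1 < 1 + η := by linarith
    have h341 := h.three_four_one hσ1 t
    have r0 := h.rel ((1 + η : ℝ) : ℂ) (by simpa using hη0)
    have r1 := h.rel ((1 + η : ℝ) + t * Complex.I) (by simpa using hη0)
    have r2 := h.rel ((1 + η : ℝ) + (2 * t : ℝ) * Complex.I) (by simpa using hη0)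
    have u0 := hup (1 + η) 0 hσ1 (by linarith)
    have u2 := hup (1 + η) (2 * t) hσ1 (by linarith)
    have u1 := hzero (1 + η) t β hσ1 (by linarith) (by linarith) (by rw [← hρe]; exact hρ)
    simp only [Complex.ofReal_zero, zero_mul, add_zero] at u0
    have hre : ∀ u : ℝ, u ≠ 0 → (1 / (((1 + η : ℝ) : ℂ) + u * Complex.I - 1)).re ≤ 1 / |u| := by
      intro u hu
      refine (Complex.re_le_norm _).trans ?_
      rw [norm_div, norm_one]
      apply one_div_le_one_div_of_le (abs_pos.mpr hu)
      have := Complex.abs_im_le_norm (((1 + η : ℝ) : ℂ) + u * Complex.I - 1)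
      simpa using this
    have v1 := hre t (abs_pos.mp ht0)
    have v2 := hre (2 * t) (by have := abs_pos.mp ht0; simpa using this)
    have v0 : (1 / (((1 + η : ℝ) : ℂ) - 1)).re = 1 / η := by
      have : (1 / (((1 + η : ℝ) : ℂ) - 1)) = ((1 / η : ℝ) : ℂ) := by push_cast; congr 1; ring
      rw [this, Complex.ofReal_re]
    have v3 : 1 / |t| ≤ 2 / r := by
      rw [div_le_div_iff₀ ht0 hr]; linarith
    have v4 : 1 / |2 * t| ≤ 1 / r := by
      rw [abs_mul, abs_two]
      apply one_div_le_one_div_of_le hr; linarith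
    have w0 : logHt 0 ≤ logHt t := logHt_zero_le t
    have w2 : logHt (2 * t) ≤ 2 * logHt t := logHt_le_two_mul (by rw [abs_mul, abs_two]; linarith)
    have R0 := congrArg Complex.re r0
    have R1 := congrArg Complex.re r1
    have R2 := congrArg Complex.re r2
    rw [Complex.sub_re] at R0 R1 R2
    have hinvη : 3 / η = 6 * B * logHt t := by rw [hη]; field_simp; ring
    have main : 4 / (1 + η - β) ≤ 7 * B * logHt t := by
      have e1 : 4 / (1 + η - β) = 4 * (1 / (1 + η - β)) := by ring
      have e2 : 3 / η = 3 * (1 / η) := by ring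
      have e3 : 10 / r ≤ 10 / r * logHt t := le_mul_of_one_le_right hr'.le hl
      have e4 : 0 < 25 / δ * logHt t := by positivity
      have e5 : B * logHt t = 9 * A * logHt t + 10 / r * logHt t + 25 / δ * logHt t := by
        rw [hB]; ring
      have e6 : 2 / r = 2 * (1 / r) ∧ 10 / r = 10 * (1 / r) := ⟨by ring, by ring⟩
      have e7 : A * logHt 0 ≤ A * logHt t := by gcongr
      have e8 : A * logHt (2 * t) ≤ A * (2 * logHt t) := by gcongr
      have e9 : 0 < 1 / r := by positivity
      linarith
    have h6 : 4 ≤ 7 * B * logHt t * (1 + η - β) := by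
      rwa [div_le_iff₀ (by linarith)] at main
    have h7 : B * logHt t * η = 1 / 2 := by rw [hη]; field_simp
    have h8 : 1 / 14 ≤ B * logHt t * (1 - β) := by nlinarith
    have h9 : c / logHt t ≤ 1 - β := by
      rw [div_le_iff₀ hl0]
      refine hc3.trans ?_
      rw [div_le_iff₀ (by positivity)]
      linarith
    linarith

/-- In a slightly smaller region, `H' / H` is at most of the order of the square of the
logarithmic height. -/
theorem logDeriv_region (h : ZetaData b H δ) : ∃ c C, 0 < c ∧ c ≤ δ / 50 ∧ 0 < C ∧
    ∀ s : ℂ, 1 - c / logHt s.im ≤ s.re → s.re ≤ 1 + δ / 50 →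
      1 - δ < s.re ∧ H s ≠ 0 ∧ ‖logDeriv H s‖ ≤ C * logHt s.im ^ 2 := by
  obtain ⟨A, hA, hexp⟩ := h.expansion
  obtain ⟨c, hc, hcδ, hzf⟩ := h.zero_free
  have hδ := h.δ_pos
  refine ⟨c / 4, A * (1 + 4 / c), by positivity, by linarith, by positivity, ?_⟩
  intro s hs1 hs2
  set t := s.im with ht
  have hl := one_le_logHt t
  have hl0 : 0 < logHt t := by linarith
  have hcl : c / 4 / logHt t ≤ c / 4 := div_le_self (by positivity) hl
  have hdist : ‖s - (1 + (δ / 100 : ℝ) + t * Complex.I)‖ ≤ δ / 24 := by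
    have : s - (1 + (δ / 100 : ℝ) + t * Complex.I) = ((s.re - 1 - δ / 100 : ℝ) : ℂ) := by
      apply Complex.ext <;> simp [ht]
      ring
    rw [this, Complex.norm_real, Real.norm_eq_abs, abs_le]
    constructor <;> linarith
  have hHs : H s ≠ 0 := by
    intro h0
    have h1 := hzf s h0
    have h2 : c / 4 / logHt t < c / logHt t := by
      apply div_lt_div_of_pos_right _ hl0
      linarith
    linarith
  refine ⟨by linarith, hHs, ?_⟩
  obtain ⟨N, ρ, hN, hρ, -, he⟩ := hexp t
  have h1 := he s hdist hHs
  have h2 : ‖∑ i, 1 / (s - ρ i)‖ ≤ N * (4 * logHt t / c) := by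
    refine (norm_sum_le _ _).trans ?_
    have : ∀ i ∈ Finset.univ, ‖1 / (s - ρ i)‖ ≤ 4 * logHt t / c := by
      intro i _
      have h3 := hzf (ρ i) (hρ i).1
      have h4 : logHt (ρ i).im ≤ 2 * logHt t := by
        apply logHt_le_two_mul
        have h5 := (hρ i).2.2
        have h6 := abs_sub_abs_le_abs_sub (ρ i).im t
        have := abs_nonneg t
        linarith
      have h7 : c / (2 * logHt t) ≤ c / logHt (ρ i).im :=
        div_le_div_of_nonneg_left hc.le (by linarith [one_le_logHt (ρ i).im]) h4
      have h8 : c / (2 * logHt t) - c / 4 / logHt t = c / (4 * logHt t) := by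
        field_simp
        norm_num
      have h9 := (le_abs_self _).trans (Complex.abs_re_le_norm (s - ρ i))
      rw [Complex.sub_re] at h9
      have h10 : c / (4 * logHt t) ≤ ‖s - ρ i‖ := by linarith
      rw [norm_div, norm_one]
      calc 1 / ‖s - ρ i‖ ≤ 1 / (c / (4 * logHt t)) :=
            one_div_le_one_div_of_le (by positivity) h10
        _ = 4 * logHt t / c := by rw [one_div_div]
    refine (Finset.sum_le_sum this).trans ?_
    simp
  have h3 : ‖logDeriv H s‖ ≤ A * logHt t + N * (4 * logHt t / c) := by
    have := norm_le_norm_add_norm_sub' (logDeriv H s) (∑ i, 1 / (s - ρ i))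
    linarith
  refine h3.trans ?_
  calc A * logHt t + N * (4 * logHt t / c)
      ≤ A * logHt t * logHt t + (A * logHt t) * (4 * logHt t / c) := by
        gcongr
        nlinarith
    _ = _ := by ring

end ZetaData

/-! ### The Riesz mean as a Mellin inversion integral -/

/-- The Mellin transform of the Riesz kernel `max 0 (1 - u)`. -/
noncomputable def riesz (s : ℂ) : ℂ := 1 / (s * (s + 1))

theorem ne_of_re_pos {s : ℂ} (hs : 0 < s.re) : s ≠ 0 ∧ s + 1 ≠ 0 := by
  constructor <;> intro h0
  · simp [h0] at hs
  · have := congrArg Complex.re h0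
    simp at this
    linarith

theorem norm_riesz_le {s : ℂ} (hs : 1 / 2 ≤ s.re) : ‖riesz s‖ ≤ 9 * (1 + |s.im|) ^ (-2 : ℝ) := by
  have h1 := Complex.abs_re_le_norm s
  have h2 := Complex.abs_im_le_norm s
  have h3 := Complex.abs_re_le_norm (s + 1)
  have h4 := Complex.abs_im_le_norm (s + 1)
  have h5 := le_abs_self s.re
  have h6 := le_abs_self (s + 1).re
  have h7 : (s + 1).im = s.im := by simp
  have h8 : (s + 1).re = s.re + 1 := by simp
  rw [h7] at h4
  have ha := abs_nonneg s.im
  have e1 : (1 + |s.im|) / 3 ≤ ‖s‖ := by linarith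
  have e2 : (1 + |s.im|) / 3 ≤ ‖s + 1‖ := by linarith
  rw [riesz, norm_div, norm_one, norm_mul, Real.rpow_neg (by positivity)]
  have : (1 + |s.im|) ^ (2 : ℝ) = (1 + |s.im|) ^ 2 := by norm_cast
  rw [this, div_le_iff₀ (lt_of_lt_of_le (by positivity) (mul_le_mul e1 e2 (by positivity)
    (by positivity)))]
  calc (1 : ℝ) = 9 * ((1 + |s.im|) ^ 2)⁻¹ * ((1 + |s.im|) / 3 * ((1 + |s.im|) / 3)) := by
        field_simp; norm_num
    _ ≤ _ := by gcongr

/-- The point `σ + i y`. -/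
noncomputable def vline (σ y : ℝ) : ℂ := σ + y * Complex.I

@[simp] theorem vline_re (σ y : ℝ) : (vline σ y).re = σ := by simp [vline]
@[simp] theorem vline_im (σ y : ℝ) : (vline σ y).im = y := by simp [vline]
theorem continuous_vline (σ : ℝ) : Continuous (vline σ) := by unfold vline; fun_prop

theorem continuous_riesz_vline {σ : ℝ} (hσ : 0 < σ) : Continuous fun y => riesz (vline σ y) := by
  unfold riesz
  have hc := continuous_vline σ
  refine continuous_const.div (by fun_prop) fun y => ?_
  have := ne_of_re_pos (s := vline σ y) (by simpa using hσ)
  exact mul_ne_zero this.1 this.2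

theorem integrable_bracket {r : ℝ} (hr : 1 < r) :
    MeasureTheory.Integrable (fun y : ℝ => (1 + |y|) ^ (-r)) := by
  simpa using integrable_one_add_norm (E := ℝ) (μ := MeasureTheory.volume) (r := r) (by simpa using hr)

theorem integrable_riesz {σ : ℝ} (hσ : 1 ≤ σ) :
    MeasureTheory.Integrable fun y => riesz (vline σ y) := by
  refine ((integrable_bracket (r := 2) (by norm_num)).const_mul 9).mono'
    (continuous_riesz_vline (by linarith)).aestronglyMeasurable (Eventually.of_forall fun y => ?_)
  simpa using norm_riesz_le (s := vline σ y) (by simp; linarith)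

theorem norm_cpow_vline {u : ℝ} (hu : 0 < u) (σ y : ℝ) : ‖(u : ℂ) ^ vline σ y‖ = u ^ σ := by
  rw [Complex.norm_cpow_eq_rpow_re_of_pos hu, vline_re]

theorem continuous_cpow_vline {u : ℝ} (hu : 0 < u) (σ : ℝ) :
    Continuous fun y => (u : ℂ) ^ vline σ y :=
  (continuous_vline σ).const_cpow (Or.inl (by exact_mod_cast hu.ne'))

theorem integrable_cpow_riesz {u σ : ℝ} (hu : 0 < u) (hσ : 1 ≤ σ) :
    MeasureTheory.Integrable fun y => (u : ℂ) ^ vline σ y * riesz (vline σ y) := by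
  refine (integrable_riesz hσ).bdd_mul (c := u ^ σ)
    (continuous_cpow_vline hu σ).aestronglyMeasurable (Eventually.of_forall fun y => ?_)
  rw [norm_cpow_vline hu]

theorem integrable_riesz_div {σ : ℝ} (hσ : 1 < σ) :
    MeasureTheory.Integrable fun y => 1 / (vline σ y - 1) * riesz (vline σ y) := by
  have h0 : ∀ y, σ - 1 ≤ ‖vline σ y - 1‖ := fun y => by
    have := (le_abs_self _).trans (Complex.abs_re_le_norm (vline σ y - 1))
    simpa using this
  refine (integrable_riesz hσ.le).bdd_mul (c := 1 / (σ - 1)) ?_ (Eventually.of_forall fun y => ?_)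
  · have hc := continuous_vline σ
    refine (continuous_const.div (by fun_prop) fun y hy => ?_).aestronglyMeasurable
    have := h0 y
    rw [hy, norm_zero] at this
    linarith
  · rw [norm_div, norm_one]
    exact one_div_le_one_div_of_le (by linarith) (h0 y)

/-- Mellin inversion for a continuous combination of truncated powers. -/
theorem perron_aux {k : ℝ → ℂ} {K : ℂ → ℂ} {κ : ℝ → ℝ} {σ : ℝ}
    (hk : ∀ y : ℝ, HasMellin k (vline σ y) (K (vline σ y)))
    (hintg : MeasureTheory.Integrable fun y => K (vline σ y))
    (hκ : ∀ u, 0 < u → k u = κ u) (hc : ContinuousOn κ (Set.Ioi 0)) {x : ℝ} (hx : 0 < x) :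
    ∫ y : ℝ, (x : ℂ) ^ vline σ y * K (vline σ y) = 2 * Real.pi * (κ (1 / x) : ℝ) := by
  have hu : 0 < 1 / x := by positivity
  have h1 := mellinInv_mellin_eq σ k hu (by simpa [vline] using (hk 0).1)
    (by
      refine hintg.congr (Eventually.of_forall fun y => ?_)
      exact ((hk y).2).symm)
    (by
      have h2 : ContinuousAt (fun u => ((κ u : ℝ) : ℂ)) (1 / x) :=
        Complex.continuous_ofReal.continuousAt.comp (hc.continuousAt (Ioi_mem_nhds hu))
      refine h2.congr ?_
      filter_upwards [Ioi_mem_nhds hu] with u hu'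
      exact (hκ u hu').symm)
  rw [hκ _ hu] at h1
  rw [← h1, mellinInv]
  have h3 : ∀ y : ℝ, (((1 / x : ℝ) : ℂ) ^ (-((σ : ℂ) + y * Complex.I))) •
      mellin k (σ + y * Complex.I) = (x : ℂ) ^ vline σ y * K (vline σ y) := by
    intro y
    rw [← (hk y).2, smul_eq_mul]
    congr 1
    rw [one_div, Complex.ofReal_inv, Complex.cpow_neg]
    rw [Complex.inv_cpow_ofReal_nonneg hx.le, inv_inv]
    rfl
  simp_rw [h3]
  rw [Complex.real_smul]
  have : (Real.pi : ℂ) ≠ 0 := by exact_mod_cast Real.pi_ne_zero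
  push_cast
  field_simp

/-- Mellin inversion for the Riesz kernel: `1 / (s (s + 1))` is the transform of
`t ↦ max 0 (1 - t)`. -/
theorem perron_riesz {σ : ℝ} (hσ : 1 < σ) {x : ℝ} (hx : 0 < x) :
    ∫ y : ℝ, (x : ℂ) ^ vline σ y * riesz (vline σ y) = 2 * Real.pi * (max 0 (1 - 1 / x) : ℝ) := by
  refine perron_aux (K := riesz) (k := fun t => Set.indicator (Set.Ioc 0 1) (fun t : ℝ => (t : ℂ) ^ (0 : ℂ)) t -
    Set.indicator (Set.Ioc 0 1) (fun t : ℝ => (t : ℂ) ^ (1 : ℂ)) t) (κ := fun u => max 0 (1 - u))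
    ?_ (integrable_riesz hσ.le) ?_ (by fun_prop) hx
  · intro y
    have h0 := hasMellin_cpow_Ioc 0 (s := vline σ y) (by simp; linarith)
    have h1 := hasMellin_cpow_Ioc 1 (s := vline σ y) (by simp; linarith)
    have h2 := hasMellin_sub h0.1 h1.1
    rw [h0.2, h1.2] at h2
    suffices e : riesz (vline σ y) = 1 / (vline σ y + 0) - 1 / (vline σ y + 1) by
      rw [e]; exact h2
    have := ne_of_re_pos (s := vline σ y) (by simp; linarith)
    have h3 := this.1
    have h4 := this.2
    simp only [riesz, add_zero]
    field_simp
    ring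
  · intro u hu
    by_cases h1 : u ≤ 1
    · have : u ∈ Set.Ioc (0 : ℝ) 1 := ⟨hu, h1⟩
      simp only [Set.indicator_of_mem this, Complex.cpow_zero, Complex.cpow_one]
      rw [max_eq_right (by linarith)]
      push_cast
      rfl
    · have : u ∉ Set.Ioc (0 : ℝ) 1 := fun h => h1 h.2
      simp only [Set.indicator_of_notMem this]
      rw [max_eq_left (by linarith)]
      simp

/-- Mellin inversion for `1 / ((s - 1) s (s + 1))`, the contribution of the pole of the zeta function
at `1`. -/
theorem perron_riesz_div {σ : ℝ} (hσ : 1 < σ) {x : ℝ} (hx : 0 < x) :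
    ∫ y : ℝ, (x : ℂ) ^ vline σ y * (1 / (vline σ y - 1) * riesz (vline σ y)) =
      2 * Real.pi * ((max 0 (1 - 1 / x)) ^ 2 / (2 * (1 / x)) : ℝ) := by
  refine perron_aux (K := fun s => 1 / (s - 1) * riesz s)
    (k := fun t => (1 / 2 : ℂ) • (Set.indicator (Set.Ioc 0 1) (fun t : ℝ => (t : ℂ) ^ (-1 : ℂ)) t +
      Set.indicator (Set.Ioc 0 1) (fun t : ℝ => (t : ℂ) ^ (1 : ℂ)) t) -
    Set.indicator (Set.Ioc 0 1) (fun t : ℝ => (t : ℂ) ^ (0 : ℂ)) t)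
    (κ := fun u => (max 0 (1 - u)) ^ 2 / (2 * u))
    ?_ (integrable_riesz_div hσ) ?_ ?_ hx
  · intro y
    have h0 := hasMellin_cpow_Ioc 0 (s := vline σ y) (by simp; linarith)
    have h1 := hasMellin_cpow_Ioc 1 (s := vline σ y) (by simp; linarith)
    have h2 := hasMellin_cpow_Ioc (-1) (s := vline σ y) (by simp; linarith)
    have h3 := hasMellin_add h2.1 h1.1
    have h4 := hasMellin_const_smul h3.1 (1 / 2 : ℂ)
    have h5 := hasMellin_sub h4.1 h0.1
    rw [h4.2, h3.2, h0.2, h1.2, h2.2] at h5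
    suffices e : 1 / (vline σ y - 1) * riesz (vline σ y) =
        (1 / 2 : ℂ) • (1 / (vline σ y + -1) + 1 / (vline σ y + 1)) - 1 / (vline σ y + 0) by
      show HasMellin _ _ (1 / (vline σ y - 1) * riesz (vline σ y))
      rw [e]; exact h5
    have := ne_of_re_pos (s := vline σ y) (by simp; linarith)
    have h3 := this.1
    have h4 := this.2
    have h6 : vline σ y - 1 ≠ 0 := by
      intro h0
      have := congrArg Complex.re h0
      simp at this
      linarith
    have h7 : vline σ y + -1 = vline σ y - 1 := by ring
    simp only [riesz, add_zero, smul_eq_mul, h7]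
    field_simp
    ring
  · intro u hu
    by_cases h1 : u ≤ 1
    · have : u ∈ Set.Ioc (0 : ℝ) 1 := ⟨hu, h1⟩
      have hu0 : (u : ℂ) ≠ 0 := by exact_mod_cast hu.ne'
      simp only [Set.indicator_of_mem this, Complex.cpow_zero, Complex.cpow_one,
        Complex.cpow_neg_one, smul_eq_mul]
      rw [max_eq_right (by linarith)]
      push_cast
      field_simp
      ring
    · have : u ∉ Set.Ioc (0 : ℝ) 1 := fun h => h1 h.2
      simp only [Set.indicator_of_notMem this]
      rw [max_eq_left (by linarith)]
      simp
  · refine ContinuousOn.div (by fun_prop) (by fun_prop) fun u hu => ?_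
    have : 0 < u := hu
    positivity

namespace ZetaData

variable {b : ℕ → ℝ} {H : ℂ → ℂ} {δ : ℝ}

/-- The explicit formula for the Riesz mean of `b`. -/
theorem perron (h : ZetaData b H δ) {σ : ℝ} (hσ : 1 < σ) {x : ℝ} (hx : 1 ≤ x) :
    MeasureTheory.Integrable (fun y : ℝ =>
      (x : ℂ) ^ vline σ y * (logDeriv H (vline σ y) * riesz (vline σ y))) ∧
    ∫ y : ℝ, (x : ℂ) ^ vline σ y * (logDeriv H (vline σ y) * riesz (vline σ y)) =
      2 * Real.pi * ((1 - 1 / x) ^ 2 * x / 2 -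
        ∑ n ∈ Finset.range (⌊x⌋₊ + 1), b n * (1 - n / x) : ℝ) := by
  have hx0 : 0 < x := by linarith
  set f : ℕ → ℂ := fun n => (b n : ℂ) with hf
  let F : ℕ → ℝ → ℂ := fun n y =>
    LSeries.term f (vline σ y) n * ((x : ℂ) ^ vline σ y * riesz (vline σ y))
  have hF : ∀ n, 0 < n → F n = fun y => f n * (((x / n : ℝ) : ℂ) ^ vline σ y * riesz (vline σ y)) := by
    intro n hn
    funext y
    simp only [F]
    rw [LSeries.term_of_ne_zero hn.ne', Complex.ofReal_div,
      Complex.div_cpow_ofReal_nonneg hx0.le (Nat.cast_nonneg n)]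
    push_cast
    ring
  have hF0 : F 0 = fun _ => 0 := by funext y; simp [F]
  have hFint : ∀ n, MeasureTheory.Integrable (F n) := by
    intro n
    rcases Nat.eq_zero_or_pos n with rfl | hn
    · rw [hF0]; exact MeasureTheory.integrable_zero _ _ _
    · rw [hF n hn]
      have : 0 < x / n := by positivity
      exact (integrable_cpow_riesz this hσ.le).const_mul _
  have hnorm : ∀ n y, ‖F n y‖ = ‖LSeries.term f σ n‖ * x ^ σ * ‖riesz (vline σ y)‖ := by
    intro n y
    simp only [F]
    rw [norm_mul, norm_mul, norm_cpow_vline hx0, LSeries.norm_term_eq, LSeries.norm_term_eq,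
      vline_re, Complex.ofReal_re]
    ring
  have hsum : Summable fun n => ‖LSeries.term f σ n‖ := (h.summable (s := σ) (by simpa using hσ)).norm
  have hsumint : Summable fun n => ∫ y, ‖F n y‖ := by
    simp_rw [hnorm, MeasureTheory.integral_const_mul]
    exact (hsum.mul_right _).mul_right _
  have hS := MeasureTheory.hasSum_integral_of_summable_integral_norm hFint hsumint
  have hval : ∀ n, ∫ y, F n y = 2 * Real.pi * ((b n * max 0 (1 - n / x) : ℝ) : ℂ) := by
    intro n
    rcases Nat.eq_zero_or_pos n with rfl | hn
    · rw [hF0]; simp [h.b_zero]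
    · rw [hF n hn, MeasureTheory.integral_const_mul, perron_riesz hσ (by positivity), one_div_div]
      push_cast
      simp only [hf]
      ring
  have hfin : HasSum (fun n => ∫ y, F n y) (2 * Real.pi *
      ((∑ n ∈ Finset.range (⌊x⌋₊ + 1), b n * (1 - n / x) : ℝ) : ℂ)) := by
    have h1 : ∀ n ∉ Finset.range (⌊x⌋₊ + 1), ∫ y, F n y = 0 := by
      intro n hn
      have h2 : x < n := by
        rw [Finset.mem_range, not_lt] at hn
        exact (Nat.floor_lt hx0.le).mp (by omega)
      have h3 : 1 - n / x ≤ 0 := by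
        rw [sub_nonpos, le_div_iff₀ hx0]; linarith
      rw [hval, max_eq_left h3]
      simp
    have h4 := hasSum_sum_of_ne_finset_zero (L := SummationFilter.unconditional ℕ) h1
    convert h4 using 1
    rw [Complex.ofReal_sum, Finset.mul_sum]
    refine Finset.sum_congr rfl fun n hn => ?_
    rw [hval, max_eq_right]
    have h2 : (n : ℝ) ≤ x := by
      rw [Finset.mem_range] at hn
      exact (Nat.le_floor_iff hx0.le).mp (by omega)
    rw [sub_nonneg, div_le_iff₀ hx0]
    linarith
  have hI1 := hS.unique hfin
  have htsum : ∀ y, ∑' n, F n y = LSeries f (vline σ y) * ((x : ℂ) ^ vline σ y * riesz (vline σ y)) :=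
    fun y => by
      simp only [F]
      rw [tsum_mul_right]
      rfl
  simp_rw [htsum] at hI1
  have hIL : MeasureTheory.Integrable fun y =>
      LSeries f (vline σ y) * ((x : ℂ) ^ vline σ y * riesz (vline σ y)) := by
    have hnt : ∀ n y, ‖LSeries.term f (vline σ y) n‖ ≤ ‖LSeries.term f σ n‖ := fun n y => by
      rw [LSeries.norm_term_eq, LSeries.norm_term_eq, vline_re, Complex.ofReal_re]
    have hcont : Continuous fun y => LSeries f (vline σ y) := by
      refine continuous_tsum (fun n => ?_) hsum hnt
      rcases Nat.eq_zero_or_pos n with rfl | hn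
      · simp only [LSeries.term_zero]
        exact continuous_const
      · have hn' : (0 : ℝ) < n := by exact_mod_cast hn
        simp only [LSeries.term_of_ne_zero hn.ne']
        refine continuous_const.div (by simpa using continuous_cpow_vline hn' σ) fun y => ?_
        rw [Ne, Complex.cpow_eq_zero_iff]
        simp [hn.ne']
    refine (integrable_cpow_riesz hx0 hσ.le).bdd_mul (c := ∑' n, ‖LSeries.term f σ n‖)
      hcont.aestronglyMeasurable (Eventually.of_forall fun y => ?_)
    exact tsum_of_norm_bounded hsum.hasSum fun n => hnt n y
  have hI2 := perron_riesz_div hσ hx0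
  have hIK : MeasureTheory.Integrable fun y =>
      (x : ℂ) ^ vline σ y * (1 / (vline σ y - 1) * riesz (vline σ y)) := by
    refine (integrable_riesz_div hσ).bdd_mul (c := x ^ σ)
      (continuous_cpow_vline hx0 σ).aestronglyMeasurable (Eventually.of_forall fun y => ?_)
    rw [norm_cpow_vline hx0]
  have heq : (fun y : ℝ => (x : ℂ) ^ vline σ y * (logDeriv H (vline σ y) * riesz (vline σ y))) =
      fun y => (x : ℂ) ^ vline σ y * (1 / (vline σ y - 1) * riesz (vline σ y)) -
        LSeries f (vline σ y) * ((x : ℂ) ^ vline σ y * riesz (vline σ y)) := by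
    funext y
    rw [h.rel _ (by simpa using hσ)]
    ring
  rw [heq]
  refine ⟨hIK.sub hIL, ?_⟩
  rw [MeasureTheory.integral_sub hIK hIL, hI1, hI2, max_eq_right]
  · push_cast
    field_simp
  · rw [sub_nonneg, div_le_iff₀ hx0]; linarith

end ZetaData

/-! ### Shifting the contour -/

theorem logHt_sq_le (t : ℝ) : logHt t ^ 2 ≤ 32 * (1 + |t|) ^ (1 / 2 : ℝ) := by
  have ha := abs_nonneg t
  have h1 : logHt t ≤ (|t| + 3) ^ (1 / 4 : ℝ) / (1 / 4) :=
    Real.log_le_rpow_div (by positivity) (by norm_num)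
  have h0 : 0 ≤ logHt t := by linarith [one_le_logHt t]
  have h2 : (|t| + 3) ^ (1 / 4 : ℝ) ≤ (4 * (1 + |t|)) ^ (1 / 4 : ℝ) :=
    Real.rpow_le_rpow (by positivity) (by linarith) (by norm_num)
  have h3 : ((4 * (1 + |t|)) ^ (1 / 4 : ℝ)) ^ 2 = 2 * (1 + |t|) ^ (1 / 2 : ℝ) := by
    rw [← Real.rpow_natCast, ← Real.rpow_mul (by positivity), Real.mul_rpow (by norm_num)
      (by positivity)]
    have h4 : (4 : ℝ) ^ (1 / 2 : ℝ) = 2 := by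
      rw [← Real.sqrt_eq_rpow, Real.sqrt_eq_iff_mul_self_eq] <;> norm_num
    norm_num [h4]
  calc logHt t ^ 2 ≤ (4 * (4 * (1 + |t|)) ^ (1 / 4 : ℝ)) ^ 2 := by
        gcongr
        linarith
    _ = 16 * (((4 * (1 + |t|)) ^ (1 / 4 : ℝ)) ^ 2) := by ring
    _ = _ := by rw [h3]; ring

namespace ZetaData

variable {b : ℕ → ℝ} {H : ℂ → ℂ} {δ : ℝ}

/-- In the zero-free region `H' / H` grows like a square of a logarithm, so that after multiplication
by the Riesz kernel it is absolutely integrable along vertical paths. -/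
theorem integrand_region (h : ZetaData b H δ) : ∃ c M, 0 < c ∧ c ≤ δ / 50 ∧ 0 < M ∧
    ∀ s : ℂ, 1 - c / logHt s.im ≤ s.re → s.re ≤ 1 + δ / 50 →
      1 - δ < s.re ∧ H s ≠ 0 ∧ ‖logDeriv H s * riesz s‖ ≤ M * (1 + |s.im|) ^ (-(3 / 2) : ℝ) := by
  obtain ⟨c, C, hc, hcδ, hC, hreg⟩ := h.logDeriv_region
  refine ⟨c, C * 32 * 9, hc, hcδ, by positivity, fun s h1 h2 => ?_⟩
  obtain ⟨h3, h4, h5⟩ := hreg s h1 h2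
  refine ⟨h3, h4, ?_⟩
  have hδ := h.δ_le
  have hl := one_le_logHt s.im
  have h6 : c / logHt s.im ≤ c := div_le_self hc.le hl
  have h7 := norm_riesz_le (s := s) (by linarith)
  rw [norm_mul]
  calc ‖logDeriv H s‖ * ‖riesz s‖
      ≤ (C * (32 * (1 + |s.im|) ^ (1 / 2 : ℝ))) * (9 * (1 + |s.im|) ^ (-2 : ℝ)) := by
        gcongr
        exact h5.trans (by gcongr; exact logHt_sq_le _)
    _ = C * 32 * 9 * ((1 + |s.im|) ^ (1 / 2 : ℝ) * (1 + |s.im|) ^ (-2 : ℝ)) := by ring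
    _ = _ := by
      rw [← Real.rpow_add (by positivity)]
      norm_num

set_option maxHeartbeats 1000000 in
/-- Shifting the contour into the zero-free region. -/
theorem perron_bound (h : ZetaData b H δ) : ∃ c M X, 0 < c ∧ c ≤ 1 / 4 ∧ 0 < M ∧ Real.exp 4 ≤ X ∧
    ∀ x, X ≤ x →
    ‖∫ y : ℝ, (x : ℂ) ^ vline (1 + 1 / Real.log x) y * (logDeriv H (vline (1 + 1 / Real.log x) y) *
      riesz (vline (1 + 1 / Real.log x) y))‖ ≤ M * x * Real.exp (-c * √(Real.log x)) := by
  obtain ⟨c, M, hc, hcδ, hM, hreg⟩ := h.integrand_region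
  have hδ := h.δ_pos
  have hδ1 := h.δ_le
  have hIint := integrable_bracket (r := 5 / 4) (by norm_num)
  set I : ℝ := ∫ y : ℝ, (1 + |y|) ^ (-(5 / 4) : ℝ) with hI
  have hI0 : 0 ≤ I := MeasureTheory.integral_nonneg fun y => by positivity
  refine ⟨min (1 / 4) (c / 2), Real.exp 1 * M * I + 2 * (Real.exp 1 * M) + M * I,
    max (Real.exp 4) (Real.exp (50 / δ)), by positivity, min_le_left _ _, by positivity,
    le_max_left _ _, ?_⟩
  intro x hx
  have hx4 : Real.exp 4 ≤ x := (le_max_left _ _).trans hx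
  have hxδ : Real.exp (50 / δ) ≤ x := (le_max_right _ _).trans hx
  have hx0 : 0 < x := (Real.exp_pos 4).trans_le hx4
  have hx1 : 1 ≤ x := (Real.one_le_exp (by norm_num)).trans hx4
  set L := Real.log x with hL
  have hL4 : 4 ≤ L := (Real.le_log_iff_exp_le hx0).mpr hx4
  have hLδ : 50 / δ ≤ L := (Real.le_log_iff_exp_le hx0).mpr hxδ
  have hL0 : 0 < L := by linarith
  set σ := 1 + 1 / L with hσ
  have hσ1 : 1 < σ := by rw [hσ]; have : 0 < 1 / L := by positivity
                         linarith
  have hσδ : σ ≤ 1 + δ / 50 := by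
    rw [hσ]
    have : 1 / L ≤ 1 / (50 / δ) := one_div_le_one_div_of_le (by positivity) hLδ
    rw [one_div_div] at this
    linarith
  have hxσ : x ^ σ = Real.exp 1 * x := by
    rw [hσ, Real.rpow_add hx0, Real.rpow_one, Real.rpow_def_of_pos hx0, ← hL, mul_one_div_cancel hL0.ne',
      mul_comm]
  set r := √L with hr
  have hr2 : 2 ≤ r := by
    rw [hr]
    apply Real.le_sqrt_of_sq_le
    linarith
  have hrL : r * r = L := Real.mul_self_sqrt hL0.le
  set T := Real.exp r with hT
  have hT0 : 0 < T := Real.exp_pos r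
  have hT3 : 3 ≤ T := by
    have : r + 1 ≤ T := Real.add_one_le_exp r
    linarith
  set η := c / logHt T with hη
  have hlT := one_le_logHt T
  have hlT2 : logHt T ≤ 2 * r := by
    rw [logHt, abs_of_pos hT0, Real.log_le_iff_le_exp (by positivity), two_mul, Real.exp_add]
    change T + 3 ≤ T * T
    nlinarith
  have hη0 : 0 < η := by positivity
  have hηc : η ≤ c := div_le_self hc.le hlT
  have hregion : ∀ s : ℂ, |s.im| ≤ T → 1 - η ≤ s.re → s.re ≤ σ →
      1 - δ < s.re ∧ H s ≠ 0 ∧ ‖logDeriv H s * riesz s‖ ≤ M * (1 + |s.im|) ^ (-(3 / 2) : ℝ) := by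
    intro s h1 h2 h3
    refine hreg s ?_ (h3.trans hσδ)
    have : logHt s.im ≤ logHt T := by
      unfold logHt
      apply Real.log_le_log (by positivity)
      rw [abs_of_pos hT0]
      linarith
    have : η ≤ c / logHt s.im :=
      div_le_div_of_nonneg_left hc.le (by linarith [one_le_logHt s.im]) this
    linarith
  let F : ℂ → ℂ := fun s => (x : ℂ) ^ s * (logDeriv H s * riesz s)
  have hFn : ∀ s : ℂ, ‖F s‖ = x ^ s.re * ‖logDeriv H s * riesz s‖ := fun s => by
    simp only [F]
    rw [norm_mul, Complex.norm_cpow_eq_rpow_re_of_pos hx0]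
  have hσbd : ∀ y : ℝ, ‖F (vline σ y)‖ ≤ Real.exp 1 * x * (M * (1 + |y|) ^ (-(3 / 2) : ℝ)) := by
    intro y
    rw [hFn, vline_re, hxσ]
    gcongr
    have := (hreg (vline σ y) (by
      rw [vline_re]
      have : 0 < c / logHt (vline σ y).im := div_pos hc (by linarith [one_le_logHt (vline σ y).im])
      linarith) (by rw [vline_re]; exact hσδ)).2.2
    simpa using this
  -- monotonicity in the exponent
  have hexpo : ∀ y : ℝ, (1 + |y|) ^ (-(3 / 2) : ℝ) ≤ (1 + |y|) ^ (-(5 / 4) : ℝ) := fun y =>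
    Real.rpow_le_rpow_of_exponent_le (by have := abs_nonneg y; linarith) (by norm_num)
  have hTpow : (1 + T) ^ (-(1 / 4) : ℝ) ≤ Real.exp (-(1 / 4) * r) := by
    rw [hT, mul_comm, Real.exp_mul]
    exact Real.rpow_le_rpow_of_nonpos (by positivity) (by linarith) (by norm_num)
  obtain ⟨hFint, -⟩ := h.perron hσ1 hx1
  change MeasureTheory.Integrable (fun y => F (vline σ y)) at hFint
  -- the tails
  have htail : ‖∫ y in (Set.Ioc (-T) T)ᶜ, F (vline σ y)‖ ≤
      Real.exp 1 * M * I * x * Real.exp (-(1 / 4) * r) := by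
    have h1 : ∀ y ∈ (Set.Ioc (-T) T)ᶜ, ‖F (vline σ y)‖ ≤
        Real.exp 1 * x * M * (1 + T) ^ (-(1 / 4) : ℝ) * (1 + |y|) ^ (-(5 / 4) : ℝ) := by
      intro y hy
      have hyT : T ≤ |y| := by
        by_contra hcon
        have := abs_lt.mp (not_le.mp hcon)
        exact hy ⟨this.1, this.2.le⟩
      have e1 : (1 + |y|) ^ (-(3 / 2) : ℝ) = (1 + |y|) ^ (-(1 / 4) : ℝ) * (1 + |y|) ^ (-(5 / 4) : ℝ) := by
        rw [← Real.rpow_add (by positivity)]; norm_num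
      have e2 : (1 + |y|) ^ (-(1 / 4) : ℝ) ≤ (1 + T) ^ (-(1 / 4) : ℝ) :=
        Real.rpow_le_rpow_of_nonpos (by positivity) (by linarith) (by norm_num)
      refine (hσbd y).trans ?_
      rw [e1]
      calc Real.exp 1 * x * (M * ((1 + |y|) ^ (-(1 / 4) : ℝ) * (1 + |y|) ^ (-(5 / 4) : ℝ)))
          ≤ Real.exp 1 * x * (M * ((1 + T) ^ (-(1 / 4) : ℝ) * (1 + |y|) ^ (-(5 / 4) : ℝ))) := by gcongr
        _ = _ := by ring
    have h2 := MeasureTheory.norm_integral_le_of_norm_le (μ := MeasureTheory.volume.restrict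
      (Set.Ioc (-T) T)ᶜ) (hIint.const_mul (Real.exp 1 * x * M * (1 + T) ^ (-(1 / 4) : ℝ))).integrableOn
      (MeasureTheory.ae_restrict_of_forall_mem measurableSet_Ioc.compl h1)
    refine h2.trans ?_
    rw [MeasureTheory.integral_const_mul]
    have h3 : ∫ y in (Set.Ioc (-T) T)ᶜ, (1 + |y|) ^ (-(5 / 4) : ℝ) ≤ I :=
      MeasureTheory.setIntegral_le_integral hIint (Eventually.of_forall fun y => by
        show (0 : ℝ) ≤ _
        positivity)
    calc _ ≤ Real.exp 1 * x * M * Real.exp (-(1 / 4) * r) * I := by gcongr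
      _ = _ := by ring
  -- the rectangle
  have hdiff : DifferentiableOn ℂ F (Set.uIcc (vline (1 - η) (-T)).re (vline σ T).re ×ℂ
      Set.uIcc (vline (1 - η) (-T)).im (vline σ T).im) := by
    simp only [vline_re, vline_im]
    rw [Set.uIcc_of_le (by linarith), Set.uIcc_of_le (by linarith)]
    intro s hs
    have hs1 : s.re ∈ Set.Icc (1 - η) σ := hs.1
    have hs2 : s.im ∈ Set.Icc (-T) T := hs.2
    obtain ⟨h1, h2, -⟩ := hregion s (abs_le.mpr hs2) hs1.1 hs1.2
    have hne := ne_of_re_pos (s := s) (by linarith [hs1.1])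
    have d1 : DifferentiableAt ℂ H s := h.differentiableAt h1
    have d2 : DifferentiableAt ℂ (deriv H) s :=
      ((h.diff.deriv (isOpen_dom δ)) s h1).differentiableAt ((isOpen_dom δ).mem_nhds h1)
    have d3 : DifferentiableAt ℂ riesz s := by
      unfold riesz
      exact (differentiableAt_const _).div (by fun_prop) (mul_ne_zero hne.1 hne.2)
    have d4 : DifferentiableAt ℂ (fun s : ℂ => (x : ℂ) ^ s) s :=
      differentiableAt_id.const_cpow (Or.inl (by exact_mod_cast hx0.ne'))
    have d5 : DifferentiableAt ℂ (logDeriv H) s := d2.div d1 h2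
    exact (d4.mul (d5.mul d3)).differentiableWithinAt
  have hrect := Complex.integral_boundary_rect_eq_zero_of_differentiableOn F _ _ hdiff
  simp only [vline_re, vline_im] at hrect
  have hhor : ∀ u : ℝ, |u| = T → ‖∫ a : ℝ in (1 - η)..σ, F (a + u * Complex.I)‖ ≤
      Real.exp 1 * M * x * Real.exp (-(1 / 4) * r) := by
    intro u hu
    have h1 : ∀ a ∈ Set.uIoc (1 - η) σ, ‖F (a + u * Complex.I)‖ ≤
        Real.exp 1 * x * (M * Real.exp (-(1 / 4) * r)) := by
      intro a ha
      rw [Set.uIoc_of_le (by linarith)] at ha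
      have := (hregion (a + u * Complex.I) (by simp [hu]) (by simpa using ha.1.le)
        (by simpa using ha.2)).2.2
      simp only [Complex.add_im, Complex.ofReal_im, Complex.mul_im, Complex.ofReal_re, Complex.I_im,
        mul_one, Complex.I_re, mul_zero, add_zero, zero_add, hu] at this
      rw [hFn, ← hxσ]
      have e1 : x ^ ((a : ℂ) + u * Complex.I).re ≤ x ^ σ :=
        Real.rpow_le_rpow_of_exponent_le hx1 (by simpa using ha.2)
      have e2 : (1 + T) ^ (-(3 / 2) : ℝ) ≤ (1 + T) ^ (-(1 / 4) : ℝ) :=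
        Real.rpow_le_rpow_of_exponent_le (by linarith) (by norm_num)
      gcongr
      exact this.trans (by gcongr; exact e2.trans hTpow)
    refine (intervalIntegral.norm_integral_le_of_norm_le_const h1).trans ?_
    have h2 : |σ - (1 - η)| ≤ 1 := by
      rw [abs_of_nonneg (by linarith)]
      linarith
    calc _ ≤ Real.exp 1 * x * (M * Real.exp (-(1 / 4) * r)) * 1 := by gcongr
      _ = _ := by ring
  have hleft : ‖∫ y : ℝ in (-T)..T, F ((1 - η : ℝ) + y * Complex.I)‖ ≤
      M * I * x * Real.exp (-(c / 2) * r) := by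
    have hxη : x ^ (1 - η) ≤ x * Real.exp (-(c / 2) * r) := by
      rw [Real.rpow_sub hx0, Real.rpow_one, div_eq_mul_inv, ← Real.rpow_neg hx0.le,
        Real.rpow_def_of_pos hx0, ← hL]
      refine mul_le_mul_of_nonneg_left (Real.exp_le_exp.mpr ?_) hx0.le
      have : c / 2 * r ≤ L * η := by
        rw [hη, ← mul_div_assoc, le_div_iff₀ (by linarith), ← hrL]
        nlinarith [mul_pos hc (by linarith : 0 < r)]
      linarith
    have h1 : ∀ y ∈ Set.Ioc (-T) T, ‖F ((1 - η : ℝ) + y * Complex.I)‖ ≤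
        x * Real.exp (-(c / 2) * r) * M * (1 + |y|) ^ (-(5 / 4) : ℝ) := by
      intro y hy
      have := (hregion ((1 - η : ℝ) + y * Complex.I) (by simpa using abs_le.mpr ⟨hy.1.le, hy.2⟩)
        (by simp) (by simp; linarith)).2.2
      simp only [Complex.add_im, Complex.ofReal_im, Complex.mul_im, Complex.ofReal_re, Complex.I_im,
        mul_one, Complex.I_re, mul_zero, add_zero, zero_add] at this
      rw [hFn]
      have e1 : (((1 - η : ℝ) : ℂ) + y * Complex.I).re = 1 - η := by simp
      rw [e1, mul_assoc _ M]
      gcongr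
      exact this.trans (mul_le_mul_of_nonneg_left (hexpo y) hM.le)
    rw [intervalIntegral.integral_of_le (by linarith)]
    have h2 := MeasureTheory.norm_integral_le_of_norm_le (μ := MeasureTheory.volume.restrict
      (Set.Ioc (-T) T)) (hIint.const_mul (x * Real.exp (-(c / 2) * r) * M)).integrableOn
      (MeasureTheory.ae_restrict_of_forall_mem measurableSet_Ioc h1)
    refine h2.trans ?_
    rw [MeasureTheory.integral_const_mul]
    have h3 : ∫ y in Set.Ioc (-T) T, (1 + |y|) ^ (-(5 / 4) : ℝ) ≤ I :=
      MeasureTheory.setIntegral_le_integral hIint (Eventually.of_forall fun y => by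
        show (0 : ℝ) ≤ _
        positivity)
    calc _ ≤ x * Real.exp (-(c / 2) * r) * M * I := by gcongr
      _ = _ := by ring
  have hmid : ‖∫ y : ℝ in (-T)..T, F (σ + y * Complex.I)‖ ≤
      2 * (Real.exp 1 * M * x * Real.exp (-(1 / 4) * r)) + M * I * x * Real.exp (-(c / 2) * r) := by
    have h1 := hhor (-T) (by simp [abs_of_pos hT0])
    have h2 := hhor T (abs_of_pos hT0)
    have h3 : Complex.I • (∫ y : ℝ in (-T)..T, F (σ + y * Complex.I)) =
        Complex.I • (∫ y : ℝ in (-T)..T, F ((1 - η : ℝ) + y * Complex.I)) +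
        ((∫ a : ℝ in (1 - η)..σ, F (a + (T : ℝ) * Complex.I)) -
        (∫ a : ℝ in (1 - η)..σ, F (a + (-T : ℝ) * Complex.I))) := by
      rw [← sub_eq_zero, ← hrect]
      ring
    have h4 := congrArg norm h3
    rw [norm_smul, Complex.norm_I, one_mul] at h4
    rw [h4]
    refine (norm_add_le _ _).trans ?_
    rw [norm_smul, Complex.norm_I, one_mul]
    have h5 := norm_sub_le (∫ a : ℝ in (1 - η)..σ, F (a + (T : ℝ) * Complex.I))
      (∫ a : ℝ in (1 - η)..σ, F (a + (-T : ℝ) * Complex.I))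
    linarith
  have hsplit := MeasureTheory.integral_add_compl (μ := MeasureTheory.volume)
    (s := Set.Ioc (-T) T) measurableSet_Ioc hFint
  change ‖∫ y, F (vline σ y)‖ ≤ _
  rw [← hsplit, ← intervalIntegral.integral_of_le (by linarith)]
  refine (norm_add_le _ _).trans ((add_le_add hmid htail).trans ?_)
  set c₁ := min (1 / 4) (c / 2) with hc₁
  have r0 : 0 ≤ r := by linarith
  have g1 : Real.exp (-(1 / 4) * r) ≤ Real.exp (-c₁ * r) := by
    apply Real.exp_le_exp.mpr
    have : c₁ ≤ 1 / 4 := min_le_left _ _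
    nlinarith
  have g2 : Real.exp (-(c / 2) * r) ≤ Real.exp (-c₁ * r) := by
    apply Real.exp_le_exp.mpr
    have : c₁ ≤ c / 2 := min_le_right _ _
    nlinarith
  calc _ ≤ 2 * (Real.exp 1 * M * x * Real.exp (-c₁ * r)) + M * I * x * Real.exp (-c₁ * r) +
        Real.exp 1 * M * I * x * Real.exp (-c₁ * r) := by gcongr
    _ = _ := by ring

end ZetaData

/-! ### The prime number theorem for zeta data -/

/-- The summatory function of `b`. -/
noncomputable def summ (b : ℕ → ℝ) (x : ℝ) : ℝ := ∑ n ∈ Finset.range (⌊x⌋₊ + 1), b n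

/-- The integral of the summatory function of `b`. -/
noncomputable def rieszSumm (b : ℕ → ℝ) (x : ℝ) : ℝ :=
  ∑ n ∈ Finset.range (⌊x⌋₊ + 1), b n * (x - n)

/-- The Riesz mean may be summed over any longer range once `x - n` is truncated at `0`. -/
theorem rieszSumm_eq (b : ℕ → ℝ) {x : ℝ} (hx : 0 ≤ x) {N : ℕ} (hN : ⌊x⌋₊ + 1 ≤ N) :
    rieszSumm b x = ∑ n ∈ Finset.range N, b n * max 0 (x - n) := by
  rw [rieszSumm, ← Finset.sum_subset (Finset.range_mono hN)]
  · refine Finset.sum_congr rfl fun n hn => ?_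
    have : (n : ℝ) ≤ x := (Nat.le_floor_iff hx).mp (by have := Finset.mem_range.mp hn; omega)
    rw [max_eq_right (by linarith)]
  · intro n _ hn
    rw [Finset.mem_range, not_lt] at hn
    have : x < n := (Nat.floor_lt hx).mp (by omega)
    rw [max_eq_left (by linarith), mul_zero]

/-- The Riesz mean is an antiderivative of the summatory function, which increases with `x`; so its
forward difference quotients bound the summatory function from above. -/
theorem summ_le_riesz {b : ℕ → ℝ} (hb : ∀ n, 0 ≤ b n) {x h : ℝ} (hx : 0 ≤ x) (hh : 0 ≤ h) :
    h * summ b x ≤ rieszSumm b (x + h) - rieszSumm b x := by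
  have hm : ⌊x⌋₊ ≤ ⌊x + h⌋₊ := Nat.floor_le_floor (by linarith)
  rw [rieszSumm_eq b (x := x + h) (by linarith) le_rfl,
    rieszSumm_eq b hx (N := ⌊x + h⌋₊ + 1) (by omega), ← Finset.sum_sub_distrib, summ, Finset.mul_sum]
  refine (Finset.sum_le_sum fun n hn => ?_).trans
    (Finset.sum_le_sum_of_subset_of_nonneg (Finset.range_mono (by omega)) fun n _ _ => ?_)
  · have : (n : ℝ) ≤ x := (Nat.le_floor_iff hx).mp (by have := Finset.mem_range.mp hn; omega)
    rw [max_eq_right (by linarith), max_eq_right (by linarith)]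
    linarith
  · rw [← mul_sub]
    exact mul_nonneg (hb n) (sub_nonneg.mpr (max_le_max le_rfl (by linarith)))

/-- The backward difference quotients of the Riesz mean bound the summatory function from below. -/
theorem riesz_le_summ {b : ℕ → ℝ} (hb : ∀ n, 0 ≤ b n) {x h : ℝ} (hh : 0 ≤ h) (hx : h ≤ x) :
    rieszSumm b x - rieszSumm b (x - h) ≤ h * summ b x := by
  have hm : ⌊x - h⌋₊ ≤ ⌊x⌋₊ := Nat.floor_le_floor (by linarith)
  rw [rieszSumm_eq b (x := x) (by linarith) le_rfl,
    rieszSumm_eq b (x := x - h) (by linarith) (N := ⌊x⌋₊ + 1) (by omega),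
    ← Finset.sum_sub_distrib, summ, Finset.mul_sum]
  refine Finset.sum_le_sum fun n hn => ?_
  rw [← mul_sub, mul_comm h]
  refine mul_le_mul_of_nonneg_left ?_ (hb n)
  have : max 0 (x - n) ≤ max 0 (x - h - n) + h := by
    apply max_le
    · have := le_max_left 0 (x - h - n); linarith
    · have := le_max_right 0 (x - h - n); linarith
  linarith

namespace ZetaData

variable {b : ℕ → ℝ} {H : ℂ → ℂ} {δ : ℝ}

/-- The asymptotics of the Riesz mean, from the explicit formula and the bound for the shifted
contour. -/
theorem rieszSumm_bound (h : ZetaData b H δ) : ∃ c M X, 0 < c ∧ 0 < M ∧ Real.exp 4 ≤ X ∧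
    ∀ x, X ≤ x → |rieszSumm b x - x ^ 2 / 2| ≤ M * x ^ 2 * Real.exp (-c * √(Real.log x)) := by
  obtain ⟨c, M, X, hc, hc4, hM, hX, hbd⟩ := h.perron_bound
  refine ⟨c, M + 1, X, hc, by positivity, hX, fun x hx => ?_⟩
  have hx4 := hX.trans hx
  have hx0 : 0 < x := (Real.exp_pos 4).trans_le hx4
  have hx1 : 1 ≤ x := (Real.one_le_exp (by norm_num)).trans hx4
  have hL4 : 4 ≤ Real.log x := (Real.le_log_iff_exp_le hx0).mpr hx4
  have h1 := hbd x hx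
  rw [(h.perron (σ := 1 + 1 / Real.log x) (by
    have : 0 < 1 / Real.log x := by positivity
    linarith) hx1).2, norm_mul] at h1
  have h2 : ‖(2 * Real.pi : ℂ)‖ = 2 * Real.pi := by
    rw [norm_mul, Complex.norm_real, Real.norm_of_nonneg Real.pi_pos.le]; simp
  rw [h2, Complex.norm_real, Real.norm_eq_abs] at h1
  set S := ∑ n ∈ Finset.range (⌊x⌋₊ + 1), b n * (1 - n / x) with hS
  have hP : rieszSumm b x = x * S := by
    rw [rieszSumm, hS, Finset.mul_sum]
    refine Finset.sum_congr rfl fun n _ => ?_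
    field_simp
  set E := Real.exp (-c * √(Real.log x)) with hE
  have h3 : |(1 - 1 / x) ^ 2 * x / 2 - S| ≤ M * x * E := by
    have := Real.pi_gt_three
    have h0 := abs_nonneg ((1 - 1 / x) ^ 2 * x / 2 - S)
    nlinarith
  have h4 : x ≤ x ^ 2 * E := by
    have : 1 ≤ x * E := by
      rw [hE]
      nth_rewrite 1 [← Real.exp_log hx0]
      rw [← Real.exp_add]
      apply Real.one_le_exp
      have h5 : √(Real.log x) ≤ Real.log x := by
        apply Real.sqrt_le_iff.mpr
        constructor <;> nlinarith
      have := Real.sqrt_nonneg (Real.log x)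
      nlinarith
    nlinarith
  have h5 : rieszSumm b x - x ^ 2 / 2 = -(x * ((1 - 1 / x) ^ 2 * x / 2 - S)) - (x - 1 / 2) := by
    rw [hP]; field_simp; ring
  rw [h5]
  refine (abs_sub _ _).trans ?_
  rw [abs_neg, abs_mul, abs_of_pos hx0, abs_of_pos (by linarith : 0 < x - 1 / 2)]
  nlinarith

/-- The prime number theorem with the classical error term. -/
theorem pnt (h : ZetaData b H δ) : ∃ c M X, 0 < c ∧ 0 < M ∧ 1 ≤ X ∧
    ∀ x, X ≤ x → |summ b x - x| ≤ M * x * Real.exp (-c * √(Real.log x)) := by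
  obtain ⟨c, M, X, hc, hM, hX, hbd⟩ := h.rieszSumm_bound
  have hX1 : 1 ≤ X := (Real.one_le_exp (by norm_num)).trans hX
  refine ⟨c / 4, 1 + 16 * M, 2 * X, by positivity, by positivity, by linarith, fun x hx => ?_⟩
  have hx4 : Real.exp 4 ≤ x := by linarith
  have hx0 : 0 < x := (Real.exp_pos 4).trans_le hx4
  have hL4 : 4 ≤ Real.log x := (Real.le_log_iff_exp_le hx0).mpr hx4
  set r := √(Real.log x) with hr
  set q := Real.exp (-(c / 4) * r) with hq
  have hq0 : 0 < q := Real.exp_pos _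
  have hr0 : 0 ≤ r := Real.sqrt_nonneg _
  have hq1 : q ≤ 1 := by
    rw [hq, Real.exp_le_one_iff]
    nlinarith
  -- the estimate at neighbouring points, with a common error term
  have hnear : ∀ y, x / 2 ≤ y → y ≤ 2 * x → |rieszSumm b y - y ^ 2 / 2| ≤ 4 * M * x ^ 2 * q ^ 2 := by
    intro y h1 h2
    have hy0 : 0 < y := by linarith
    refine (hbd y (by linarith)).trans ?_
    have h3 : r / 2 ≤ √(Real.log y) := by
      have h4 : Real.log x - Real.log 2 ≤ Real.log y := by
        rw [← Real.log_div hx0.ne' (by norm_num)]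
        exact Real.log_le_log (by positivity) h1
      have h5 := Real.log_two_lt_d9
      apply Real.le_sqrt_of_sq_le
      have : r ^ 2 = Real.log x := Real.sq_sqrt (by linarith)
      nlinarith
    have h6 : Real.exp (-c * √(Real.log y)) ≤ q ^ 2 := by
      rw [hq, ← Real.exp_nat_mul]
      apply Real.exp_le_exp.mpr
      push_cast
      nlinarith
    calc M * y ^ 2 * Real.exp (-c * √(Real.log y)) ≤ M * (2 * x) ^ 2 * q ^ 2 := by gcongr
      _ = _ := by ring
  set t := x * q / 2 with ht
  have ht0 : 0 < t := by positivity
  have htx : t ≤ x / 2 := by rw [ht]; nlinarith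
  have n0 := abs_le.mp (hnear x (by linarith) (by linarith))
  have n1 := abs_le.mp (hnear (x + t) (by linarith) (by linarith))
  have n2 := abs_le.mp (hnear (x - t) (by linarith) (by linarith))
  have u := summ_le_riesz h.b_nonneg hx0.le ht0.le
  have l := riesz_le_summ h.b_nonneg (x := x) ht0.le (by linarith)
  have e : 4 * M * x ^ 2 * q ^ 2 = t * (8 * M * x * q) := by rw [ht]; ring
  rw [e] at n0 n1 n2
  rw [abs_le]
  have hxq : 0 < x * q := by positivity
  constructor
  · have : t * (x - t / 2 - 16 * M * x * q) ≤ t * summ b x := by nlinarith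
    have := le_of_mul_le_mul_left this ht0
    nlinarith
  · have : t * summ b x ≤ t * (x + t / 2 + 16 * M * x * q) := by nlinarith
    have := le_of_mul_le_mul_left this ht0
    nlinarith

end ZetaData

/-! ### A smooth weight in logarithmic coordinates -/

namespace SmoothCount

section LogLipschitz

variable {W : Type*} [Fintype W] [Nonempty W]

/-- The function `a ↦ G (log a)` on the positive orthant, extended by zero. -/
noncomputable def ofLog (G : (W → ℝ) → ℝ) (a : W → ℝ) : ℝ :=
  if ∀ w, 0 < a w then G (fun w => Real.log (a w)) else 0

theorem abs_log_sub_log_le {u v : ℝ} (hu : 0 < u) (h : |u - v| ≤ u / 2) :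
    |Real.log u - Real.log v| ≤ 2 * |u - v| / u := by
  have hv : u / 2 ≤ v := by have := abs_le.1 h; linarith [this.2]
  have hv0 : 0 < v := by linarith
  have key : ∀ {x y : ℝ}, 0 < x → 0 < y → Real.log x - Real.log y ≤ (x - y) / y := by
    intro x y hx hy
    rw [← Real.log_div hx.ne' hy.ne']
    have := Real.log_le_sub_one_of_pos (div_pos hx hy)
    rwa [sub_div, div_self hy.ne']
  rw [abs_le]
  constructor
  · have h1 := key hv0 hu
    have h2 : (v - u) / u ≤ 2 * |u - v| / u := by
      gcongr
      have := neg_abs_le (u - v)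
      linarith [abs_nonneg (u - v)]
    linarith
  · have h1 := key hu hv0
    have h2 : (u - v) / v ≤ 2 * |u - v| / u := by
      rw [div_le_div_iff₀ hv0 hu]
      nlinarith [le_abs_self (u - v), abs_nonneg (u - v)]
    linarith

/-- If `G ≥ 0` decays like `min_w exp (l w)`, and its local oscillation is controlled by the same
quantity, then `G ∘ log` extended by zero is Lipschitz on the closed orthant. -/
theorem ofLog_lipschitz {G : (W → ℝ) → ℝ} {C₁ C₂ : ℝ}
    (h0 : ∀ l, 0 ≤ G l) (h1 : ∀ l w, G l ≤ C₁ * Real.exp (l w))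
    (h2 : ∀ l l' w η, η ≤ 1 → (∀ w', |l w' - l' w'| ≤ η) →
      |G l - G l'| ≤ C₂ * Real.exp (l w) * η)
    {a b : W → ℝ} {D : ℝ} (ha : ∀ w, 0 ≤ a w) (hb : ∀ w, 0 ≤ b w)
    (hD : ∀ w, |a w - b w| ≤ D) :
    |ofLog G a - ofLog G b| ≤ (3 * C₁ + 2 * C₂) * D := by
  have hD0 : 0 ≤ D := (abs_nonneg _).trans (hD (Classical.arbitrary W))
  have hC1 : 0 ≤ C₁ := by
    have := (h0 0).trans (h1 0 (Classical.arbitrary W)); simpa using this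
  have hC2 : 0 ≤ C₂ := by
    have := h2 0 0 (Classical.arbitrary W) 1 le_rfl (by simp)
    simpa using this
  have hnn : ∀ a : W → ℝ, 0 ≤ ofLog G a := by
    intro a; unfold ofLog; split_ifs <;> simp [h0]
  have hle : ∀ a : W → ℝ, (∀ w, 0 ≤ a w) → ∀ w, ofLog G a ≤ C₁ * a w := by
    intro a ha w; unfold ofLog; split_ifs with h
    · have := h1 (fun w => Real.log (a w)) w
      rwa [Real.exp_log (h w)] at this
    · exact mul_nonneg hC1 (ha w)
  by_cases hs : ∃ w, a w ≤ 2 * D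
  · obtain ⟨w, hw⟩ := hs
    have e1 : ofLog G a ≤ 3 * C₁ * D :=
      (hle a ha w).trans (by nlinarith)
    have e2 : ofLog G b ≤ 3 * C₁ * D := by
      refine (hle b hb w).trans ?_
      have := (abs_le.1 (hD w)).1
      nlinarith
    have hp : 0 ≤ 2 * C₂ * D := by positivity
    rw [abs_le]
    constructor <;> linarith [hnn a, hnn b]
  · push Not at hs
    have ha' : ∀ w, 0 < a w := fun w => by linarith [hs w]
    have hb' : ∀ w, 0 < b w := fun w => by linarith [hs w, (abs_le.1 (hD w)).2]
    obtain ⟨w₀, hw₀⟩ := Finite.exists_min a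
    have key := h2 (fun w => Real.log (a w)) (fun w => Real.log (b w)) w₀ (2 * D / a w₀)
      (by rw [div_le_one (ha' w₀)]; exact (hs w₀).le) (by
        intro w
        refine (abs_log_sub_log_le (ha' w) (by linarith [hD w, hs w])).trans ?_
        have := hD w
        have := ha' w₀
        gcongr
        · exact hw₀ w)
    have hp : 0 ≤ 3 * C₁ * D := by positivity
    simp only [Real.exp_log (ha' w₀)] at key
    unfold ofLog
    rw [if_pos ha', if_pos hb']
    refine key.trans ?_
    have : C₂ * a w₀ * (2 * D / a w₀) = 2 * C₂ * D := by
      field_simp [(ha' w₀).ne']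
    rw [this]; linarith

end LogLipschitz

/-- The tent function, whose integer translates form a partition of unity. -/
noncomputable def tent (x : ℝ) : ℝ := max 0 (1 - |x|)

/-- The profile `y (1 - y)` on `[0, 1]`, extended by zero to `y ≥ 1`. -/
noncomputable def bump (y : ℝ) : ℝ := y * max 0 (1 - y)

theorem tent_nonneg (x : ℝ) : 0 ≤ tent x := le_max_left _ _
theorem tent_le_one (x : ℝ) : tent x ≤ 1 := max_le zero_le_one (by linarith [abs_nonneg x])
theorem abs_lt_of_tent_ne {x : ℝ} (h : tent x ≠ 0) : |x| < 1 := by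
  by_contra hx
  push Not at hx
  exact h (max_eq_left (by linarith))
theorem tent_lip (x y : ℝ) : |tent x - tent y| ≤ |x - y| := by
  unfold tent
  refine (abs_max_sub_max_le_max _ _ _ _).trans ?_
  have e : 1 - |x| - (1 - |y|) = |y| - |x| := by ring
  rw [e, sub_self, abs_zero, max_eq_right (abs_nonneg _), abs_sub_comm x y]
  exact abs_abs_sub_abs_le y x

theorem bump_nonneg {y : ℝ} (h : 0 ≤ y) : 0 ≤ bump y := mul_nonneg h (le_max_left _ _)
theorem bump_le {y : ℝ} (h : 0 ≤ y) : bump y ≤ y := by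
  have : max 0 (1 - y) ≤ 1 := max_le zero_le_one (by linarith)
  unfold bump; nlinarith
theorem bump_eq_zero {y : ℝ} (h : 1 ≤ y) : bump y = 0 := by
  unfold bump; rw [max_eq_left (by linarith), mul_zero]
theorem bump_of_le {y : ℝ} (h : y ≤ 1) : bump y = y * (1 - y) := by
  unfold bump; rw [max_eq_right (by linarith)]
theorem bump_lip {x y : ℝ} (hx : 0 ≤ x) (hy : 0 ≤ y) : |bump x - bump y| ≤ |x - y| := by
  wlog h : x ≤ y generalizing x y
  · rw [abs_sub_comm, abs_sub_comm x]; exact this hy hx (le_of_not_ge h)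
  rw [abs_sub_comm x y, abs_of_nonneg (sub_nonneg.2 h), abs_le]
  rcases le_or_gt 1 x with h1 | h1
  · rw [bump_eq_zero h1, bump_eq_zero (h1.trans h)]; constructor <;> linarith
  rcases le_or_gt 1 y with h2 | h2
  · rw [bump_of_le h1.le, bump_eq_zero h2]; constructor <;> nlinarith
  · rw [bump_of_le h1.le, bump_of_le h2.le]; constructor <;> nlinarith

theorem prod_tent_lip {ι : Type*} (s : Finset ι) (x y : ι → ℝ) :
    |∏ i ∈ s, tent (x i) - ∏ i ∈ s, tent (y i)| ≤ ∑ i ∈ s, |x i - y i| := by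
  induction s using Finset.induction_on with
  | empty => simp
  | insert a s ha ih =>
    rw [Finset.prod_insert ha, Finset.prod_insert ha, Finset.sum_insert ha]
    have e : tent (x a) * ∏ i ∈ s, tent (x i) - tent (y a) * ∏ i ∈ s, tent (y i)
        = (tent (x a) - tent (y a)) * ∏ i ∈ s, tent (x i)
          + tent (y a) * (∏ i ∈ s, tent (x i) - ∏ i ∈ s, tent (y i)) := by ring
    rw [e]
    refine (abs_add_le _ _).trans (add_le_add ?_ ?_)
    · rw [abs_mul]
      refine (mul_le_of_le_one_right (abs_nonneg _) ?_).trans (tent_lip _ _)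
      rw [abs_of_nonneg (Finset.prod_nonneg fun _ _ => tent_nonneg _)]
      exact Finset.prod_le_one (fun _ _ => tent_nonneg _) (fun _ _ => tent_le_one _)
    · rw [abs_mul]
      refine (mul_le_of_le_one_left (abs_nonneg _) ?_).trans ih
      rw [abs_of_nonneg (tent_nonneg _)]; exact tent_le_one _

section Weight

variable {W ι : Type*} [Fintype W] [Fintype ι]

/-- The smooth counting weight in logarithmic coordinates: a product of tents in the linear forms
`α`, times the bump function of the norm. -/
noncomputable def logWeight (α : ι → W → ℝ) (m : W → ℕ) (l : W → ℝ) : ℝ :=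
  (∏ i, tent (∑ w, α i w * l w)) * bump (Real.exp (∑ w, m w * l w))

variable {α : ι → W → ℝ} {m : W → ℕ} {M : ℝ}

theorem logWeight_nonneg (l : W → ℝ) : 0 ≤ logWeight α m l :=
  mul_nonneg (Finset.prod_nonneg fun _ _ => tent_nonneg _) (bump_nonneg (Real.exp_pos _).le)

/-- On the support of the weight the tents keep the coordinates of `l` within `M` of each other, and
the bump function forces their weighted sum to be negative, whence an upper bound for each. -/
theorem logWeight_support
    (hM : ∀ l : W → ℝ, (∀ i, |∑ w, α i w * l w| ≤ 1) → ∀ w w', l w - l w' ≤ M)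
    {l : W → ℝ} (h : logWeight α m l ≠ 0) (w : W) : l w ≤ M := by
  have h1 : ∀ i, |∑ w, α i w * l w| ≤ 1 := fun i =>
    (abs_lt_of_tent_ne fun hi => h (by
      unfold logWeight; rw [Finset.prod_eq_zero (Finset.mem_univ i) hi, zero_mul])).le
  have h2 : Real.exp (∑ w, m w * l w) < 1 := by
    by_contra hx
    exact h (by unfold logWeight; rw [bump_eq_zero (not_lt.1 hx), mul_zero])
  rw [Real.exp_lt_one_iff] at h2
  obtain ⟨w', hw'⟩ : ∃ w', l w' < 0 := by
    by_contra hx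
    push Not at hx
    exact absurd h2 (not_lt.2 (Finset.sum_nonneg fun w _ => mul_nonneg (Nat.cast_nonneg _) (hx w)))
  linarith [hM l h1 w w']

theorem sum_le_of_le (hm : ∀ w, 0 < m w) {l : W → ℝ} {B : ℝ} (hB : 0 ≤ B) (h : ∀ w, l w ≤ B)
    (w : W) : ∑ w, m w * l w ≤ l w + (∑ w, (m w : ℝ)) * B := by
  have : ∀ w', (m w' : ℝ) * l w' ≤ (if w' = w then l w else 0) + m w' * B := by
    intro w'
    have h1 : (1 : ℝ) ≤ m w' := by exact_mod_cast hm w'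
    split_ifs with hw
    · subst hw
      nlinarith [h w']
    · have := h w'
      nlinarith
  calc ∑ w, (m w : ℝ) * l w ≤ ∑ w', ((if w' = w then l w else 0) + m w' * B) :=
        Finset.sum_le_sum fun w' _ => this w'
    _ = _ := by rw [Finset.sum_add_distrib, Finset.sum_mul]; simp

/-- The weight decays when some coordinate tends to `-∞`, that is, when some absolute value of the
point tends to `0`. -/
theorem logWeight_le (hm : ∀ w, 0 < m w) (hM0 : 0 ≤ M)
    (hM : ∀ l : W → ℝ, (∀ i, |∑ w, α i w * l w| ≤ 1) → ∀ w w', l w - l w' ≤ M)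
    (l : W → ℝ) (w : W) :
    logWeight α m l ≤ Real.exp ((∑ w, (m w : ℝ)) * M) * Real.exp (l w) := by
  by_cases h : logWeight α m l = 0
  · rw [h]; positivity
  have h1 : logWeight α m l ≤ Real.exp (∑ w, m w * l w) := by
    unfold logWeight
    refine (mul_le_of_le_one_left (bump_nonneg (Real.exp_pos _).le) ?_).trans
      (bump_le (Real.exp_pos _).le)
    exact Finset.prod_le_one (fun _ _ => tent_nonneg _) (fun _ _ => tent_le_one _)
  refine h1.trans ?_
  rw [← Real.exp_add, add_comm]
  exact Real.exp_le_exp.2 (sum_le_of_le hm hM0 (logWeight_support hM h) w)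

/-- The oscillation bound in logarithmic coordinates. The factor `exp (l w)` makes up for the singularity
of the logarithm at `0`, so that `ofLog` of the weight is Lipschitz. -/
theorem logWeight_osc (hm : ∀ w, 0 < m w) (hM0 : 0 ≤ M)
    (hM : ∀ l : W → ℝ, (∀ i, |∑ w, α i w * l w| ≤ 1) → ∀ w w', l w - l w' ≤ M) :
    ∃ C, ∀ (l l' : W → ℝ) w η, η ≤ 1 → (∀ w', |l w' - l' w'| ≤ η) →
      |logWeight α m l - logWeight α m l'| ≤ C * Real.exp (l w) * η := by
  set d : ℝ := ∑ w, (m w : ℝ) with hd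
  set A : ℝ := ∑ i, ∑ w, |α i w| with hA
  have hd0 : 0 ≤ d := Finset.sum_nonneg fun _ _ => Nat.cast_nonneg _
  have hA0 : 0 ≤ A := Finset.sum_nonneg fun _ _ => Finset.sum_nonneg fun _ _ => abs_nonneg _
  refine ⟨Real.exp (d * (M + 1)) * (A + d * Real.exp d), fun l l' w η hη h => ?_⟩
  have hη0 : 0 ≤ η := (abs_nonneg _).trans (h w)
  by_cases h0 : logWeight α m l = 0 ∧ logWeight α m l' = 0
  · rw [h0.1, h0.2]; simp; positivity
  have hl : ∀ w, l w ≤ M + 1 := by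
    intro w
    by_cases h1 : logWeight α m l = 0
    · have := logWeight_support hM (fun h2 => h0 ⟨h1, h2⟩) w
      linarith [(abs_le.1 (h w)).2]
    · linarith [logWeight_support hM h1 w]
  have hexp : Real.exp (∑ w, m w * l w) ≤ Real.exp (d * (M + 1)) * Real.exp (l w) := by
    rw [← Real.exp_add, add_comm]
    exact Real.exp_le_exp.2 (sum_le_of_le hm (by linarith) hl w)
  set lam := ∑ w, m w * l w with hlam
  set lam' := ∑ w, m w * l' w with hlam'
  have hdiff : |lam' - lam| ≤ d * η := by
    rw [hlam, hlam', ← Finset.sum_sub_distrib, hd, Finset.sum_mul]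
    refine (Finset.abs_sum_le_sum_abs _ _).trans (Finset.sum_le_sum fun w _ => ?_)
    rw [← mul_sub, abs_mul, Nat.abs_cast, abs_sub_comm]
    exact mul_le_mul_of_nonneg_left (h w) (Nat.cast_nonneg _)
  have hF : |∏ i, tent (∑ w, α i w * l w) - ∏ i, tent (∑ w, α i w * l' w)| ≤ A * η := by
    refine (prod_tent_lip _ _ _).trans ?_
    rw [hA, Finset.sum_mul]
    refine Finset.sum_le_sum fun i _ => ?_
    rw [← Finset.sum_sub_distrib, Finset.sum_mul]
    refine (Finset.abs_sum_le_sum_abs _ _).trans (Finset.sum_le_sum fun w _ => ?_)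
    rw [← mul_sub, abs_mul]
    exact mul_le_mul_of_nonneg_left (h w) (abs_nonneg _)
  have hB : |bump (Real.exp lam) - bump (Real.exp lam')| ≤ Real.exp lam * (d * Real.exp d * η) := by
    refine (bump_lip (Real.exp_pos _).le (Real.exp_pos _).le).trans ?_
    have e : Real.exp lam - Real.exp lam' = Real.exp lam * (-(Real.exp (lam' - lam) - 1)) := by
      rw [Real.exp_sub]; field_simp; ring
    rw [e, abs_mul, abs_of_pos (Real.exp_pos _), abs_neg]
    refine mul_le_mul_of_nonneg_left ?_ (Real.exp_pos _).le
    set u := lam' - lam with hu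
    have h1 : |Real.exp u - 1| ≤ |u| * Real.exp |u| := by
      rw [abs_le]
      constructor
      · have := Real.add_one_le_exp u
        have h2 := neg_abs_le u
        have h3 : |u| * 1 ≤ |u| * Real.exp |u| :=
          mul_le_mul_of_nonneg_left (Real.one_le_exp (abs_nonneg _)) (abs_nonneg _)
        linarith
      · have h2 : Real.exp u ≤ Real.exp |u| := Real.exp_le_exp.2 (le_abs_self _)
        have h3 := Real.add_one_le_exp (-|u|)
        have h4 : Real.exp |u| * Real.exp (-|u|) = 1 := by rw [← Real.exp_add]; simp
        nlinarith [Real.exp_pos |u|]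
    refine h1.trans ?_
    have h2 : |u| ≤ d := hdiff.trans (by nlinarith)
    calc |u| * Real.exp |u| ≤ (d * η) * Real.exp d := by gcongr
      _ = _ := by ring
  have e : logWeight α m l - logWeight α m l' =
      (∏ i, tent (∑ w, α i w * l w) - ∏ i, tent (∑ w, α i w * l' w)) * bump (Real.exp lam)
      + (∏ i, tent (∑ w, α i w * l' w)) * (bump (Real.exp lam) - bump (Real.exp lam')) := by
    unfold logWeight; ring
  rw [e]
  have hP1 : |∏ i, tent (∑ w, α i w * l' w)| ≤ 1 := by
    rw [abs_of_nonneg (Finset.prod_nonneg fun _ _ => tent_nonneg _)]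
    exact Finset.prod_le_one (fun _ _ => tent_nonneg _) (fun _ _ => tent_le_one _)
  have hb1 : |bump (Real.exp lam)| ≤ Real.exp lam := by
    rw [abs_of_nonneg (bump_nonneg (Real.exp_pos _).le)]; exact bump_le (Real.exp_pos _).le
  calc _ ≤ A * η * Real.exp lam + 1 * (Real.exp lam * (d * Real.exp d * η)) := by
        refine (abs_add_le _ _).trans (add_le_add ?_ ?_)
        · rw [abs_mul]; exact mul_le_mul hF hb1 (abs_nonneg _) (by positivity)
        · rw [abs_mul]; exact mul_le_mul hP1 hB (abs_nonneg _) zero_le_one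
    _ = Real.exp lam * ((A + d * Real.exp d) * η) := by ring
    _ ≤ (Real.exp (d * (M + 1)) * Real.exp (l w)) * ((A + d * Real.exp d) * η) := by gcongr
    _ = _ := by ring

end Weight

end SmoothCount

/-! ### Sums of Lipschitz functions over a lattice -/

namespace SmoothCount

section LatticeSum
open MeasureTheory

variable {ι : Type*} [Fintype ι]

/-- The half-open unit cube with lower corner `v`. -/
def cell (v : ι → ℤ) : Set (ι → ℝ) := Set.univ.pi fun i => Set.Ico (v i : ℝ) (v i + 1)

theorem mem_cell {v : ι → ℤ} {x : ι → ℝ} : x ∈ cell v ↔ ∀ i, ⌊x i⌋ = v i := by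
  simp [cell, Int.floor_eq_iff]

theorem measurableSet_cell (v : ι → ℤ) : MeasurableSet (cell v) :=
  MeasurableSet.univ_pi fun _ => measurableSet_Ico

theorem volume_cell (v : ι → ℤ) : volume (cell v) = 1 := by
  simp [cell, Real.volume_pi_Ico]

/-- Lattice sums of a Lipschitz function of bounded support, with error term: the cube at `v / r`
contributes its integral up to `O (1 / r)`, and there are `O (r ^ d)` relevant cubes. -/
theorem lattice_sum {Θ : (ι → ℝ) → ℝ} {L R : ℝ} (hR : 0 ≤ R)
    (hL : ∀ x y, |Θ x - Θ y| ≤ L * ‖x - y‖) (hS : ∀ x, R < ‖x‖ → Θ x = 0) :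
    (∀ r : ℝ, 1 ≤ r →
      {v : ι → ℤ | Θ (r⁻¹ • fun i => (v i : ℝ)) ≠ 0}.Finite) ∧
    ∃ κ C : ℝ, 0 ≤ C ∧ ∀ r : ℝ, 1 ≤ r →
      |∑' v : ι → ℤ, Θ (r⁻¹ • fun i => (v i : ℝ)) - κ * r ^ Fintype.card ι| ≤
        C * r ^ Fintype.card ι / r := by
  have hL0 : 0 ≤ |L| := abs_nonneg L
  have hL' : ∀ x y, |Θ x - Θ y| ≤ |L| * ‖x - y‖ := fun x y =>
    (hL x y).trans (mul_le_mul_of_nonneg_right (le_abs_self L) (norm_nonneg _))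
  have hcont : Continuous Θ := by
    have : LipschitzWith (Real.toNNReal |L|) Θ := by
      refine LipschitzWith.of_dist_le_mul fun x y => ?_
      rw [Real.dist_eq, dist_eq_norm, Real.coe_toNNReal _ hL0]
      exact hL' x y
    exact this.continuous
  let S : ℝ → Finset (ι → ℤ) := fun r =>
    Fintype.piFinset fun _ => Finset.Icc (-(⌈R * r⌉ + 1)) (⌈R * r⌉ + 1)
  have hout : ∀ r : ℝ, 1 ≤ r → ∀ v : ι → ℤ, ∀ x ∈ cell v, v ∉ S r → Θ (r⁻¹ • x) = 0 := by
    intro r hr v x hx hv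
    have hr0 : 0 < r := by linarith
    apply hS
    rw [norm_smul, norm_inv, Real.norm_eq_abs, abs_of_pos hr0, lt_inv_mul_iff₀ hr0]
    simp only [S, Fintype.mem_piFinset, Finset.mem_Icc, not_forall, not_and_or, not_le] at hv
    obtain ⟨i, hi⟩ := hv
    refine lt_of_lt_of_le ?_ (norm_le_pi_norm x i)
    rw [Real.norm_eq_abs, mul_comm]
    have h1 := Int.floor_le (x i)
    have h2 := Int.lt_floor_add_one (x i)
    rw [mem_cell.1 hx i] at h1 h2
    have h3 := Int.le_ceil (R * r)
    rcases hi with hi | hi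
    · rw [lt_abs]; right
      have : (v i : ℝ) + 1 ≤ -(⌈R * r⌉ + 1) := by exact_mod_cast hi
      linarith
    · rw [lt_abs]; left
      have : (⌈R * r⌉ + 1 : ℝ) + 1 ≤ v i := by exact_mod_cast hi
      linarith
  have hself : ∀ v : ι → ℤ, (fun i => (v i : ℝ)) ∈ cell v := fun v => mem_cell.2 fun i => by simp
  refine ⟨fun r hr => (S r).finite_toSet.subset fun v hv => ?_,
    ∫ x, Θ x, |L| * (2 * R + 5) ^ Fintype.card ι, by positivity, fun r hr => ?_⟩
  · by_contra h
    exact hv (hout r hr v _ (hself v) h)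
  have hr0 : 0 < r := by linarith
  rw [tsum_eq_sum (s := S r) fun v hv => hout r hr v _ (hself v) hv]
  have hcomp : HasCompactSupport fun x => Θ (r⁻¹ • x) := by
    refine HasCompactSupport.intro (isCompact_closedBall (0 : ι → ℝ) (R * r)) fun x hx => hS _ ?_
    rw [norm_smul, norm_inv, Real.norm_eq_abs, abs_of_pos hr0, lt_inv_mul_iff₀ hr0]
    simpa [mul_comm] using hx
  have hintg : Integrable fun x => Θ (r⁻¹ • x) :=
    (hcont.comp (continuous_const_smul _)).integrable_of_hasCompactSupport hcomp
  have hscale : (∫ x, Θ x) * r ^ Fintype.card ι = ∫ x, Θ (r⁻¹ • x) := by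
    rw [Measure.integral_comp_inv_smul, Module.finrank_fintype_fun_eq_card, smul_eq_mul,
      abs_of_pos (by positivity), mul_comm]
  have hsplit : ∫ x, Θ (r⁻¹ • x) = ∑ v ∈ S r, ∫ x in cell v, Θ (r⁻¹ • x) := by
    rw [← integral_biUnion_finset (S r) (fun v _ => measurableSet_cell v) ?_
      (fun v _ => hintg.integrableOn)]
    · refine (setIntegral_eq_integral_of_forall_compl_eq_zero fun x hx => ?_).symm
      refine hout r hr (fun i => ⌊x i⌋) x (mem_cell.2 fun i => rfl) fun h => hx ?_
      exact Set.mem_biUnion h (mem_cell.2 fun i => rfl)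
    · intro v _ w _ hvw
      refine Set.disjoint_left.2 fun x hx hy => hvw ?_
      funext i
      rw [← mem_cell.1 hx i, mem_cell.1 hy i]
  rw [hscale, hsplit, ← Finset.sum_sub_distrib]
  have hone : ∀ v : ι → ℤ,
      |Θ (r⁻¹ • fun i => (v i : ℝ)) - ∫ x in cell v, Θ (r⁻¹ • x)| ≤ |L| / r := by
    intro v
    have e : Θ (r⁻¹ • fun i => (v i : ℝ)) = ∫ x in cell v, Θ (r⁻¹ • fun i => (v i : ℝ)) := by
      rw [setIntegral_const, measureReal_def, volume_cell]; simp
    rw [e, ← integral_sub (integrable_const_iff.2 (Or.inr ⟨by simp [volume_cell]⟩))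
      hintg.integrableOn]
    have := norm_setIntegral_le_of_norm_le_const (μ := volume) (s := cell v) (C := |L| / r)
      (f := fun x => Θ (r⁻¹ • fun i => (v i : ℝ)) - Θ (r⁻¹ • x)) (by simp [volume_cell]) ?_
    · simpa [measureReal_def, volume_cell] using this
    · intro x hx
      rw [Real.norm_eq_abs]
      refine (hL' _ _).trans ?_
      rw [← smul_sub, norm_smul, norm_inv, Real.norm_eq_abs, abs_of_pos hr0, div_eq_mul_inv]
      refine mul_le_mul_of_nonneg_left (mul_le_of_le_one_right (by positivity) ?_) hL0
      refine (pi_norm_le_iff_of_nonneg zero_le_one).2 fun i => ?_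
      have h1 := Int.floor_le (x i)
      have h2 := Int.lt_floor_add_one (x i)
      rw [mem_cell.1 hx i] at h1 h2
      simp only [Pi.sub_apply, Real.norm_eq_abs, abs_le]
      constructor <;> linarith
  refine (Finset.abs_sum_le_sum_abs _ _).trans ((Finset.sum_le_sum fun v _ => hone v).trans ?_)
  rw [Finset.sum_const, nsmul_eq_mul]
  have hcard : ((S r).card : ℝ) ≤ ((2 * R + 5) * r) ^ Fintype.card ι := by
    rw [Fintype.card_piFinset, Finset.prod_const, Finset.card_univ, Int.card_Icc, Nat.cast_pow]
    refine pow_le_pow_left₀ (Nat.cast_nonneg _) ?_ _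
    have h0 : 0 ≤ ⌈R * r⌉ := Int.ceil_nonneg (by positivity)
    have h1 : (((⌈R * r⌉ + 1 + 1 - -(⌈R * r⌉ + 1)).toNat : ℤ) : ℝ) = 2 * ⌈R * r⌉ + 3 := by
      rw [Int.toNat_of_nonneg (by omega)]; push_cast; ring
    have h2 := Int.ceil_lt_add_one (R * r)
    rw [Int.cast_natCast] at h1
    rw [h1]; nlinarith
  calc ((S r).card : ℝ) * (|L| / r) ≤ ((2 * R + 5) * r) ^ Fintype.card ι * (|L| / r) := by gcongr
    _ = _ := by rw [mul_pow]; ring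

end LatticeSum

end SmoothCount

/-! ### The weight on the mixed space of a number field -/

namespace SmoothCount

section MixedSpace
open NumberField NumberField.InfinitePlace NumberField.Units NumberField.mixedEmbedding
  NumberField.Units.dirichletUnitTheorem

variable (K : Type*) [Field K] [NumberField K]

/-- The real basis of the logarithmic space given by the fundamental units. -/
noncomputable def unitBasis : Module.Basis (Fin (rank K)) ℝ (logSpace K) :=
  (basisUnitLattice K).ofZLatticeBasis ℝ

/-- The coordinates of `logMap` in the basis of fundamental units, as a linear map in the logarithms
of the absolute values. -/
noncomputable def logProj : (InfinitePlace K → ℝ) →ₗ[ℝ] logSpace K :=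
  LinearMap.pi fun w => (w.1.mult : ℝ) • (LinearMap.proj w.1 -
    (Module.finrank ℚ K : ℝ)⁻¹ • ∑ w', (w'.mult : ℝ) • LinearMap.proj w')

/-- The coefficients of the linear forms computing unit coordinates. -/
noncomputable def unitCoeff (i : Fin (rank K)) (w : InfinitePlace K) : ℝ :=
  (unitBasis K).coord i (logProj K (Pi.single w 1))

variable {K}

theorem logProj_apply (l : InfinitePlace K → ℝ) (w : {w : InfinitePlace K // w ≠ w₀}) :
    logProj K l w = w.1.mult * (l w.1 - (∑ w', w'.mult * l w') * (Module.finrank ℚ K : ℝ)⁻¹) := by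
  simp [logProj, mul_comm]

theorem sum_unitCoeff (i : Fin (rank K)) (l : InfinitePlace K → ℝ) :
    ∑ w, unitCoeff K i w * l w = (unitBasis K).repr (logProj K l) i := by
  have := LinearMap.pi_apply_eq_sum_univ ((unitBasis K).coord i ∘ₗ logProj K) l
  simp only [LinearMap.comp_apply, Module.Basis.coord_apply, smul_eq_mul] at this
  rw [this]
  refine Finset.sum_congr rfl fun w _ => ?_
  rw [mul_comm]; congr 1
  unfold unitCoeff
  rw [Module.Basis.coord_apply]
  congr 3
  funext j; simp [Pi.single_apply, eq_comm]

/-- The logarithmic map is linear in the logarithms of the absolute values. -/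
theorem logMap_eq_logProj {x : mixedSpace K} (hx : mixedEmbedding.norm x ≠ 0) :
    logMap x = logProj K fun w => Real.log (normAtPlace w x) := by
  funext w
  rw [logMap_apply, logProj_apply, mixedEmbedding.norm_apply, Real.log_prod]
  · simp [Real.log_pow]
  · intro w _
    exact pow_ne_zero _ (mixedEmbedding.norm_ne_zero_iff.1 hx w)

/-- Bounded unit coordinates force all logarithms to be within a bounded distance. -/
theorem log_spread : ∃ M : ℝ, 0 ≤ M ∧ ∀ l : InfinitePlace K → ℝ,
    (∀ i, |∑ w, unitCoeff K i w * l w| ≤ 1) → ∀ w w', l w - l w' ≤ M := by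
  set B : ℝ := ∑ i, ∑ w, |unitBasis K i w| with hB
  have hB0 : 0 ≤ B := Finset.sum_nonneg fun _ _ => Finset.sum_nonneg fun _ _ => abs_nonneg _
  have hcard : (0 : ℝ) ≤ Fintype.card (InfinitePlace K) := Nat.cast_nonneg _
  refine ⟨2 * ((Fintype.card (InfinitePlace K) + 1) * B), by positivity, fun l hl => ?_⟩
  set avg := (∑ w', w'.mult * l w') * (Module.finrank ℚ K : ℝ)⁻¹ with havg
  have h1 : ∀ w : {w : InfinitePlace K // w ≠ w₀}, |w.1.mult * (l w.1 - avg)| ≤ B := by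
    intro w
    rw [havg, ← logProj_apply, ← (unitBasis K).sum_repr (logProj K l), Finset.sum_apply, hB]
    refine (Finset.abs_sum_le_sum_abs _ _).trans (Finset.sum_le_sum fun i _ => ?_)
    rw [Pi.smul_apply, smul_eq_mul, abs_mul, ← sum_unitCoeff]
    refine (mul_le_of_le_one_left (abs_nonneg _) (hl i)).trans ?_
    exact Finset.single_le_sum (f := fun w => |unitBasis K i w|) (fun _ _ => abs_nonneg _)
      (Finset.mem_univ w)
  have hd : (Module.finrank ℚ K : ℝ) ≠ 0 := by exact_mod_cast Module.finrank_pos.ne'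
  have h2 : ∑ w : InfinitePlace K, w.mult * (l w - avg) = 0 := by
    simp only [mul_sub, Finset.sum_sub_distrib, ← Finset.sum_mul]
    rw [← Nat.cast_sum, InfinitePlace.sum_mult_eq, havg]
    field_simp; ring
  have hmul : ∀ (w : InfinitePlace K) (y : ℝ), |y| ≤ |w.mult * y| := by
    intro w y
    rw [abs_mul, Nat.abs_cast]
    have : (1 : ℝ) ≤ w.mult := by exact_mod_cast w.one_le_mult
    exact le_mul_of_one_le_left (abs_nonneg _) this
  have h3 : ∀ w : InfinitePlace K, |l w - avg| ≤ (Fintype.card (InfinitePlace K) + 1) * B := by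
    intro w
    by_cases hw : w = w₀
    · refine (hmul w _).trans ?_
      have h4 : w.mult * (l w - avg) = -∑ w' ∈ Finset.univ.erase w, w'.mult * (l w' - avg) := by
        rw [← Finset.add_sum_erase _ _ (Finset.mem_univ w)] at h2
        linarith
      rw [h4, abs_neg]
      refine (Finset.abs_sum_le_sum_abs _ _).trans ?_
      refine (Finset.sum_le_card_nsmul _ _ B fun w' hw' => h1 ⟨w', ?_⟩).trans ?_
      · rw [← hw]; exact Finset.ne_of_mem_erase hw'
      · rw [nsmul_eq_mul]
        refine mul_le_mul_of_nonneg_right ?_ hB0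
        have : ((Finset.univ.erase w).card : ℝ) ≤ Fintype.card (InfinitePlace K) := by
          exact_mod_cast Finset.card_le_univ _
        linarith
    · refine (hmul w _).trans ((h1 ⟨w, hw⟩).trans ?_)
      nlinarith
  intro w w'
  have := abs_le.1 (h3 w)
  have := abs_le.1 (h3 w')
  linarith

/-- The smooth weight on the mixed space: a partition of unity for the action of the units, times
the bump function of the norm; it vanishes where the norm does. -/
noncomputable def weight (x : mixedSpace K) : ℝ :=
  ofLog (logWeight (unitCoeff K) InfinitePlace.mult) fun w => normAtPlace w x

/-- The weight in terms of the coordinates of `logMap x` in the unit lattice and the norm of `x`. -/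
theorem weight_of_ne {x : mixedSpace K} (hx : mixedEmbedding.norm x ≠ 0) :
    weight x = (∏ i, tent ((unitBasis K).repr (logMap x) i)) * bump (mixedEmbedding.norm x) := by
  have hpos : ∀ w, 0 < normAtPlace w x := fun w =>
    lt_of_le_of_ne (normAtPlace_nonneg w x) (mixedEmbedding.norm_ne_zero_iff.1 hx w).symm
  unfold weight ofLog
  rw [if_pos hpos, logWeight]
  congr 1
  · refine Finset.prod_congr rfl fun i _ => ?_
    rw [sum_unitCoeff, logMap_eq_logProj hx]
  · rw [mixedEmbedding.norm_apply, Real.exp_sum]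
    congr 1
    refine Finset.prod_congr rfl fun w _ => ?_
    rw [mul_comm, Real.exp_mul, Real.exp_log (hpos w), Real.rpow_natCast]

theorem weight_of_eq {x : mixedSpace K} (hx : mixedEmbedding.norm x = 0) : weight x = 0 := by
  obtain ⟨w, hw⟩ := mixedEmbedding.norm_eq_zero_iff.1 hx
  unfold weight ofLog
  rw [if_neg]
  intro h
  exact (h w).ne' hw

theorem normAtPlace_le_norm (w : InfinitePlace K) (x : mixedSpace K) : normAtPlace w x ≤ ‖x‖ := by
  rw [norm_eq_sup'_normAtPlace]
  exact Finset.le_sup' (fun w => normAtPlace w x) (Finset.mem_univ w)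

theorem weight_lip : ∃ C, ∀ x y : mixedSpace K, |weight x - weight y| ≤ C * ‖x - y‖ := by
  obtain ⟨M, hM0, hM⟩ := log_spread (K := K)
  obtain ⟨C₂, hC₂⟩ := logWeight_osc (fun w : InfinitePlace K => w.mult_pos) hM0 hM
  refine ⟨_, fun x y => ofLog_lipschitz (fun l => logWeight_nonneg l)
    (logWeight_le (fun w => w.mult_pos) hM0 hM) hC₂ (fun w => normAtPlace_nonneg w x)
    (fun w => normAtPlace_nonneg w y) fun w => ?_⟩
  have h1 := normAtPlace_add_le w (x - y) y
  have h2 := normAtPlace_add_le w (y - x) x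
  rw [sub_add_cancel] at h1 h2
  have h3 := normAtPlace_le_norm w (x - y)
  have h4 := normAtPlace_le_norm w (y - x)
  rw [norm_sub_rev] at h4
  rw [abs_le]; constructor <;> linarith

theorem weight_support : ∃ R, 0 ≤ R ∧ ∀ x : mixedSpace K, R < ‖x‖ → weight x = 0 := by
  obtain ⟨M, hM0, hM⟩ := log_spread (K := K)
  refine ⟨Real.exp M, (Real.exp_pos _).le, fun x hx => ?_⟩
  by_contra h
  refine absurd hx (not_lt.2 ?_)
  rw [norm_eq_sup'_normAtPlace]
  refine Finset.sup'_le _ _ fun w _ => ?_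
  unfold weight ofLog at h
  split_ifs at h with hpos
  · have := logWeight_support hM h w
    rwa [Real.log_le_iff_le_exp (hpos w)] at this
  · exact absurd rfl h

/-- Smoothly counting the elements of an ideal, with a power-saving error term. -/
theorem ideal_sum (J : (nonZeroDivisors (Ideal (𝓞 K)))) :
    (∀ r : ℝ, 1 ≤ r →
      {x : (J : Ideal (𝓞 K)) | weight (r⁻¹ • mixedEmbedding K ((x : 𝓞 K) : K)) ≠ 0}.Finite) ∧
    ∃ κ C : ℝ, 0 ≤ C ∧ ∀ r : ℝ, 1 ≤ r →
      |∑' x : (J : Ideal (𝓞 K)), weight (r⁻¹ • mixedEmbedding K ((x : 𝓞 K) : K))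
        - κ * r ^ Module.finrank ℚ K| ≤ C * r ^ Module.finrank ℚ K / r := by
  let I : (FractionalIdeal (nonZeroDivisors (𝓞 K)) K)ˣ := FractionalIdeal.mk0 K J
  let b := fractionalIdealLatticeBasis K I
  let T := b.equivFun.symm.toContinuousLinearEquiv
  obtain ⟨C, hC⟩ := weight_lip (K := K)
  obtain ⟨R, hR0, hR⟩ := weight_support (K := K)
  have hC0 : |weight (0 : mixedSpace K) - weight 0| ≤ C * ‖(0 : mixedSpace K) - 0‖ := hC 0 0
  have hlip : ∀ x y, |weight (T x) - weight (T y)| ≤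
      |C| * ‖T.toContinuousLinearMap‖ * ‖x - y‖ := by
    intro x y
    refine (hC _ _).trans ?_
    rw [← map_sub, mul_assoc]
    refine mul_le_mul (le_abs_self _) ?_ (norm_nonneg _) (abs_nonneg _)
    exact T.toContinuousLinearMap.le_opNorm _
  have hsupp : ∀ x, ‖T.symm.toContinuousLinearMap‖ * R < ‖x‖ → weight (T x) = 0 := by
    intro x hx
    refine hR _ ?_
    by_contra h
    have := T.symm.toContinuousLinearMap.le_opNorm (T x)
    simp only [ContinuousLinearEquiv.coe_coe, ContinuousLinearEquiv.symm_apply_apply] at this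
    have h2 := mul_le_mul_of_nonneg_left (not_lt.1 h) (norm_nonneg T.symm.toContinuousLinearMap)
    linarith
  have hmemI : ∀ y : K, y ∈ (I : FractionalIdeal (nonZeroDivisors (𝓞 K)) K) ↔
      ∃ x : 𝓞 K, x ∈ (J : Ideal (𝓞 K)) ∧ (x : K) = y := by
    intro y
    rw [FractionalIdeal.coe_mk0, FractionalIdeal.mem_coeIdeal]
  let e₁ : (J : Ideal (𝓞 K)) ≃ ((I : FractionalIdeal (nonZeroDivisors (𝓞 K)) K) : Submodule _ K) :=
    Equiv.ofBijective (fun x => ⟨((x : 𝓞 K) : K), (hmemI _).2 ⟨x, x.2, rfl⟩⟩) ⟨by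
      intro x y h
      have := congrArg Subtype.val h
      exact Subtype.ext (RingOfIntegers.ext this), by
      rintro ⟨y, hy⟩
      obtain ⟨x, hx, rfl⟩ := (hmemI y).1 (by exact hy)
      exact ⟨⟨x, hx⟩, rfl⟩⟩
  let e : (J : Ideal (𝓞 K)) ≃ (Module.Free.ChooseBasisIndex ℤ I → ℤ) :=
    e₁.trans (fractionalIdealBasis K I.1).equivFun.toEquiv
  have he : ∀ (r : ℝ) (x : (J : Ideal (𝓞 K))),
      r⁻¹ • mixedEmbedding K ((x : 𝓞 K) : K) = T (r⁻¹ • fun i => (e x i : ℝ)) := by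
    intro r x
    rw [map_smul]
    congr 1
    have h1 : (fractionalIdealBasis K I.1).equivFun.symm (e x) = e₁ x := by
      simp [e]
    have h2 : ((x : 𝓞 K) : K) = (e₁ x : K) := rfl
    rw [h2, ← h1, Module.Basis.equivFun_symm_apply]
    change _ = b.equivFun.symm _
    rw [Module.Basis.equivFun_symm_apply]
    simp only [AddSubmonoidClass.coe_finsetSum, map_sum]
    refine Finset.sum_congr rfl fun i _ => ?_
    change _ = _ • fractionalIdealLatticeBasis K I i
    rw [fractionalIdealLatticeBasis_apply, basisOfFractionalIdeal_apply]
    simp only [Int.cast_smul_eq_zsmul]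
    simp
  have hcard : Fintype.card (Module.Free.ChooseBasisIndex ℤ I) = Module.finrank ℚ K := by
    rw [← Module.finrank_eq_card_chooseBasisIndex, fractionalIdeal_rank, RingOfIntegers.rank]
  obtain ⟨hfin, κ, C', hC', hmain⟩ := lattice_sum (Θ := fun x => weight (T x)) (by positivity) hlip hsupp
  refine ⟨fun r hr => ?_, κ, C', hC', fun r hr => ?_⟩
  · simp only [he]
    exact (hfin r hr).preimage e.injective.injOn
  · have := hmain r hr
    rw [hcard] at this
    simp only [he]
    rwa [Equiv.tsum_eq e (fun v => weight (T (r⁻¹ • fun i => (v i : ℝ))))]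

end MixedSpace

end SmoothCount

/-! ### Summing the weight over the units -/

namespace SmoothCount

section UnitSum
open NumberField NumberField.InfinitePlace NumberField.Units NumberField.mixedEmbedding
  NumberField.Units.dirichletUnitTheorem

/-- The two integers `n` for which `tent (y + n)` may be nonzero. -/
noncomputable def tentSupp (y : ℝ) : Finset ℤ := {-⌊y⌋, -⌊y⌋ - 1}

theorem tent_eq_zero {y : ℝ} {n : ℤ} (hn : n ∉ tentSupp y) : tent (y + n) = 0 := by
  by_contra h
  have h1 := abs_lt.1 (abs_lt_of_tent_ne h)
  have h2 := Int.floor_le y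
  have h3 := Int.lt_floor_add_one y
  simp only [tentSupp, Finset.mem_insert, Finset.mem_singleton, not_or] at hn
  have h4 : n < -⌊y⌋ + 1 := by
    have : (n : ℝ) < ((-⌊y⌋ + 1 : ℤ) : ℝ) := by push_cast; linarith
    exact_mod_cast this
  have h5 : -⌊y⌋ - 2 < n := by
    have : ((-⌊y⌋ - 2 : ℤ) : ℝ) < n := by push_cast; linarith
    exact_mod_cast this
  omega

/-- The integer translates of the tent function form a partition of unity. -/
theorem sum_tent (y : ℝ) : ∑ n ∈ tentSupp y, tent (y + n) = 1 := by
  have h2 := Int.floor_le y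
  have h3 := Int.lt_floor_add_one y
  rw [tentSupp, Finset.sum_pair (by omega)]
  unfold tent
  push_cast
  rw [abs_of_nonneg (by linarith), abs_of_nonpos (by linarith), max_eq_right (by linarith),
    max_eq_right (by linarith)]
  ring

variable {K : Type*} [Field K] [NumberField K]

/-- Dirichlet's unit theorem as an equivalence. -/
noncomputable def unitsEquiv : torsion K × (Fin (rank K) → ℤ) ≃ (𝓞 K)ˣ :=
  Equiv.ofBijective (fun p => p.1 * ∏ i, fundSystem K i ^ p.2 i) ⟨fun p q h => by
      obtain ⟨_, _, h2⟩ := exist_unique_eq_mul_prod K (p.1 * ∏ i, fundSystem K i ^ p.2 i)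
      exact (h2 p rfl).trans (h2 q h).symm, fun u => by
      obtain ⟨p, hp, _⟩ := exist_unique_eq_mul_prod K u
      exact ⟨p, hp.symm⟩⟩

/-- A unit acts on the logarithmic coordinates by an integer translation. -/
theorem unitBasis_repr_smul {x : mixedSpace K} (hx : mixedEmbedding.norm x ≠ 0)
    (p : torsion K × (Fin (rank K) → ℤ)) (i : Fin (rank K)) :
    (unitBasis K).repr (logMap (unitsEquiv p • x)) i
      = (unitBasis K).repr (logMap x) i + p.2 i := by
  rw [logMap_unit_smul _ hx, map_add, Finsupp.add_apply, add_comm]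
  congr 1
  have h1 : logEmbedding K (Additive.ofMul (unitsEquiv p)) = ∑ j, (p.2 j : ℝ) • unitBasis K j := by
    change logEmbedding K (Additive.ofMul (p.1 * ∏ i, fundSystem K i ^ p.2 i)) = _
    rw [ofMul_mul, map_add, (logEmbedding_eq_zero_iff (K := K)).2 p.1.2, zero_add, ofMul_prod,
      map_sum]
    refine Finset.sum_congr rfl fun j _ => ?_
    rw [ofMul_zpow, map_zsmul, logEmbedding_fundSystem, unitBasis,
      Module.Basis.ofZLatticeBasis_apply, Int.cast_smul_eq_zsmul]
  rw [h1]
  simp [Finsupp.single_apply]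

/-- Summing the weight over a unit orbit leaves only the norm. -/
theorem hasSum_units {x : mixedSpace K} (hx : mixedEmbedding.norm x ≠ 0) :
    HasSum (fun u : (𝓞 K)ˣ => weight (u • x)) (torsionOrder K * bump (mixedEmbedding.norm x)) := by
  rw [← unitsEquiv.hasSum_iff]
  set y : Fin (rank K) → ℝ := fun i => (unitBasis K).repr (logMap x) i with hy
  have hw : ∀ p : torsion K × (Fin (rank K) → ℤ), weight (unitsEquiv p • x) =
      (∏ i, tent (y i + p.2 i)) * bump (mixedEmbedding.norm x) := by
    intro p
    rw [weight_of_ne (by rwa [norm_unit_smul]), norm_unit_smul]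
    congr 1
    exact Finset.prod_congr rfl fun i _ => by rw [unitBasis_repr_smul hx]
  have hfun : (fun u : (𝓞 K)ˣ => weight (u • x)) ∘ unitsEquiv
      = fun p => (∏ i, tent (y i + p.2 i)) * bump (mixedEmbedding.norm x) := funext hw
  rw [hfun]
  refine HasSum.mul_right _ ?_
  have := Fintype.ofFinite (torsion K)
  let S : Finset (torsion K × (Fin (rank K) → ℤ)) :=
    Finset.univ ×ˢ Fintype.piFinset fun i => tentSupp (y i)
  have h1 : ∑ p ∈ S, ∏ i, tent (y i + p.2 i) = torsionOrder K := by
    rw [Finset.sum_product]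
    simp only
    have := Finset.prod_univ_sum (fun i => tentSupp (y i)) fun i n => tent (y i + n)
    rw [← this]
    simp [sum_tent, torsionOrder, Nat.card_eq_fintype_card]
  rw [← h1]
  refine hasSum_sum_of_ne_finset_zero fun p hp => ?_
  simp only [S, Finset.mem_product, Finset.mem_univ, true_and, Fintype.mem_piFinset,
    not_forall] at hp
  obtain ⟨i, hi⟩ := hp
  exact Finset.prod_eq_zero (Finset.mem_univ i) (tent_eq_zero hi)

theorem norm_scale (r : ℝ) (x : 𝓞 K) :
    mixedEmbedding.norm (r⁻¹ • mixedEmbedding K (x : K)) =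
      |r|⁻¹ ^ Module.finrank ℚ K * Ideal.absNorm (Ideal.span {x}) := by
  rw [mixedEmbedding.norm_smul, mixedEmbedding.norm_eq_norm, Ideal.absNorm_span_singleton, abs_inv]
  congr 1
  rw [← Algebra.coe_norm_int]
  simp

/-- The generators of a principal ideal form one orbit of the units. -/
theorem tsum_generators (J : (nonZeroDivisors (Ideal (𝓞 K)))) {r : ℝ} (hr0 : 0 < r)
    (I : Ideal (𝓞 K)) :
    ∑' x : {x : (J : Ideal (𝓞 K)) // Ideal.span {(x : 𝓞 K)} = I},
      weight (r⁻¹ • mixedEmbedding K ((x.1 : 𝓞 K) : K)) =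
      torsionOrder K * if (J : Ideal (𝓞 K)) ∣ I ∧ I.IsPrincipal then
        bump (Ideal.absNorm I / r ^ Module.finrank ℚ K) else 0 := by
  have hzero : weight (r⁻¹ • mixedEmbedding K ((0 : 𝓞 K) : K)) = 0 := by
    refine weight_of_eq ?_
    rw [norm_scale]; simp
  by_cases hI : (J : Ideal (𝓞 K)) ∣ I ∧ I.IsPrincipal
  · rw [if_pos hI]
    obtain ⟨hJI, ⟨x₀, hx₀⟩⟩ := hI
    have hx₀J : x₀ ∈ (J : Ideal (𝓞 K)) := by
      refine Ideal.le_of_dvd hJI ?_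
      rw [hx₀]; exact Ideal.mem_span_singleton_self x₀
    have hx₀' : I = Ideal.span {x₀} := hx₀
    by_cases h0 : x₀ = 0
    · have : Ideal.absNorm I = 0 := by rw [hx₀', h0]; simp
      rw [this]
      have hb : bump (((0 : ℕ) : ℝ) / r ^ Module.finrank ℚ K) = 0 := by simp [bump]
      rw [hb, mul_zero]
      refine (tsum_congr fun c => ?_).trans tsum_zero
      have hc : Ideal.span {((c.1 : (J : Ideal (𝓞 K))) : 𝓞 K)} = I := c.2
      replace hc := Ideal.span_singleton_eq_bot.1 (hc.trans
        (hx₀'.trans (Ideal.span_singleton_eq_bot.2 h0)))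
      change weight (r⁻¹ • mixedEmbedding K (((c.1 : (J : Ideal (𝓞 K))) : 𝓞 K) : K)) = 0
      rw [hc]; exact hzero
    · let e : (𝓞 K)ˣ ≃ {x : (J : Ideal (𝓞 K)) // Ideal.span {(x : 𝓞 K)} = I} := Equiv.ofBijective
        (fun u => ⟨⟨u * x₀, Ideal.mul_mem_left _ _ hx₀J⟩, by
          change Ideal.span {(u : 𝓞 K) * x₀} = I
          rw [hx₀', Ideal.span_singleton_mul_left_unit u.isUnit]⟩) ⟨by
          intro u v h
          have := congrArg (fun z => ((z.1 : (J : Ideal (𝓞 K))) : 𝓞 K)) h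
          exact Units.ext (mul_right_cancel₀ h0 this), by
          rintro ⟨⟨x, hx⟩, hxI⟩
          have hx2 : Ideal.span {x} = Ideal.span {x₀} := hxI.trans hx₀'
          obtain ⟨u, hu⟩ := Ideal.span_singleton_eq_span_singleton.1 hx2.symm
          refine ⟨u, ?_⟩
          simp only [Subtype.mk.injEq]
          rw [← hu, mul_comm]⟩
      rw [← e.tsum_eq]
      have hne : mixedEmbedding.norm (r⁻¹ • mixedEmbedding K (x₀ : K)) ≠ 0 := by
        rw [norm_scale]
        have : Ideal.absNorm (Ideal.span {x₀}) ≠ 0 := by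
          rw [Ne, Ideal.absNorm_eq_zero_iff]
          simpa using h0
        positivity
      have := (hasSum_units hne).tsum_eq
      rw [norm_scale, ← hx₀', abs_of_pos hr0, inv_pow, mul_comm, mul_comm (_⁻¹), ← div_eq_mul_inv,
        mul_comm] at this
      rw [← this]
      refine tsum_congr fun u => ?_
      change weight (r⁻¹ • mixedEmbedding K (((u : 𝓞 K) * x₀ : 𝓞 K) : K)) = _
      congr 1
      rw [unitSMul_smul, mul_smul_comm, ← map_mul]
      rfl
  · rw [if_neg hI, mul_zero]
    have : IsEmpty {x : (J : Ideal (𝓞 K)) // Ideal.span {(x : 𝓞 K)} = I} := by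
      refine ⟨fun ⟨x, hx⟩ => hI ⟨?_, ?_⟩⟩
      · rw [← hx, Ideal.dvd_span_singleton]; exact x.2
      · exact ⟨x, hx.symm⟩
    exact tsum_empty

/-- The smoothed sum over an ideal, grouped by the principal ideals its elements generate. -/
theorem tsum_ideal (J : (nonZeroDivisors (Ideal (𝓞 K)))) {r : ℝ} (hr : 1 ≤ r) :
    ∑' x : (J : Ideal (𝓞 K)), weight (r⁻¹ • mixedEmbedding K ((x : 𝓞 K) : K)) =
      torsionOrder K * ∑' I : Ideal (𝓞 K), if (J : Ideal (𝓞 K)) ∣ I ∧ I.IsPrincipal then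
        bump (Ideal.absNorm I / r ^ Module.finrank ℚ K) else 0 := by
  have hr0 : 0 < r := by linarith
  set f : ↥(J : Ideal (𝓞 K)) → ℝ := fun x => weight (r⁻¹ • mixedEmbedding K ((x : 𝓞 K) : K)) with hf
  have hsum : Summable f := summable_of_hasFiniteSupport ((ideal_sum J).1 r hr)
  rw [← (hsum.hasSum.tsum_fiberwise fun x => Ideal.span {(x : 𝓞 K)}).tsum_eq, ← tsum_mul_left]
  exact tsum_congr fun I => tsum_generators J hr0 I

end UnitSum

end SmoothCount

/-! ### Smoothed counting of ideals -/

namespace SmoothCount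

section IdealCount
open NumberField NumberField.Units

variable (K : Type*) [Field K] [NumberField K]

/-- The number of integral ideals of norm `n`. -/
noncomputable def idealCount (n : ℕ) : ℝ := Nat.card {I : Ideal (𝓞 K) // Ideal.absNorm I = n}

/-- The smoothed ideal counting function. -/
noncomputable def smoothCount (X : ℝ) : ℝ := ∑' n : ℕ, idealCount K n * bump (n / X)

variable {K}

theorem summable_bump {X : ℝ} (hX : 0 < X) (P : (nonZeroDivisors (Ideal (𝓞 K))) → Prop) :
    Summable fun I : (nonZeroDivisors (Ideal (𝓞 K))) =>
      if P I then bump (Ideal.absNorm (I : Ideal (𝓞 K)) / X) else 0 := by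
  refine summable_of_hasFiniteSupport ?_
  refine (Ideal.finite_setOfPred_absNorm_le₀ (S := 𝓞 K) ⌊X⌋₊).subset fun I hI => ?_
  rw [Function.mem_support] at hI
  change Ideal.absNorm (I : Ideal (𝓞 K)) ≤ ⌊X⌋₊
  refine Nat.le_floor ?_
  by_contra h
  push Not at h
  refine hI ?_
  split_ifs
  · exact bump_eq_zero (by rw [le_div_iff₀ hX]; linarith)
  · rfl

theorem tsum_nonZeroDivisors (X : ℝ) :
    ∑' I : (nonZeroDivisors (Ideal (𝓞 K))), bump (Ideal.absNorm (I : Ideal (𝓞 K)) / X) =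
      ∑' I : Ideal (𝓞 K), bump (Ideal.absNorm I / X) := by
  refine Function.Injective.tsum_eq (f := fun I : Ideal (𝓞 K) => bump (Ideal.absNorm I / X))
    Subtype.val_injective fun I hI => ?_
  refine ⟨⟨I, mem_nonZeroDivisors_of_ne_zero ?_⟩, rfl⟩
  rintro rfl
  simp [bump] at hI

theorem smoothCount_eq_tsum {X : ℝ} (hX : 0 < X) :
    smoothCount K X = ∑' I : Ideal (𝓞 K), bump (Ideal.absNorm I / X) := by
  have hs : Summable fun I : Ideal (𝓞 K) => bump (Ideal.absNorm I / X) := by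
    refine (Function.Injective.summable_iff (f := fun I : Ideal (𝓞 K) => bump (Ideal.absNorm I / X))
      (g := ((↑) : (nonZeroDivisors (Ideal (𝓞 K))) → Ideal (𝓞 K)))
      Subtype.val_injective fun I hI => ?_).1 ?_
    · by_cases h : I = 0
      · simp [h, bump]
      · exact absurd ⟨⟨I, mem_nonZeroDivisors_of_ne_zero h⟩, rfl⟩ hI
    · have h := summable_bump (K := K) hX fun _ => True
      simp only [if_true] at h
      exact h
  rw [← (hs.hasSum.tsum_fiberwise fun I => Ideal.absNorm I).tsum_eq, smoothCount]
  refine tsum_congr fun n => ?_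
  have h1 : ∀ I : (fun I : Ideal (𝓞 K) => Ideal.absNorm I) ⁻¹' {n},
      bump (Ideal.absNorm (I : Ideal (𝓞 K)) / X) = bump (n / X) := by
    intro I
    have : Ideal.absNorm (I : Ideal (𝓞 K)) = n := I.2
    rw [this]
  rw [tsum_congr h1, tsum_const, nsmul_eq_mul]
  rfl

/-- The smoothed count of the ideals in one ideal class: multiplication by an ideal `J` of the inverse
class turns them into the principal ideals divisible by `J`. -/
theorem class_sum (c : ClassGroup (𝓞 K)) : ∃ κ C : ℝ, 0 ≤ C ∧ ∀ X : ℝ, 1 ≤ X →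
    |∑' I : (nonZeroDivisors (Ideal (𝓞 K))), (if ClassGroup.mk0 I = c then
      bump (Ideal.absNorm (I : Ideal (𝓞 K)) / X) else 0) - κ * X| ≤
      C * X ^ (1 - 1 / (Module.finrank ℚ K : ℝ)) := by
  obtain ⟨J, hJ⟩ := ClassGroup.mk0_surjective c⁻¹
  obtain ⟨-, κ, C, hC, h⟩ := ideal_sum J
  set d := Module.finrank ℚ K with hd
  have hd0 : d ≠ 0 := Module.finrank_pos.ne'
  have hw : (0 : ℝ) < torsionOrder K := by exact_mod_cast torsionOrder_pos K
  set N : ℝ := ((Ideal.absNorm (J : Ideal (𝓞 K)) : ℕ) : ℝ) with hN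
  have hN1 : 1 ≤ N := by
    rw [hN]
    exact_mod_cast Ideal.absNorm_pos_of_nonZeroDivisors J
  refine ⟨κ * N / torsionOrder K, C * N ^ (1 - 1 / (d : ℝ)) / torsionOrder K, by positivity,
    fun X hX => ?_⟩
  have hXN : 1 ≤ X * N := by nlinarith
  set r : ℝ := (X * N) ^ ((d : ℝ)⁻¹) with hr
  have hr1 : 1 ≤ r := Real.one_le_rpow hXN (by positivity)
  have hrd : r ^ d = X * N := Real.rpow_inv_natCast_pow (by positivity) hd0
  have key := h r hr1
  rw [tsum_ideal J hr1, hrd] at key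
  have hbij : ∑' I : Ideal (𝓞 K), (if (J : Ideal (𝓞 K)) ∣ I ∧ I.IsPrincipal then
        bump (Ideal.absNorm I / (X * N)) else 0) =
      ∑' I : (nonZeroDivisors (Ideal (𝓞 K))), (if ClassGroup.mk0 I = c then
      bump (Ideal.absNorm (I : Ideal (𝓞 K)) / X) else 0) := by
    have hinj : Function.Injective fun I : (nonZeroDivisors (Ideal (𝓞 K))) =>
        ((J * I : (nonZeroDivisors (Ideal (𝓞 K)))) : Ideal (𝓞 K)) :=
      Subtype.val_injective.comp (mul_right_injective J)
    rw [← hinj.tsum_eq]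
    · refine tsum_congr fun I => ?_
      have h1 : (J : Ideal (𝓞 K)) ∣ ((J * I : (nonZeroDivisors (Ideal (𝓞 K)))) : Ideal (𝓞 K)) := by
        rw [Submonoid.coe_mul]; exact dvd_mul_right _ _
      have h2 : Submodule.IsPrincipal ((J * I : (nonZeroDivisors (Ideal (𝓞 K)))) : Ideal (𝓞 K)) ↔
          ClassGroup.mk0 I = c := by
        rw [← ClassGroup.mk0_eq_one_iff (SetLike.coe_mem _)]
        change ClassGroup.mk0 (J * I) = 1 ↔ _
        rw [map_mul, hJ, inv_mul_eq_one, eq_comm]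
      simp only [h1, h2, true_and]
      congr 2
      rw [Submonoid.coe_mul, map_mul, Nat.cast_mul, ← hN]
      field_simp
    · intro I hI
      rw [Function.mem_support] at hI
      have h1 : (J : Ideal (𝓞 K)) ∣ I := by
        by_contra hh
        exact hI (if_neg fun hh2 => hh hh2.1)
      obtain ⟨I', rfl⟩ := h1
      refine ⟨⟨I', mem_nonZeroDivisors_of_ne_zero ?_⟩, rfl⟩
      rintro rfl
      simp [bump] at hI
  rw [hbij] at key
  set S := ∑' I : (nonZeroDivisors (Ideal (𝓞 K))), (if ClassGroup.mk0 I = c then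
      bump (Ideal.absNorm (I : Ideal (𝓞 K)) / X) else 0)
  have e1 : S - κ * N / torsionOrder K * X
      = (torsionOrder K * S - κ * (X * N)) / torsionOrder K := by
    field_simp
  have e2 : C * (X * N) / r = C * N ^ (1 - 1 / (d : ℝ)) * X ^ (1 - 1 / (d : ℝ)) := by
    rw [mul_assoc, mul_comm (N ^ _), ← Real.mul_rpow (by positivity) (by positivity),
      Real.rpow_sub (by positivity), Real.rpow_one, one_div, mul_div_assoc]
  rw [e1, abs_div, abs_of_pos hw, div_mul_eq_mul_div, ← e2]
  gcongr

variable (K) in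
/-- The smoothed number of ideals is linear up to a power-saving error. -/
theorem smoothCount_asymp : ∃ κ C : ℝ, 0 ≤ C ∧ ∀ X : ℝ, 1 ≤ X →
    |smoothCount K X - κ * X| ≤ C * X ^ (1 - 1 / (Module.finrank ℚ K : ℝ)) := by
  choose κ C hC h using class_sum (K := K)
  refine ⟨∑ c, κ c, ∑ c, C c, Finset.sum_nonneg fun c _ => hC c, fun X hX => ?_⟩
  have e : smoothCount K X = ∑ c : ClassGroup (𝓞 K),
      ∑' I : (nonZeroDivisors (Ideal (𝓞 K))), (if ClassGroup.mk0 I = c then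
      bump (Ideal.absNorm (I : Ideal (𝓞 K)) / X) else 0) := by
    rw [smoothCount_eq_tsum (by linarith), ← tsum_nonZeroDivisors, ← Summable.tsum_finsetSum]
    · refine tsum_congr fun I => ?_
      simp
    · intro c _
      exact summable_bump (by linarith) fun I => ClassGroup.mk0 I = c
  rw [e, Finset.sum_mul, Finset.sum_mul, ← Finset.sum_sub_distrib]
  exact (Finset.abs_sum_le_sum_abs _ _).trans (Finset.sum_le_sum fun c _ => h c X hX)

end IdealCount

end SmoothCount

/-! ### Analytic continuation of the Dedekind zeta function -/

namespace SmoothCount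

section Continuation
open MeasureTheory Set

/-- The Mellin transform of the weight `X ↦ bump (n / X)`. -/
theorem integral_bump {n : ℕ} (hn : n ≠ 0) {s : ℂ} (hs : 1 < s.re) :
    IntegrableOn (fun X : ℝ => (bump (n / X) : ℂ) * (X : ℂ) ^ (-s - 1)) (Ioi 1) ∧
    ∫ X in Ioi (1 : ℝ), (bump (n / X) : ℂ) * (X : ℂ) ^ (-s - 1) =
      (n : ℂ) ^ (-s) / ((s + 1) * (s + 2)) := by
  have hn1 : (1 : ℝ) ≤ n := by exact_mod_cast Nat.one_le_iff_ne_zero.2 hn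
  have hn0 : (0 : ℝ) < n := by linarith
  have hnc : (n : ℂ) ≠ 0 := by exact_mod_cast hn
  have e1 : ∀ X ∈ Ioi (n : ℝ), (n : ℂ) * (X : ℂ) ^ (-s - 2) - (n : ℂ) ^ 2 * (X : ℂ) ^ (-s - 3) =
      (bump (n / X) : ℂ) * (X : ℂ) ^ (-s - 1) := by
    intro X hX
    have hX0 : (0 : ℝ) < X := hn0.trans hX
    have hXc : (X : ℂ) ≠ 0 := by exact_mod_cast hX0.ne'
    rw [bump_of_le (by rw [div_le_one hX0]; exact le_of_lt hX)]
    have p1 : (X : ℂ) ^ (-s - 2) = (X : ℂ) ^ (-s - 3) * X := by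
      rw [show -s - 2 = -s - 3 + 1 by ring, Complex.cpow_add _ _ hXc, Complex.cpow_one]
    have p2 : (X : ℂ) ^ (-s - 1) = (X : ℂ) ^ (-s - 3) * X * X := by
      rw [show -s - 1 = -s - 2 + 1 by ring, Complex.cpow_add _ _ hXc, Complex.cpow_one, p1]
    rw [p1, p2]
    push_cast
    field_simp
  have i2 := (integrableOn_Ioi_cpow_of_lt (a := -s - 2) (by simp; linarith) hn0).const_mul (n : ℂ)
  have i3 := (integrableOn_Ioi_cpow_of_lt (a := -s - 3) (by simp; linarith) hn0).const_mul
    ((n : ℂ) ^ 2)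
  have i1 : IntegrableOn (fun X : ℝ => (bump (n / X) : ℂ) * (X : ℂ) ^ (-s - 1)) (Ioi (n : ℝ)) :=
    IntegrableOn.congr_fun (i2.sub i3) e1 measurableSet_Ioi
  have z : ∀ X ∈ Ioi (1 : ℝ), X ∉ Ioi (n : ℝ) →
      (bump (n / X) : ℂ) * (X : ℂ) ^ (-s - 1) = 0 := by
    intro X hX hX2
    have hX0 : (0 : ℝ) < X := lt_trans one_pos hX
    rw [mem_Ioi, not_lt] at hX2
    rw [bump_eq_zero (by rw [one_le_div hX0]; exact hX2)]
    simp
  have hsub : Ioi (n : ℝ) ⊆ Ioi 1 := Ioi_subset_Ioi hn1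
  refine ⟨?_, ?_⟩
  · exact i1.of_forall_sdiff_eq_zero measurableSet_Ioi fun X hX => z X hX.1 hX.2
  · rw [setIntegral_eq_of_subset_of_forall_sdiff_eq_zero measurableSet_Ioi hsub
      fun X hX => z X hX.1 hX.2, ← setIntegral_congr_fun measurableSet_Ioi e1,
      integral_sub i2 i3, integral_const_mul, integral_const_mul,
      integral_Ioi_cpow_of_lt (by simp; linarith) hn0,
      integral_Ioi_cpow_of_lt (by simp; linarith) hn0]
    have h1 : s + 1 ≠ 0 := fun h => by
      have := congrArg Complex.re h
      simp at this; linarith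
    have h2 : s + 2 ≠ 0 := fun h => by
      have := congrArg Complex.re h
      simp at this; linarith
    have p1 : (n : ℂ) ^ (-s - 2 + 1) = (n : ℂ) ^ (-(s + 2)) * n := by
      rw [show -s - 2 + 1 = -(s + 2) + 1 by ring, Complex.cpow_add _ _ hnc, Complex.cpow_one]
    have p2 : (n : ℂ) ^ (-s) = (n : ℂ) ^ (-(s + 2)) * n * n := by
      rw [show -s = -s - 2 + 1 + 1 by ring, Complex.cpow_add _ _ hnc, Complex.cpow_one, p1]
    rw [show -s - 3 + 1 = -(s + 2) by ring]
    simp only [Complex.ofReal_natCast]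
    rw [p1, p2, show -s - 2 + 1 = -(s + 1) by ring]
    field_simp
    ring

variable {a : ℕ → ℝ} {θ κ C : ℝ}

theorem measurable_smooth (ha : ∀ n, 0 ≤ a n) :
    AEStronglyMeasurable (fun X : ℝ => ∑' n : ℕ, a n * bump (n / X))
      (volume.restrict (Ioi (0 : ℝ))) := by
  have hb : Measurable bump := by unfold bump; fun_prop
  have h : Measurable fun X : ℝ => (∑' n : ℕ, ENNReal.ofReal (a n * bump (n / X))).toReal := by
    refine Measurable.ennreal_toReal (Measurable.tsum fun n => ?_)
    exact ((hb.comp (measurable_const.div measurable_id)).const_mul _).ennreal_ofReal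
  refine h.aestronglyMeasurable.congr ?_
  filter_upwards [ae_restrict_mem measurableSet_Ioi] with X hX
  rw [ENNReal.tsum_toReal_eq fun n => ENNReal.ofReal_ne_top]
  refine tsum_congr fun n => ENNReal.toReal_ofReal (mul_nonneg (ha n) (bump_nonneg ?_))
  exact div_nonneg n.cast_nonneg (le_of_lt hX)

/-- The Dirichlet series as a Mellin transform of the smoothed summatory function. -/
theorem integral_smooth (ha : ∀ n, 0 ≤ a n) {s : ℂ} (hs : 1 < s.re)
    (hsum : LSeriesSummable (fun n => (a n : ℂ)) s) :
    ∫ X in Ioi (1 : ℝ), ((∑' n : ℕ, a n * bump (n / X) : ℝ) : ℂ) * (X : ℂ) ^ (-s - 1) =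
      LSeries (fun n => (a n : ℂ)) s / ((s + 1) * (s + 2)) := by
  set F : ℕ → ℝ → ℂ := fun n X => (a n : ℂ) * ((bump (n / X) : ℂ) * (X : ℂ) ^ (-s - 1)) with hF
  have hbz : ∀ X : ℝ, bump ((0 : ℕ) / X) = 0 := by simp [bump]
  have hF0 : F 0 = 0 := by
    funext X
    simp only [hF, hbz]
    simp
  have hintg : ∀ n, Integrable (F n) (volume.restrict (Ioi 1)) := by
    intro n
    rcases eq_or_ne n 0 with rfl | hn
    · rw [hF0]; exact integrable_zero _ _ _
    · exact (integral_bump hn hs).1.const_mul _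
  have hval : ∀ n, ∫ X in Ioi (1 : ℝ), F n X =
      LSeries.term (fun n => (a n : ℂ)) s n / ((s + 1) * (s + 2)) := by
    intro n
    rcases eq_or_ne n 0 with rfl | hn
    · simp [hF0]
    · simp only [hF]
      rw [integral_const_mul, (integral_bump hn hs).2, LSeries.term_of_ne_zero hn,
        Complex.cpow_neg]
      ring
  have hs' : 1 < ((s.re : ℝ) : ℂ).re := by simpa using hs
  have hnorm : ∀ n, ∫ X in Ioi (1 : ℝ), ‖F n X‖ =
      ‖LSeries.term (fun n => (a n : ℂ)) s n‖ / ((s.re + 1) * (s.re + 2)) := by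
    intro n
    rcases eq_or_ne n 0 with rfl | hn
    · simp [hF0]
    · have h1 := (integral_bump hn hs').2
      have h2 : ∫ X in Ioi (1 : ℝ), (bump (n / X) : ℂ) * (X : ℂ) ^ (-(s.re : ℂ) - 1) =
          ∫ X in Ioi (1 : ℝ), ((bump (n / X) * X ^ (-s.re - 1) : ℝ) : ℂ) := by
        refine setIntegral_congr_fun measurableSet_Ioi fun X hX => ?_
        have hX0 : (0 : ℝ) ≤ X := le_trans zero_le_one (le_of_lt hX)
        rw [Complex.ofReal_mul, Complex.ofReal_cpow hX0]
        push_cast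
        rfl
      have h3 : ∫ X in Ioi (1 : ℝ), (bump (n / X) * X ^ (-s.re - 1)) =
          (n : ℝ) ^ (-s.re) / ((s.re + 1) * (s.re + 2)) := by
        rw [h2, integral_complex_ofReal] at h1
        apply Complex.ofReal_injective
        rw [h1, Complex.ofReal_div, Complex.ofReal_cpow n.cast_nonneg]
        push_cast
        rfl
      have h4 : ∫ X in Ioi (1 : ℝ), ‖F n X‖ =
          ∫ X in Ioi (1 : ℝ), a n * (bump (n / X) * X ^ (-s.re - 1)) := by
        refine setIntegral_congr_fun measurableSet_Ioi fun X hX => ?_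
        have hX0 : (0 : ℝ) < X := lt_trans zero_lt_one hX
        simp only [hF]
        rw [norm_mul, norm_mul, Complex.norm_cpow_eq_rpow_re_of_pos hX0, Complex.norm_real,
          Complex.norm_real, Real.norm_of_nonneg (ha n),
          Real.norm_of_nonneg (bump_nonneg (div_nonneg n.cast_nonneg hX0.le))]
        simp
      rw [h4, integral_const_mul, h3, LSeries.norm_term_eq, if_neg hn, Complex.norm_real,
        Real.norm_of_nonneg (ha n), Real.rpow_neg n.cast_nonneg]
      ring
  have key := hasSum_integral_of_summable_integral_norm hintg (by
    simp only [hnorm]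
    exact hsum.norm.div_const _)
  have e : ∫ X in Ioi (1 : ℝ), ∑' n, F n X =
      ∫ X in Ioi (1 : ℝ), ((∑' n : ℕ, a n * bump (n / X) : ℝ) : ℂ) * (X : ℂ) ^ (-s - 1) := by
    refine setIntegral_congr_fun measurableSet_Ioi fun X hX => ?_
    simp only [hF]
    rw [Complex.ofReal_tsum, ← tsum_mul_right]
    refine tsum_congr fun n => ?_
    push_cast
    ring
  rw [← e, ← key.tsum_eq]
  simp only [hval]
  rw [tsum_div_const]
  rfl

/-- A Dirichlet series whose smoothed summatory function is `κ X + O(X ^ θ)` has a continuation to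
`re s > θ` with a simple pole at `1`, of polynomial growth in vertical strips. -/
theorem exists_continuation (ha : ∀ n, 0 ≤ a n)
    (hsum : ∀ s : ℂ, 1 < s.re → LSeriesSummable (fun n => (a n : ℂ)) s)
    (hθ0 : 0 ≤ θ) (hθ1 : θ < 1) (hC : 0 ≤ C)
    (has : ∀ X : ℝ, 1 ≤ X → |∑' n : ℕ, a n * bump (n / X) - κ * X| ≤ C * X ^ θ) :
    ∃ H : ℂ → ℂ, DifferentiableOn ℂ H {s | θ < s.re} ∧
      (∀ σ₀ : ℝ, θ < σ₀ → ∃ B > 0, ∀ s : ℂ, σ₀ < s.re → s.re ≤ 3 → ‖H s‖ ≤ B * (1 + |s.im|) ^ 3) ∧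
      ∀ s : ℂ, 1 < s.re → H s = (s - 1) * LSeries (fun n => (a n : ℂ)) s := by
  set E : ℝ → ℝ := fun X => ∑' n : ℕ, a n * bump (n / X) - κ * X with hE
  set f : ℝ → ℂ := (Ioi (1 : ℝ)).indicator fun X => (E X : ℂ) with hf
  have hEm : AEStronglyMeasurable E (volume.restrict (Ioi (0 : ℝ))) :=
    (measurable_smooth ha).sub (by fun_prop)
  have hfm : AEStronglyMeasurable f volume :=
    (aestronglyMeasurable_indicator_iff measurableSet_Ioi).2
      (Complex.continuous_ofReal.comp_aestronglyMeasurable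
        (hEm.mono_measure (Measure.restrict_mono (Ioi_subset_Ioi zero_le_one) le_rfl)))
  have hfb : ∀ X : ℝ, 0 < X → ‖f X‖ ≤ C * X ^ θ := by
    intro X hX
    rw [hf, indicator]
    split_ifs with h
    · rw [Complex.norm_real]
      exact has X (le_of_lt h)
    · rw [norm_zero]; positivity
  have hfl : LocallyIntegrableOn f (Ioi 0) := by
    have hg : LocallyIntegrableOn (fun X : ℝ => C * X ^ θ) (Ioi 0) :=
      ContinuousOn.locallyIntegrableOn
        (continuousOn_const.mul (Real.continuous_rpow_const hθ0).continuousOn) measurableSet_Ioi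
    refine hg.mono hfm ?_
    refine Eventually.of_forall fun X => ?_
    rcases le_or_gt X 0 with hX | hX
    · rw [hf, indicator_of_notMem (notMem_Ioi.2 (by linarith)), norm_zero]
      exact norm_nonneg _
    · exact (hfb X hX).trans (le_abs_self _)
  have hmel : ∀ s : ℂ, mellin f (-s) = ∫ X in Ioi (1 : ℝ), (E X : ℂ) * (X : ℂ) ^ (-s - 1) := by
    intro s
    rw [mellin, setIntegral_eq_of_subset_of_forall_sdiff_eq_zero measurableSet_Ioi
      (Ioi_subset_Ioi zero_le_one)]
    · refine setIntegral_congr_fun measurableSet_Ioi fun X hX => ?_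
      simp only [hf, indicator_of_mem hX, smul_eq_mul]
      ring
    · intro X hX
      simp [hf, indicator_of_notMem hX.2]
  have hmd : ∀ s : ℂ, θ < s.re → DifferentiableAt ℂ (mellin f) (-s) := by
    intro s hs
    refine mellin_differentiableAt_of_isBigO_rpow (a := -θ) (b := -s.re - 1) hfl ?_
      (by simpa using hs) ?_ (by simp)
    · refine Asymptotics.IsBigO.of_bound C ?_
      filter_upwards [eventually_gt_atTop 0] with X hX
      rw [neg_neg, Real.norm_of_nonneg (by positivity : (0 : ℝ) ≤ X ^ θ)]
      exact hfb X hX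
    · refine (Asymptotics.isBigO_zero _ _).congr' ?_ EventuallyEq.rfl
      filter_upwards [nhdsWithin_le_nhds (Iio_mem_nhds (zero_lt_one' ℝ))] with X hX
      rw [hf, indicator_of_notMem (notMem_Ioi.2 (le_of_lt hX))]
  have hbd : ∀ s : ℂ, θ < s.re → ‖mellin f (-s)‖ ≤ C / (s.re - θ) := by
    intro s hs
    have hi : IntegrableOn (fun X : ℝ => C * X ^ (θ - s.re - 1)) (Ioi 1) :=
      (integrableOn_Ioi_rpow_of_lt (by linarith) one_pos).const_mul C
    rw [hmel]
    refine (norm_integral_le_of_norm_le hi ?_).trans (le_of_eq ?_)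
    · filter_upwards [ae_restrict_mem measurableSet_Ioi] with X hX
      have hX0 : (0 : ℝ) < X := lt_trans zero_lt_one hX
      rw [norm_mul, Complex.norm_cpow_eq_rpow_re_of_pos hX0, Complex.norm_real]
      refine (mul_le_mul_of_nonneg_right (has X (le_of_lt hX)) (by positivity)).trans (le_of_eq ?_)
      rw [mul_assoc, ← Real.rpow_add hX0]
      congr 2
      simp
      ring
    · rw [integral_const_mul, integral_Ioi_rpow_of_lt (by linarith) one_pos, Real.one_rpow]
      have : s.re - θ ≠ 0 := by linarith
      have h2 : θ - s.re - 1 + 1 ≠ 0 := fun h => this (by linarith)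
      rw [mul_div_assoc', div_eq_div_iff h2 this]
      ring
  refine ⟨fun s => (s + 1) * (s + 2) * (κ + (s - 1) * mellin f (-s)), ?_, ?_, ?_⟩
  · intro s hs
    have h1 : DifferentiableAt ℂ (fun s => mellin f (-s)) s :=
      DifferentiableAt.comp (g := mellin f) (f := fun s : ℂ => -s) s (hmd s hs) (by fun_prop)
    have h2 : DifferentiableAt ℂ (fun s : ℂ => (s + 1) * (s + 2)) s := by fun_prop
    have h3 : DifferentiableAt ℂ (fun s : ℂ => s - 1) s := by fun_prop
    exact (h2.mul ((differentiableAt_const _).add (h3.mul h1))).differentiableWithinAt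
  · intro σ₀ hσ
    refine ⟨20 * (|κ| + 2 * (C / (σ₀ - θ))) + 1, ?_, fun s hs hs3 => ?_⟩
    · have : 0 ≤ C / (σ₀ - θ) := div_nonneg hC (by linarith)
      positivity
    · have hb := (hbd s (hσ.trans hs)).trans
        (div_le_div_of_nonneg_left hC (sub_pos.2 hσ) (by linarith : σ₀ - θ ≤ s.re - θ))
      set D := C / (σ₀ - θ) with hD
      have hD0 : 0 ≤ D := div_nonneg hC (by linarith)
      set y := |s.im| with hy
      have hy0 : 0 ≤ y := abs_nonneg _
      have n1 : ‖s + 1‖ ≤ 4 * (1 + y) := by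
        refine (Complex.norm_le_abs_re_add_abs_im _).trans ?_
        simp only [Complex.add_re, Complex.one_re, Complex.add_im, Complex.one_im, add_zero]
        rw [abs_of_nonneg (by linarith)]
        linarith
      have n2 : ‖s + 2‖ ≤ 5 * (1 + y) := by
        refine (Complex.norm_le_abs_re_add_abs_im _).trans ?_
        simp only [Complex.add_re, Complex.re_ofNat, Complex.add_im, Complex.im_ofNat, add_zero]
        rw [abs_of_nonneg (by linarith)]
        linarith
      have n3 : ‖s - 1‖ ≤ 2 * (1 + y) := by
        refine (Complex.norm_le_abs_re_add_abs_im _).trans ?_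
        simp only [Complex.sub_re, Complex.one_re, Complex.sub_im, Complex.one_im, sub_zero]
        have : |s.re - 1| ≤ 2 := abs_le.2 ⟨by linarith, by linarith⟩
        linarith
      have n4 : ‖(κ : ℂ) + (s - 1) * mellin f (-s)‖ ≤ (|κ| + 2 * D) * (1 + y) := by
        refine (norm_add_le _ _).trans ?_
        rw [norm_mul, Complex.norm_real, Real.norm_eq_abs]
        have : ‖s - 1‖ * ‖mellin f (-s)‖ ≤ 2 * (1 + y) * D := by gcongr
        nlinarith [abs_nonneg κ]
      rw [norm_mul, norm_mul]
      calc ‖s + 1‖ * ‖s + 2‖ * ‖(κ : ℂ) + (s - 1) * mellin f (-s)‖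
          ≤ 4 * (1 + y) * (5 * (1 + y)) * ((|κ| + 2 * D) * (1 + y)) := by gcongr
        _ = 20 * (|κ| + 2 * D) * (1 + y) ^ 3 := by ring
        _ ≤ _ := by gcongr; linarith
  · intro s hs
    have key := integral_smooth ha hs (hsum s hs)
    have h1 : s + 1 ≠ 0 := fun h => by
      have := congrArg Complex.re h
      simp at this; linarith
    have h2 : s + 2 ≠ 0 := fun h => by
      have := congrArg Complex.re h
      simp at this; linarith
    have h3 : s - 1 ≠ 0 := fun h => by
      have := congrArg Complex.re h
      simp at this; linarith
    rw [eq_div_iff (mul_ne_zero h1 h2)] at key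
    rw [← key]
    have i1 : IntegrableOn (fun X : ℝ => (κ : ℂ) * (X : ℂ) ^ (-s)) (Ioi 1) :=
      (integrableOn_Ioi_cpow_of_lt (by simpa using hs) one_pos).const_mul _
    have hmc : MellinConvergent f (-s) :=
      mellinConvergent_of_isBigO_rpow (a := -θ) (b := -s.re - 1) hfl (by
        refine Asymptotics.IsBigO.of_bound C ?_
        filter_upwards [eventually_gt_atTop 0] with X hX
        rw [neg_neg, Real.norm_of_nonneg (by positivity : (0 : ℝ) ≤ X ^ θ)]
        exact hfb X hX) (by simp; linarith) (by
        refine (Asymptotics.isBigO_zero _ _).congr' ?_ EventuallyEq.rfl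
        filter_upwards [nhdsWithin_le_nhds (Iio_mem_nhds (zero_lt_one' ℝ))] with X hX
        rw [hf, indicator_of_notMem (notMem_Ioi.2 (le_of_lt hX))]) (by simp)
    have i2 : IntegrableOn (fun X : ℝ => (E X : ℂ) * (X : ℂ) ^ (-s - 1)) (Ioi 1) := by
      refine (hmc.mono_set (Ioi_subset_Ioi zero_le_one)).congr_fun (fun X hX => ?_)
        measurableSet_Ioi
      simp only [hf, indicator_of_mem hX, smul_eq_mul]
      ring
    have e : ∫ X in Ioi (1 : ℝ), ((∑' n : ℕ, a n * bump (n / X) : ℝ) : ℂ) * (X : ℂ) ^ (-s - 1) =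
        κ / (s - 1) + mellin f (-s) := by
      have e1 : ∫ X in Ioi (1 : ℝ), (κ : ℂ) * (X : ℂ) ^ (-s) = κ / (s - 1) := by
        have h4 : -s + 1 ≠ 0 := fun h => h3 (by linear_combination -h)
        rw [integral_const_mul, integral_Ioi_cpow_of_lt (by simpa using hs) one_pos,
          Complex.ofReal_one, Complex.one_cpow, mul_div_assoc', div_eq_div_iff h4 h3]
        ring
      rw [← e1, hmel, ← integral_add i1 i2]
      refine setIntegral_congr_fun measurableSet_Ioi fun X hX => ?_
      have hX0 : (X : ℂ) ≠ 0 := by exact_mod_cast (lt_trans zero_lt_one hX).ne'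
      simp only [hE, Complex.ofReal_sub, Complex.ofReal_mul]
      rw [show -s = -s - 1 + 1 by ring, Complex.cpow_add _ _ hX0, Complex.cpow_one,
        show -s - 1 + 1 - 1 = -s - 1 by ring]
      ring
    rw [e]
    field_simp

end Continuation

end SmoothCount

/-! ### The von Mangoldt function of a number field -/

namespace PrimeIdeals

section Fiber

/-- A Dirichlet series written as a sum over a set `T` fibred over `ℕ` by `g`, when the total
weight of the fibre over `n` is the `n`-th coefficient. -/
theorem hasSum_LSeries {T : Type*} {g : T → ℕ} (hg : ∀ t, g t ≠ 0) {w : T → ℝ} (hw : ∀ t, 0 ≤ w t)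
    {c : ℕ → ℝ} (hc : ∀ n, n ≠ 0 → HasSum (fun t : g ⁻¹' {n} => w t) (c n)) {s : ℂ}
    (hs : LSeriesSummable (fun n => (c n : ℂ)) s) :
    (Summable fun t => ‖(w t : ℂ) * (g t : ℂ) ^ (-s)‖) ∧
      HasSum (fun t => (w t : ℂ) * (g t : ℂ) ^ (-s)) (LSeries (fun n => (c n : ℂ)) s) := by
  have h0 : IsEmpty (g ⁻¹' {0}) := ⟨fun t => hg t t.2⟩
  have hc0 : ∀ n, n ≠ 0 → 0 ≤ c n := fun n hn => HasSum.nonneg (fun t : g ⁻¹' {n} => hw t) (hc n hn)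
  have hn : ∀ t, ‖(w t : ℂ) * (g t : ℂ) ^ (-s)‖ = w t * (g t : ℝ) ^ (-s.re) := by
    intro t
    rw [norm_mul, Complex.norm_real, Real.norm_of_nonneg (hw t),
      Complex.norm_natCast_cpow_of_pos (Nat.pos_of_ne_zero (hg t)), Complex.neg_re]
  have hfib : ∀ n : ℕ, HasSum (fun t : g ⁻¹' {n} => ‖(w t : ℂ) * (g t : ℂ) ^ (-s)‖)
      ‖LSeries.term (fun n => (c n : ℂ)) s n‖ := by
    intro n
    rcases eq_or_ne n 0 with rfl | h
    · simp
    · rw [LSeries.norm_term_eq, if_neg h, Complex.norm_real, Real.norm_of_nonneg (hc0 n h),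
        div_eq_mul_inv, ← Real.rpow_neg n.cast_nonneg]
      refine ((hc n h).mul_right _).congr_fun fun t => ?_
      have : g t = n := t.2
      rw [hn, this]
  have hsm : Summable fun t => ‖(w t : ℂ) * (g t : ℂ) ^ (-s)‖ := by
    rw [← (Equiv.sigmaFiberEquiv g).summable_iff]
    refine (summable_sigma_of_nonneg fun _ => norm_nonneg _).2 ⟨fun n => (hfib n).summable, ?_⟩
    refine hs.norm.congr fun n => ((hfib n).tsum_eq).symm
  refine ⟨hsm, ?_⟩
  have h1 := hsm.of_norm.hasSum
  have h2 := h1.tsum_fiberwise g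
  have h3 : ∀ n : ℕ, ∑' t : g ⁻¹' {n}, (w t : ℂ) * (g t : ℂ) ^ (-s) =
      LSeries.term (fun n => (c n : ℂ)) s n := by
    intro n
    rcases eq_or_ne n 0 with rfl | h
    · simp
    · rw [LSeries.term_of_ne_zero h, div_eq_mul_inv, ← Complex.cpow_neg,
        ← (hc n h).tsum_eq, Complex.ofReal_tsum, ← tsum_mul_right]
      refine tsum_congr fun t => ?_
      have : g t = n := t.2
      rw [this]
  simp only [h3] at h2
  have h4 : LSeries (fun n => (c n : ℂ)) s = ∑' t, (w t : ℂ) * (g t : ℂ) ^ (-s) := h2.tsum_eq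
  rw [h4]
  exact h1

end Fiber

section Mangoldt
open NumberField IsDedekindDomain UniqueFactorizationMonoid

variable (K : Type*) [Field K] [NumberField K]

/-- The prime ideal powers `P ^ (k + 1)` of `𝓞 K`, given by the pairs `(P, k)`. -/
abbrev PrimePow := HeightOneSpectrum (𝓞 K) × ℕ

variable {K}

/-- The absolute norm of `P ^ (k + 1)`. -/
noncomputable def normPow (t : PrimePow K) : ℕ := Ideal.absNorm t.1.asIdeal ^ (t.2 + 1)

/-- The weight `log N(P)` of the prime ideal power `P ^ (k + 1)`. -/
noncomputable def logNorm (t : PrimePow K) : ℝ := Real.log (Ideal.absNorm t.1.asIdeal)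

theorem two_le_absNorm (P : HeightOneSpectrum (𝓞 K)) : 2 ≤ Ideal.absNorm P.asIdeal := by
  have h1 : Ideal.absNorm P.asIdeal ≠ 0 := fun h => P.ne_bot (Ideal.absNorm_eq_zero_iff.1 h)
  have h2 : Ideal.absNorm P.asIdeal ≠ 1 := fun h => P.isPrime.ne_top (Ideal.absNorm_eq_one_iff.1 h)
  omega

theorem normPow_ne_zero (t : PrimePow K) : normPow t ≠ 0 :=
  pow_ne_zero _ (by have := two_le_absNorm t.1; omega)

theorem logNorm_nonneg (t : PrimePow K) : 0 ≤ logNorm t :=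
  Real.log_natCast_nonneg _

/-- Only finitely many prime ideal powers have a given norm. -/
theorem fiber_finite (n : ℕ) : Finite (normPow (K := K) ⁻¹' {n}) := by
  have hf := Ideal.finite_setOfPred_absNorm_le (S := 𝓞 K) n
  have : ({I : Ideal (𝓞 K) | Ideal.absNorm I ≤ n} ×ˢ (Finset.range n : Set ℕ)).Finite :=
    hf.prod (Finset.finite_toSet _)
  have := this.to_subtype
  refine Finite.of_injective (β := ↥({I : Ideal (𝓞 K) | Ideal.absNorm I ≤ n} ×ˢ
    (Finset.range n : Set ℕ)))
    (fun t : normPow (K := K) ⁻¹' {n} => ⟨(t.1.1.asIdeal, t.1.2), ?_, ?_⟩) ?_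
  · have h : normPow t.1 = n := t.2
    change Ideal.absNorm t.1.1.asIdeal ≤ n
    exact (Nat.le_self_pow (by omega) _).trans h.le
  · have h : normPow t.1 = n := t.2
    have h1 := Nat.lt_pow_self (n := t.1.2 + 1) (two_le_absNorm t.1.1)
    rw [normPow] at h
    simp
    omega
  · intro t u h
    have h1 := congrArg (fun x => x.1.1) h
    have h2 := congrArg (fun x => x.1.2) h
    exact Subtype.ext (Prod.ext (HeightOneSpectrum.ext h1) h2)

variable (K) in
/-- The coefficients of `-ζ_K'/ζ_K`: the sum of `log N(P)` over the prime ideal powers of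
norm `n`. -/
noncomputable def mangoldt (n : ℕ) : ℝ := ∑' t : normPow (K := K) ⁻¹' {n}, logNorm (t : PrimePow K)

theorem hasSum_mangoldt (n : ℕ) :
    HasSum (fun t : normPow (K := K) ⁻¹' {n} => logNorm (t : PrimePow K)) (mangoldt K n) := by
  have := fiber_finite (K := K) n
  exact (Summable.of_finite).hasSum

theorem mangoldt_nonneg (n : ℕ) : 0 ≤ mangoldt K n :=
  HasSum.nonneg (fun t : normPow (K := K) ⁻¹' {n} => logNorm_nonneg (t : PrimePow K))
    (hasSum_mangoldt n)

theorem prod_primes_dvd (p : ℕ) (S : Finset (HeightOneSpectrum (𝓞 K)))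
    (hS : ∀ P ∈ S, (p : 𝓞 K) ∈ P.asIdeal) :
    ∏ P ∈ S, P.asIdeal ∣ Ideal.span {(p : 𝓞 K)} := by
  have hinj : Function.Injective fun P : HeightOneSpectrum (𝓞 K) => P.asIdeal :=
    fun P Q h => HeightOneSpectrum.ext h
  have h1 : ∏ I ∈ S.image (fun P => P.asIdeal), I ∣ Ideal.span {(p : 𝓞 K)} := by
    refine Finset.prod_primes_dvd _ ?_ ?_
    · intro I hI
      obtain ⟨P, -, rfl⟩ := Finset.mem_image.1 hI
      exact P.prime
    · intro I hI
      obtain ⟨P, hP, rfl⟩ := Finset.mem_image.1 hI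
      exact Ideal.dvd_span_singleton.2 (hS P hP)
  rwa [Finset.prod_image hinj.injOn] at h1

theorem prod_absNorm_dvd (p : ℕ) (S : Finset (HeightOneSpectrum (𝓞 K)))
    (hS : ∀ P ∈ S, (p : 𝓞 K) ∈ P.asIdeal) :
    ∏ P ∈ S, Ideal.absNorm P.asIdeal ∣ p ^ Module.finrank ℚ K := by
  have h2 := map_dvd Ideal.absNorm (prod_primes_dvd p S hS)
  rw [map_prod] at h2
  rw [Ideal.absNorm_span_natCast] at h2
  have := RingOfIntegers.rank K
  rwa [this] at h2

/-- The primes above `p` have norms whose product divides `p ^ [K : ℚ]`. -/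
theorem sum_log_le (p : ℕ) (hp : p.Prime) (S : Finset (HeightOneSpectrum (𝓞 K)))
    (hS : ∀ P ∈ S, (p : 𝓞 K) ∈ P.asIdeal) :
    ∑ P ∈ S, Real.log (Ideal.absNorm P.asIdeal) ≤ Module.finrank ℚ K * Real.log p := by
  have h3 : ((∏ P ∈ S, Ideal.absNorm P.asIdeal : ℕ) : ℝ) ≤ ((p ^ Module.finrank ℚ K : ℕ) : ℝ) :=
    Nat.cast_le.2 (Nat.le_of_dvd (pow_pos hp.pos _) (prod_absNorm_dvd p S hS))
  rw [Nat.cast_prod, Nat.cast_pow] at h3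
  have h4 : ∀ P : HeightOneSpectrum (𝓞 K), 0 < (Ideal.absNorm P.asIdeal : ℝ) := fun P =>
    Nat.cast_pos.2 (by have := two_le_absNorm P; omega)
  rw [← Real.log_prod (fun P _ => (h4 P).ne'), ← Real.log_pow]
  exact Real.log_le_log (Finset.prod_pos fun P _ => h4 P) h3

/-- The von Mangoldt function of `K` is dominated by `[K : ℚ]` times that of `ℚ`, because the norms of
the prime ideals above `p` multiply to a divisor of `p ^ [K : ℚ]`. -/
theorem mangoldt_le (n : ℕ) :
    mangoldt K n ≤ Module.finrank ℚ K * ArithmeticFunction.vonMangoldt n := by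
  have hfin := fiber_finite (K := K) n
  have := Fintype.ofFinite (normPow (K := K) ⁻¹' {n})
  rcases isEmpty_or_nonempty (normPow (K := K) ⁻¹' {n}) with he | ⟨⟨t₀, ht₀⟩⟩
  · rw [mangoldt, tsum_empty]
    exact mul_nonneg (Nat.cast_nonneg _) ArithmeticFunction.vonMangoldt_nonneg
  · have hmax : t₀.1.asIdeal.IsMaximal := t₀.1.isMaximal
    obtain ⟨p, m, hm, -, hp, hpm⟩ := Ideal.exists_prime_and_absNorm_eq_pow t₀.1.asIdeal
    have hn : n = p ^ (m * (t₀.2 + 1)) := by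
      have h : normPow t₀ = n := ht₀
      rw [← h, normPow, hpm, pow_mul]
    have hΛ : ArithmeticFunction.vonMangoldt n = Real.log p := by
      rw [hn, ArithmeticFunction.vonMangoldt_apply_pow (by positivity),
        ArithmeticFunction.vonMangoldt_apply_prime hp]
    have hinj : Set.InjOn (fun t : normPow (K := K) ⁻¹' {n} => t.1.1)
        (Finset.univ : Finset (normPow (K := K) ⁻¹' {n})) := by
      intro t _ u _ h
      have h1 : normPow t.1 = normPow u.1 := (t.2 : normPow t.1 = n).trans (u.2 : normPow u.1 = n).symm
      have h : t.1.1 = u.1.1 := h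
      rw [normPow, normPow, h] at h1
      have h2 := Nat.pow_right_injective (two_le_absNorm u.1.1) h1
      exact Subtype.ext (Prod.ext h (by simpa using h2))
    rw [mangoldt, tsum_fintype, hΛ]
    refine le_trans (le_of_eq ?_) (sum_log_le p hp (Finset.univ.image
      fun t : normPow (K := K) ⁻¹' {n} => t.1.1) ?_)
    · rw [Finset.sum_image hinj]
      rfl
    · intro P hP
      obtain ⟨t, -, rfl⟩ := Finset.mem_image.1 hP
      have h : normPow t.1 = n := t.2
      generalize t.1 = u at h
      have h1 : ((Ideal.absNorm u.1.asIdeal : ℕ) : 𝓞 K) ∈ u.1.asIdeal := Ideal.absNorm_mem _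
      have h2 : ((n : ℕ) : 𝓞 K) ∈ u.1.asIdeal := by
        rw [← h, normPow, Nat.cast_pow]
        exact Ideal.pow_mem_of_mem _ h1 _ (by omega)
      rw [hn, Nat.cast_pow] at h2
      exact u.1.isPrime.mem_of_pow_mem _ h2

end Mangoldt

end PrimeIdeals

/-! ### The logarithmic derivative of the Dedekind zeta function -/

namespace PrimeIdeals

section Identity
open NumberField IsDedekindDomain UniqueFactorizationMonoid

variable {K : Type*} [Field K] [NumberField K]

theorem log_absNorm_prod (m : Multiset (Ideal (𝓞 K))) (hm : ∀ I ∈ m, I ≠ ⊥) :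
    Real.log (Ideal.absNorm m.prod) = (m.map fun I => Real.log (Ideal.absNorm I)).sum := by
  induction m using Multiset.induction with
  | empty => simp
  | cons I m ih =>
    rw [Multiset.prod_cons, map_mul, Nat.cast_mul, Multiset.map_cons, Multiset.sum_cons,
      ← ih fun J hJ => hm J (Multiset.mem_cons_of_mem hJ), Real.log_mul]
    · exact_mod_cast fun h => hm I (Multiset.mem_cons_self I m) (Ideal.absNorm_eq_zero_iff.1 h)
    · have h : m.prod ≠ 0 := by
        rw [Ne, Multiset.prod_eq_zero_iff]
        exact fun h => hm 0 (Multiset.mem_cons_of_mem h) rfl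
      exact_mod_cast fun hh => h (Ideal.absNorm_eq_zero_iff.1 hh)

theorem pow_dvd_iff_count (P : HeightOneSpectrum (𝓞 K)) {I : Ideal (𝓞 K)} (hI : I ≠ ⊥) (k : ℕ) :
    P.asIdeal ^ k ∣ I ↔ k ≤ (normalizedFactors I).count P.asIdeal := by
  rw [pow_dvd_iff_le_emultiplicity, emultiplicity_eq_count_normalizedFactors P.irreducible hI,
    normalize_eq, Nat.cast_le]

/-- The logarithm of the norm of an ideal is the sum of `log N(P)` over the prime ideal powers
dividing it. -/
theorem hasSum_logNorm {I : Ideal (𝓞 K)} (hI : I ≠ ⊥) :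
    HasSum (fun t : PrimePow K => if t.1.asIdeal ^ (t.2 + 1) ∣ I then logNorm t else 0)
      (Real.log (Ideal.absNorm I)) := by
  have hne : ∀ J ∈ normalizedFactors I, J ≠ ⊥ := fun J hJ => (prime_of_normalized_factor J hJ).ne_zero
  have hinj : Function.Injective fun P : HeightOneSpectrum (𝓞 K) => P.asIdeal :=
    fun P Q h => HeightOneSpectrum.ext h
  set S : Finset (HeightOneSpectrum (𝓞 K)) :=
    (normalizedFactors I).toFinset.preimage _ hinj.injOn with hS
  set M := Multiset.card (normalizedFactors I) with hM
  have e : Real.log (Ideal.absNorm I) = ∑ t ∈ S ×ˢ Finset.range M,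
      if t.1.asIdeal ^ (t.2 + 1) ∣ I then logNorm t else 0 := by
    conv_lhs => rw [← Ideal.prod_normalizedFactors_eq_self hI]
    rw [log_absNorm_prod _ hne, Finset.sum_multiset_map_count, Finset.sum_product]
    have h1 : ∀ P ∈ S, (∑ k ∈ Finset.range M,
        if P.asIdeal ^ (k + 1) ∣ I then logNorm (P, k) else 0) =
        (normalizedFactors I).count P.asIdeal • Real.log (Ideal.absNorm P.asIdeal) := by
      intro P _
      simp only [pow_dvd_iff_count P hI, logNorm]
      rw [← Finset.sum_filter, Finset.sum_const]
      congr 1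
      have : (Finset.range M).filter (fun k => k + 1 ≤ (normalizedFactors I).count P.asIdeal) =
          Finset.range ((normalizedFactors I).count P.asIdeal) := by
        ext k
        have := Multiset.count_le_card P.asIdeal (normalizedFactors I)
        simp only [Finset.mem_filter, Finset.mem_range]
        omega
      rw [this, Finset.card_range]
    rw [Finset.sum_congr rfl h1, hS, Finset.sum_preimage
      (f := fun P : HeightOneSpectrum (𝓞 K) => P.asIdeal)
      (g := fun J => (normalizedFactors I).count J • Real.log (Ideal.absNorm J))]
    intro J hJ hJ2
    rw [Multiset.mem_toFinset] at hJ
    have hp := prime_of_normalized_factor J hJ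
    exact absurd ⟨⟨J, Ideal.isPrime_of_prime hp, hp.ne_zero⟩, rfl⟩ hJ2
  rw [e]
  refine hasSum_sum_of_ne_finset_zero fun t ht => if_neg fun h => ht ?_
  rw [pow_dvd_iff_count t.1 hI] at h
  rw [Finset.mem_product, hS, Finset.mem_preimage, Multiset.mem_toFinset, Finset.mem_range]
  have := Multiset.count_le_card t.1.asIdeal (normalizedFactors I)
  exact ⟨Multiset.count_pos.1 (by omega), by omega⟩

/-- The ideal `P ^ (k + 1)`. -/
noncomputable def powIdeal (t : PrimePow K) : nonZeroDivisors (Ideal (𝓞 K)) :=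
  ⟨t.1.asIdeal ^ (t.2 + 1), mem_nonZeroDivisors_of_ne_zero (pow_ne_zero _ t.1.ne_bot)⟩

theorem absNorm_powIdeal (t : PrimePow K) :
    Ideal.absNorm (powIdeal t : Ideal (𝓞 K)) = normPow t := by
  rw [powIdeal, normPow, map_pow]

end Identity

section Series
open NumberField IsDedekindDomain SmoothCount

variable (K : Type*) [Field K] [NumberField K]

theorem summable_idealCount {s : ℂ} (hs : 1 < s.re) :
    LSeriesSummable (fun n => (idealCount K n : ℂ)) s := by
  refine LSeriesSummable_of_sum_norm_bigO_and_nonneg (r := 1) ?_ (fun n => Nat.cast_nonneg _)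
    zero_le_one hs
  have h := ((NumberField.Ideal.tendsto_norm_le_div_atTop₀ K).comp
    tendsto_natCast_atTop_atTop).isBigO_one ℝ
  have h2 := h.mul (Asymptotics.isBigO_refl (fun n : ℕ => (n : ℝ)) atTop)
  refine h2.congr' ?_ ?_
  · filter_upwards [eventually_gt_atTop 0] with n hn
    have hn0 : (n : ℝ) ≠ 0 := by exact_mod_cast hn.ne'
    simp only [Function.comp_apply, Nat.cast_le]
    rw [div_mul_cancel₀ _ hn0]
    simp only [idealCount, ← Nat.cast_sum]
    congr
    rw [← add_left_inj 1, ← Ideal.card_norm_le_eq_card_norm_le_add_one,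
      show Finset.Icc 1 n = Finset.Ioc 0 n from Finset.Icc_succ_left_eq_Ioc _ _,
      show 1 = Nat.card {I : Ideal (𝓞 K) // Ideal.absNorm I = 0} by
        simp [Ideal.absNorm_eq_zero_iff],
      Finset.sum_Ioc_add_eq_sum_Icc (n.zero_le),
      ← Finset.card_preimage_eq_sum_card_image_eq
        (fun k _ => Ideal.finite_setOfPred_absNorm_eq k)]
    simp [Set.coe_eq_subtype]
  · filter_upwards with n
    rw [Real.rpow_one, one_mul]

variable {K}

theorem hasSum_idealCount {n : ℕ} (hn : n ≠ 0) :
    HasSum (fun _ : (fun I : nonZeroDivisors (Ideal (𝓞 K)) => Ideal.absNorm (I : Ideal (𝓞 K))) ⁻¹'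
      {n} => (1 : ℝ)) (idealCount K n) := by
  let e : ((fun I : nonZeroDivisors (Ideal (𝓞 K)) => Ideal.absNorm (I : Ideal (𝓞 K))) ⁻¹' {n}) ≃
      {I : Ideal (𝓞 K) // Ideal.absNorm I = n} :=
    { toFun := fun I => ⟨I.1.1, I.2⟩
      invFun := fun I => ⟨⟨I.1, mem_nonZeroDivisors_of_ne_zero fun h => hn (by
        rw [← I.2, h, map_zero])⟩, I.2⟩
      left_inv := fun I => rfl
      right_inv := fun I => rfl }
  have hf : Finite {I : Ideal (𝓞 K) // Ideal.absNorm I = n} :=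
    (Ideal.finite_setOfPred_absNorm_eq (S := 𝓞 K) n).to_subtype
  have := Fintype.ofFinite {I : Ideal (𝓞 K) // Ideal.absNorm I = n}
  rw [idealCount]
  have h := hasSum_fintype fun _ : {I : Ideal (𝓞 K) // Ideal.absNorm I = n} => (1 : ℝ)
  rw [Finset.sum_const, Finset.card_univ, nsmul_eq_mul, mul_one, ← Nat.card_eq_fintype_card] at h
  exact e.hasSum_iff.2 h

theorem absNorm_ne_zero (I : nonZeroDivisors (Ideal (𝓞 K))) :
    Ideal.absNorm (I : Ideal (𝓞 K)) ≠ 0 :=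
  Ideal.absNorm_ne_zero_of_nonZeroDivisors I

theorem summable_mangoldt {s : ℂ} (hs : 1 < s.re) :
    LSeriesSummable (fun n => (mangoldt K n : ℂ)) s := by
  have h := (ArithmeticFunction.LSeriesSummable_vonMangoldt hs).norm.mul_left
    (Module.finrank ℚ K : ℝ)
  refine Summable.of_norm (Summable.of_nonneg_of_le (fun _ => norm_nonneg _) (fun n => ?_) h)
  rw [LSeries.norm_term_eq, LSeries.norm_term_eq]
  split_ifs with hn
  · simp
  · rw [Complex.norm_real, Complex.norm_real, Real.norm_of_nonneg (mangoldt_nonneg n),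
      Real.norm_of_nonneg ArithmeticFunction.vonMangoldt_nonneg, ← mul_div_assoc]
    exact div_le_div_of_nonneg_right (mangoldt_le n) (by positivity)

theorem powIdeal_dvd_iff (t : PrimePow K) (I : nonZeroDivisors (Ideal (𝓞 K))) :
    powIdeal t ∣ I ↔ t.1.asIdeal ^ (t.2 + 1) ∣ (I : Ideal (𝓞 K)) := by
  constructor
  · rintro ⟨J, rfl⟩
    exact ⟨J, rfl⟩
  · rintro ⟨J, hJ⟩
    have hJ0 : J ≠ 0 := by
      rintro rfl
      exact nonZeroDivisors.coe_ne_zero I (hJ.trans (mul_zero _))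
    exact ⟨⟨J, mem_nonZeroDivisors_of_ne_zero hJ0⟩, Subtype.ext hJ⟩

/-- Sorting the pairs of a prime ideal power and an ideal by their product. -/
theorem tsum_fiber (I : nonZeroDivisors (Ideal (𝓞 K))) :
    ∑' x : (fun x : PrimePow K × nonZeroDivisors (Ideal (𝓞 K)) => powIdeal x.1 * x.2) ⁻¹' {I},
      logNorm x.1.1 = Real.log (Ideal.absNorm (I : Ideal (𝓞 K))) := by
  rw [← (hasSum_logNorm (nonZeroDivisors.coe_ne_zero I)).tsum_eq]
  set f : PrimePow K → ℝ := fun t =>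
    if t.1.asIdeal ^ (t.2 + 1) ∣ (I : Ideal (𝓞 K)) then logNorm t else 0 with hf
  set φ : ((fun x : PrimePow K × nonZeroDivisors (Ideal (𝓞 K)) => powIdeal x.1 * x.2) ⁻¹' {I}) →
    PrimePow K := fun x => x.1.1 with hφ
  have hinj : Function.Injective φ := by
    rintro ⟨⟨t, J⟩, h⟩ ⟨⟨u, J'⟩, h'⟩ e
    have e : t = u := e
    subst e
    have h1 : powIdeal t * J = powIdeal t * J' := (show powIdeal t * J = I from h).trans
      (show powIdeal t * J' = I from h').symm
    exact Subtype.ext (Prod.ext rfl (mul_left_cancel h1))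
  have h := hinj.tsum_eq (f := f) ?_
  · rw [← h]
    refine tsum_congr fun x => ?_
    have h1 : powIdeal x.1.1 * x.1.2 = I := x.2
    exact (if_pos ((powIdeal_dvd_iff _ _).1 ⟨_, h1.symm⟩)).symm
  · intro t ht
    have hd : t.1.asIdeal ^ (t.2 + 1) ∣ (I : Ideal (𝓞 K)) := by
      by_contra hh
      exact ht (if_neg hh)
    obtain ⟨J, hJ⟩ := (powIdeal_dvd_iff t I).2 hd
    exact ⟨⟨(t, J), hJ.symm⟩, rfl⟩

/-- The Euler product of `ζ_K` in logarithmic form: `-ζ_K' = ζ_K · ∑ Λ_K(n) n ^ (-s)`. -/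
theorem LSeries_logMul {s : ℂ} (hs : 1 < s.re) :
    LSeries (LSeries.logMul fun n => (idealCount K n : ℂ)) s =
      LSeries (fun n => (mangoldt K n : ℂ)) s * LSeries (fun n => (idealCount K n : ℂ)) s := by
  have hA := hasSum_LSeries (g := fun I : nonZeroDivisors (Ideal (𝓞 K)) =>
    Ideal.absNorm (I : Ideal (𝓞 K))) absNorm_ne_zero (w := fun _ => 1) (fun _ => zero_le_one)
    (fun n hn => hasSum_idealCount hn) (summable_idealCount K hs)
  have hB := hasSum_LSeries (g := normPow (K := K)) normPow_ne_zero (w := logNorm) logNorm_nonneg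
    (fun n _ => hasSum_mangoldt n) (summable_mangoldt hs)
  have hlog : LSeriesSummable (fun n => ((idealCount K n * Real.log n : ℝ) : ℂ)) s := by
    have h1 : LSeries.abscissaOfAbsConv (fun n => (idealCount K n : ℂ)) ≤ 1 :=
      LSeries.abscissaOfAbsConv_le_of_forall_lt_LSeriesSummable fun y hy =>
        summable_idealCount K (by simpa using hy)
    refine (LSeriesSummable_logMul_of_lt_re (f := fun n => (idealCount K n : ℂ)) (s := s)
      (h1.trans_lt (by exact_mod_cast hs))).congr fun n => ?_
    congr 1
    ext n
    simp [LSeries.logMul, mul_comm, Complex.ofReal_log]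
  have hE := hasSum_LSeries (g := fun I : nonZeroDivisors (Ideal (𝓞 K)) =>
    Ideal.absNorm (I : Ideal (𝓞 K))) absNorm_ne_zero
    (w := fun I => Real.log (Ideal.absNorm (I : Ideal (𝓞 K))))
    (fun _ => Real.log_natCast_nonneg _) (c := fun n => idealCount K n * Real.log n)
    (fun n hn => by
      have h := (hasSum_idealCount (K := K) hn).mul_right (Real.log n)
      refine h.congr_fun fun I => ?_
      have : Ideal.absNorm (I : Ideal (𝓞 K)) = n := I.2
      rw [this, one_mul]) hlog
  have hS := summable_mul_of_summable_norm hB.1 hA.1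
  have hC := hS.hasSum.tsum_fiberwise
    (fun x : PrimePow K × nonZeroDivisors (Ideal (𝓞 K)) => powIdeal x.1 * x.2)
  rw [← tsum_mul_tsum_of_summable_norm hB.1 hA.1, hA.2.tsum_eq, hB.2.tsum_eq] at hC
  have hD : ∀ I : nonZeroDivisors (Ideal (𝓞 K)),
      ∑' x : (fun x : PrimePow K × nonZeroDivisors (Ideal (𝓞 K)) => powIdeal x.1 * x.2) ⁻¹' {I},
        (logNorm x.1.1 : ℂ) * (normPow x.1.1 : ℂ) ^ (-s) *
          (((1 : ℝ) : ℂ) * (Ideal.absNorm (x.1.2 : Ideal (𝓞 K)) : ℂ) ^ (-s)) =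
      (Real.log (Ideal.absNorm (I : Ideal (𝓞 K))) : ℂ) *
        (Ideal.absNorm (I : Ideal (𝓞 K)) : ℂ) ^ (-s) := by
    intro I
    rw [← tsum_fiber I, Complex.ofReal_tsum, ← tsum_mul_right]
    refine tsum_congr fun x => ?_
    have h1 : powIdeal x.1.1 * x.1.2 = I := x.2
    have h2 : Ideal.absNorm (I : Ideal (𝓞 K)) =
        normPow x.1.1 * Ideal.absNorm (x.1.2 : Ideal (𝓞 K)) :=
      (congrArg (fun J : nonZeroDivisors (Ideal (𝓞 K)) => Ideal.absNorm (J : Ideal (𝓞 K)))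
        h1).symm.trans (by rw [Submonoid.coe_mul, map_mul, absNorm_powIdeal])
    rw [h2, Nat.cast_mul, Complex.natCast_mul_natCast_cpow]
    push_cast
    ring
  have hF := (hC.congr_fun fun I => (hD I).symm).unique hE.2
  rw [hF]
  refine LSeries_congr (fun n => ?_) s
  simp [LSeries.logMul, mul_comm, Complex.ofReal_log]

end Series

end PrimeIdeals

/-! ### The prime ideal theorem -/

namespace PrimeIdeals

section Zeta
open NumberField SmoothCount Topology

variable (K : Type*) [Field K] [NumberField K]

theorem abscissa_idealCount :
    LSeries.abscissaOfAbsConv (fun n => (idealCount K n : ℂ)) ≤ 1 :=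
  LSeries.abscissaOfAbsConv_le_of_forall_lt_LSeriesSummable fun y hy =>
    summable_idealCount K (by simpa using hy)

theorem abscissa_mangoldt :
    LSeries.abscissaOfAbsConv (fun n => (mangoldt K n : ℂ)) ≤ 1 :=
  LSeries.abscissaOfAbsConv_le_of_forall_lt_LSeriesSummable fun y hy =>
    summable_mangoldt (by simpa using hy)

theorem idealCount_one : idealCount K 1 = 1 := by
  rw [idealCount]
  simp [Ideal.absNorm_eq_one_iff]

variable {K}

theorem analyticAt_LSeries {f : ℕ → ℂ} (hf : LSeries.abscissaOfAbsConv f ≤ 1) {s : ℂ}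
    (hs : 1 < s.re) : AnalyticAt ℂ (LSeries f) s :=
  LSeries_analyticOnNhd f s (hf.trans_lt (by exact_mod_cast hs))

/-- The differential equation `ζ_K' = -ζ_K · ∑ Λ_K(n) n ^ (-s)`. -/
theorem deriv_LSeries {s : ℂ} (hs : 1 < s.re) :
    deriv (LSeries fun n => (idealCount K n : ℂ)) s =
      -(LSeries (fun n => (mangoldt K n : ℂ)) s * LSeries (fun n => (idealCount K n : ℂ)) s) := by
  rw [LSeries_deriv ((abscissa_idealCount K).trans_lt (by exact_mod_cast hs)), LSeries_logMul hs]

/-- `ζ_K` has no zeros with `Re s > 1`: by `ζ_K' = -ζ_K · ∑ Λ_K(n) n ^ (-s)` a zero would have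
infinite order, so that `ζ_K` would vanish identically. -/
theorem LSeries_ne_zero {s : ℂ} (hs : 1 < s.re) :
    LSeries (fun n => (idealCount K n : ℂ)) s ≠ 0 := by
  intro h0
  set F := LSeries fun n => (idealCount K n : ℂ) with hF
  set B := LSeries fun n => (mangoldt K n : ℂ) with hB
  have hFa : AnalyticAt ℂ F s := analyticAt_LSeries (abscissa_idealCount K) hs
  have hBa : AnalyticAt ℂ B s := analyticAt_LSeries (abscissa_mangoldt K) hs
  have hopen : IsOpen {s : ℂ | 1 < s.re} := isOpen_lt continuous_const Complex.continuous_re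
  have hd : deriv F =ᶠ[𝓝 s] (-B) * F := by
    filter_upwards [hopen.mem_nhds hs] with z hz
    rw [Pi.mul_apply, Pi.neg_apply, neg_mul]
    exact deriv_LSeries hz
  have h1 := hFa.analyticOrderAt_deriv_add_one
  rw [h0] at h1
  simp only [sub_zero] at h1
  rw [analyticOrderAt_congr hd, analyticOrderAt_mul hBa.neg hFa] at h1
  have htop : analyticOrderAt F s = ⊤ := by
    by_contra hne
    obtain ⟨m, hm⟩ := ENat.ne_top_iff_exists.1 hne
    rw [← hm] at h1
    have h2 : (m : ℕ∞) + 1 ≤ m := by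
      calc (m : ℕ∞) + 1 ≤ analyticOrderAt (-B) s + m + 1 := by gcongr; exact le_add_self
        _ = m := h1
    have h3 : m + 1 ≤ m := by exact_mod_cast h2
    omega
  have hz : Set.EqOn F 0 {s : ℂ | 1 < s.re} := by
    refine AnalyticOnNhd.eqOn_zero_of_preconnected_of_eventuallyEq_zero
      (fun z hz => analyticAt_LSeries (abscissa_idealCount K) hz)
      (convex_halfSpace_re_gt 1).isPreconnected hs (analyticOrderAt_eq_top.1 htop)
  have hlim : Tendsto (fun x : ℝ => F x) atTop (𝓝 ((idealCount K 1 : ℝ) : ℂ)) :=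
    LSeries.tendsto_atTop ((abscissa_idealCount K).trans_lt (EReal.coe_lt_top 1))
  rw [idealCount_one] at hlim
  have hlim2 : Tendsto (fun x : ℝ => F x) atTop (𝓝 0) := by
    refine tendsto_const_nhds.congr' ?_
    filter_upwards [eventually_gt_atTop 1] with x hx
    exact (hz (x := (x : ℂ)) (by simpa using hx)).symm
  have := tendsto_nhds_unique hlim hlim2
  simp at this

variable (K)

/-- The analytic data of the Dedekind zeta function of `K`. -/
theorem exists_zetaData : ∃ H : ℂ → ℂ, ∃ δ : ℝ, ZetaData (mangoldt K) H δ := by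
  obtain ⟨κ, C, hC, hasymp⟩ := smoothCount_asymp K
  have hd : (1 : ℝ) ≤ Module.finrank ℚ K := by
    exact_mod_cast (Module.finrank_pos : 0 < Module.finrank ℚ K)
  set d : ℝ := ((Module.finrank ℚ K : ℕ) : ℝ) with hdd
  have hd1 : 1 / d ≤ 1 := by rw [div_le_one (by positivity)]; exact hd
  have hd0 : 0 < 1 / d := by positivity
  obtain ⟨H, hH1, hH2, hH3⟩ := exists_continuation (a := idealCount K) (κ := κ) (C := C)
    (θ := 1 - 1 / d) (fun n => Nat.cast_nonneg _) (fun s hs => summable_idealCount K hs)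
    (by linarith) (by linarith) hC hasymp
  have hopen : IsOpen {s : ℂ | 1 < s.re} := isOpen_lt continuous_const Complex.continuous_re
  have hdiff : DifferentiableOn ℂ H {s | 1 - 1 / d / 2 < s.re} :=
    hH1.mono fun s hs => lt_trans (by linarith : 1 - 1 / d < 1 - 1 / d / 2) hs
  refine ⟨H, 1 / d / 2, ⟨mangoldt_nonneg, ⟨_, Nat.cast_nonneg _, mangoldt_le⟩, by linarith,
    by linarith, hdiff, ?_, ?_, ?_, ?_⟩⟩
  · exact hH2 _ (by linarith)
  · have hcont : ContinuousAt H 1 := by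
      refine (hdiff.differentiableAt ?_).continuousAt
      exact (isOpen_lt continuous_const Complex.continuous_re).mem_nhds
        (by simp only [Set.mem_ofPred_eq, Complex.one_re]; linarith)
    have h1 : Tendsto (fun s : ℝ => H s) (𝓝[>] 1) (𝓝 (H 1)) := by
      have : Tendsto (fun s : ℝ => (s : ℂ)) (𝓝[>] 1) (𝓝 1) := by
        have := (Complex.continuous_ofReal.tendsto 1).mono_left
          (nhdsWithin_le_nhds (s := Set.Ioi 1))
        simpa using this
      exact hcont.tendsto.comp this
    have h2 := tendsto_sub_one_mul_dedekindZeta_nhdsGT K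
    have h3 : Tendsto (fun s : ℝ => H s) (𝓝[>] 1) (𝓝 (dedekindZeta_residue K)) := by
      refine h2.congr' ?_
      filter_upwards [self_mem_nhdsWithin] with s hs
      rw [hH3 s (by simpa using hs), dedekindZeta]
      congr 2
    rw [tendsto_nhds_unique h1 h3]
    exact_mod_cast dedekindZeta_residue_ne_zero K
  · intro s hs
    rw [hH3 s hs]
    refine mul_ne_zero (fun h => ?_) (LSeries_ne_zero hs)
    rw [sub_eq_zero.1 h] at hs
    simp at hs
  · intro s hs
    have hs1 : s - 1 ≠ 0 := by
      intro h
      rw [sub_eq_zero.1 h] at hs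
      simp at hs
    have he : H =ᶠ[𝓝 s] fun z => (z - 1) * LSeries (fun n => (idealCount K n : ℂ)) z := by
      filter_upwards [hopen.mem_nhds hs] with z hz
      exact hH3 z hz
    rw [logDeriv_apply, he.deriv_eq, he.eq_of_nhds, ← logDeriv_apply, logDeriv_mul s hs1
      (LSeries_ne_zero hs) (by fun_prop)
      (analyticAt_LSeries (abscissa_idealCount K) hs).differentiableAt, logDeriv_apply,
      logDeriv_apply, deriv_LSeries hs, deriv_sub_const, deriv_id'']
    have := LSeries_ne_zero (K := K) hs
    field_simp
    ring

/-- The prime ideal theorem with error term, in terms of prime ideal powers. -/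
theorem pnt_mangoldt : ∃ c M X : ℝ, 0 < c ∧ 0 < M ∧ 1 ≤ X ∧ ∀ x, X ≤ x →
    |summ (mangoldt K) x - x| ≤ M * x * Real.exp (-c * √(Real.log x)) := by
  obtain ⟨H, δ, h⟩ := exists_zetaData K
  exact h.pnt

end Zeta

end PrimeIdeals

/-! ### Prime ideals of degree one in a Kummer extension -/

namespace Splitting

section Residue

/-- `t` divides the index of the subgroup generated by `γ` if and only if `X ^ t - γ` splits. -/
theorem dvd_index_iff {p : ℕ} [Fact p.Prime] {t : ℕ} (ht : 0 < t) {γ : ZMod p} (hγ : γ ≠ 0) :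
    t ∣ (p - 1) / orderOf γ ↔ (∃ ζ : ZMod p, IsPrimitiveRoot ζ t) ∧ ∃ δ : ZMod p, δ ^ t = γ := by
  set u : (ZMod p)ˣ := Units.mk0 γ hγ with hu
  have hcard : Nat.card (ZMod p)ˣ = p - 1 := by
    rw [Nat.card_eq_fintype_card, ZMod.card_units]
  have hN : 0 < p - 1 := by have := (Fact.out : p.Prime).two_le; omega
  have hord : orderOf γ = orderOf u := by rw [← orderOf_units]; rfl
  have hdvd : orderOf u ∣ p - 1 := hcard ▸ orderOf_dvd_natCard u
  have hpos : 0 < orderOf u := orderOf_pos u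
  rw [hord]
  constructor
  · intro h
    obtain ⟨z, hz⟩ := IsCyclic.exists_generator (α := (ZMod p)ˣ)
    have hz1 : orderOf z = p - 1 := by rw [orderOf_eq_card_of_forall_mem_zpowers hz, hcard]
    obtain ⟨j, hj⟩ := (mem_powers_iff_mem_zpowers (x := z) (y := u)).2 (hz u)
    have hj : z ^ j = u := hj
    have h1 : orderOf u = (p - 1) / (p - 1).gcd j := by rw [← hj, orderOf_pow, hz1]
    rw [h1, Nat.div_div_self (Nat.gcd_dvd_left _ _) hN.ne'] at h
    obtain ⟨i, rfl⟩ := h.trans (Nat.gcd_dvd_right _ _)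
    have htN : t ∣ p - 1 := h.trans (Nat.gcd_dvd_left _ _)
    refine ⟨⟨((z ^ ((p - 1) / t) : (ZMod p)ˣ) : ZMod p), ?_⟩, ((z ^ i : (ZMod p)ˣ) : ZMod p), ?_⟩
    · rw [IsPrimitiveRoot.coe_units_iff]
      have := IsPrimitiveRoot.orderOf (z ^ ((p - 1) / t))
      rwa [← hz1, orderOf_pow_orderOf_div (by omega) (by rwa [hz1]), hz1] at this
    · rw [← Units.val_pow_eq_pow_val, ← pow_mul, mul_comm, hj, hu, Units.val_mk0]
  · rintro ⟨⟨ζ, hζ⟩, δ, hδ⟩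
    have htN : t ∣ p - 1 := by
      obtain ⟨v, hv⟩ := hζ.isUnit ht.ne'
      rw [← hv, IsPrimitiveRoot.coe_units_iff] at hζ
      rw [hζ.eq_orderOf, ← hcard]
      exact orderOf_dvd_natCard v
    obtain ⟨q, hq⟩ := htN
    have hδ0 : δ ≠ 0 := by
      rintro rfl
      rw [zero_pow ht.ne'] at hδ
      exact hγ hδ.symm
    have h1 : orderOf u ∣ q := by
      rw [orderOf_dvd_iff_pow_eq_one]
      have h2 : u = (Units.mk0 δ hδ0) ^ t := by
        ext
        rw [hu, Units.val_pow_eq_pow_val, Units.val_mk0, Units.val_mk0, hδ]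
      rw [h2, ← pow_mul, ← hq, ← hcard]
      exact pow_card_eq_one'
    obtain ⟨k, rfl⟩ := h1
    rw [hq, show t * (orderOf u * k) = orderOf u * (t * k) by ring, Nat.mul_div_cancel_left _ hpos]
    exact dvd_mul_right t k

end Residue

section Primes
open NumberField IsDedekindDomain

variable {K : Type*} [Field K] [NumberField K]

/-- A prime of a Galois extension of `ℚ` with trivial decomposition group lies over a prime `p`
all of whose prime divisors have norm `p`. -/
theorem card_of_stabilizer [IsGalois ℚ K] {p : ℕ} (hp : p.Prime) (P : Ideal (𝓞 K)) [P.IsPrime]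
    [P.LiesOver (Ideal.span {(p : ℤ)})] (h : MulAction.stabilizer Gal(K/ℚ) P = ⊥) :
    Nat.card {Q : HeightOneSpectrum (𝓞 K) // Ideal.absNorm Q.asIdeal = p} =
      Module.finrank ℚ K := by
  have hpr : (Ideal.span {(p : ℤ)}).IsPrime := by
    rw [Ideal.span_singleton_prime (by exact_mod_cast hp.ne_zero)]
    exact Nat.prime_iff_prime_int.1 hp
  have : Fact p.Prime := ⟨hp⟩
  have h1 := Ideal.card_stabilizer_eq (G := Gal(K/ℚ)) (Ideal.span {(p : ℤ)}) P
  rw [h, Nat.card_unique] at h1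
  have hf : (Ideal.span {(p : ℤ)}).inertiaDegIn (𝓞 K) = 1 := Nat.eq_one_of_mul_eq_one_left h1.symm
  have h2 := Ideal.ncard_primesOver_mul_ramificationIdxIn_mul_inertiaDegIn (Ideal.span {(p : ℤ)})
    (𝓞 K) Gal(K/ℚ)
  rw [← h1, mul_one, IsGaloisGroup.card_eq_finrank Gal(K/ℚ) ℚ K] at h2
  rw [← h2, ← Nat.card_coe_set_eq]
  refine Nat.card_congr
    { toFun := fun Q => ⟨Q.1.asIdeal, Q.1.isPrime, ⟨?_⟩⟩
      invFun := fun Q => ⟨⟨Q.1, Q.2.1, ?_⟩, ?_⟩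
      left_inv := fun Q => rfl
      right_inv := fun Q => rfl }
  · have := Ideal.span_singleton_absNorm (I := Q.1.asIdeal) (by rw [Q.2]; exact hp)
    rw [Q.2] at this
    exact this
  · intro hQ
    have := Q.2.2.over
    rw [hQ] at this
    have h3 : (p : ℤ) ∈ (⊥ : Ideal (𝓞 K)).under ℤ := by
      rw [← this]; exact Ideal.mem_span_singleton_self _
    rw [Ideal.mem_comap, Ideal.mem_bot] at h3
    exact hp.ne_zero (by simpa using h3)
  · have := Q.2.1
    have := Q.2.2
    have h3 := Ideal.inertiaDegIn_eq_inertiaDeg (Ideal.span {(p : ℤ)}) Q.1 Gal(K/ℚ)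
    rw [hf] at h3
    rw [← Ideal.pow_inertiaDeg p Q.1, ← h3, pow_one]

/-- Let `K = ℚ(ζ, β)` with `ζ` a primitive `t`-th root of unity and `β ^ t = c`. If `p` divides
neither `t` nor `c`, then `K` has `[K : ℚ]` prime ideals of norm `p` when `X ^ t - c` splits
modulo `p`, and none otherwise. -/
theorem card_norm_eq [IsGalois ℚ K] {t : ℕ} (ht : 0 < t) {ζ β : 𝓞 K} {c : ℤ}
    (hζ : IsPrimitiveRoot ζ t) (hβ : β ^ t = (c : 𝓞 K))
    (hgen : ∀ σ : Gal(K/ℚ), σ • ζ = ζ → σ • β = β → σ = 1) {p : ℕ} [Fact p.Prime]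
    (hpt : ¬ p ∣ t) (hpc : ¬ (p : ℤ) ∣ c) :
    Nat.card {Q : HeightOneSpectrum (𝓞 K) // Ideal.absNorm Q.asIdeal = p} =
      if (∃ z : ZMod p, IsPrimitiveRoot z t) ∧ ∃ δ : ZMod p, δ ^ t = c
      then Module.finrank ℚ K else 0 := by
  have hp : p.Prime := Fact.out
  have : NeZero t := ⟨ht.ne'⟩
  have hcop : p.Coprime t := (Nat.Prime.coprime_iff_not_dvd hp).2 hpt
  split_ifs with h
  · obtain ⟨⟨z, hz⟩, δ, hδ⟩ := h
    have hpr : (Ideal.span {(p : ℤ)}).IsPrime := by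
      rw [Ideal.span_singleton_prime (by exact_mod_cast hp.ne_zero)]
      exact Nat.prime_iff_prime_int.1 hp
    obtain ⟨P, hP1, hP2⟩ : ∃ P : Ideal (𝓞 K), P.IsPrime ∧ P.LiesOver (Ideal.span {(p : ℤ)}) := by
      obtain ⟨P⟩ := (inferInstance : Nonempty ((Ideal.span {(p : ℤ)}).primesOver (𝓞 K)))
      exact ⟨P.1, P.2⟩
    refine card_of_stabilizer hp P ?_
    have hpP : (p : 𝓞 K) ∈ P := by
      have h1 : (p : ℤ) ∈ P.under ℤ := by
        rw [← hP2.over]; exact Ideal.mem_span_singleton_self _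
      rw [Ideal.mem_comap] at h1
      simpa using h1
    have hchar : CharP (𝓞 K ⧸ P) p := by
      rw [CharP.charP_iff_prime_eq_zero hp, ← map_natCast (Ideal.Quotient.mk P)]
      exact Ideal.Quotient.eq_zero_iff_mem.2 hpP
    have hnorm : Ideal.absNorm P ≠ 1 := by
      rw [Ne, Ideal.absNorm_eq_one_iff]
      exact hP1.ne_top
    have hnorm2 : (Ideal.absNorm P).Coprime t := by
      rw [← Ideal.pow_inertiaDeg p P]
      exact Nat.Coprime.pow_left _ hcop
    have hζP : IsPrimitiveRoot (Ideal.Quotient.mk P ζ) t := hζ.idealQuotient_mk hnorm hnorm2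
    set ψ : ZMod p →+* 𝓞 K ⧸ P := ZMod.castHom dvd_rfl _ with hψ
    have hψi : Function.Injective ψ := ψ.injective
    have hzP : IsPrimitiveRoot (ψ z) t := hz.map_of_injective hψi
    have hβP : (Ideal.Quotient.mk P β) ^ t = (c : 𝓞 K ⧸ P) := by
      rw [← map_pow, hβ, map_intCast]
    have hcP : (c : 𝓞 K ⧸ P) ≠ 0 := by
      rw [Ne, CharP.intCast_eq_zero_iff _ p]
      exact hpc
    have hβ0 : Ideal.Quotient.mk P β ≠ 0 := by
      intro h0
      rw [h0, zero_pow ht.ne'] at hβP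
      exact hcP hβP.symm
    -- the decomposition group of `P` fixes residues in the prime field
    have hintg : ∀ x : 𝓞 K, (∃ w, ψ w = Ideal.Quotient.mk P x) →
        ∀ σ ∈ MulAction.stabilizer Gal(K/ℚ) P,
          Ideal.Quotient.mk P (σ • x) = Ideal.Quotient.mk P x := by
      rintro x ⟨w, hw⟩ σ hσ
      obtain ⟨m, rfl⟩ := ZMod.intCast_surjective w
      rw [map_intCast] at hw
      have h1 : x - (m : 𝓞 K) ∈ P := by
        rw [← Ideal.Quotient.eq, map_intCast, hw]
      have h2 : σ • (x - (m : 𝓞 K)) ∈ P := by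
        have := Ideal.smul_mem_pointwise_smul_iff (a := σ).mpr h1
        rwa [MulAction.mem_stabilizer_iff.1 hσ] at this
      rw [smul_sub, ← Ideal.Quotient.eq] at h2
      rw [h2, ← hw]
      have : σ • (m : 𝓞 K) = m := map_intCast (MulSemiringAction.toRingHom Gal(K/ℚ) (𝓞 K) σ) m
      rw [this, map_intCast]
    rw [eq_bot_iff]
    intro σ hσ
    rw [Subgroup.mem_bot]
    have hinj : ∀ i j : ℕ, (Ideal.Quotient.mk P ζ) ^ i = (Ideal.Quotient.mk P ζ) ^ j →
        ζ ^ i = ζ ^ j := by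
      intro i j hij
      rw [← pow_mod_orderOf _ i, ← pow_mod_orderOf _ j, ← hζP.eq_orderOf] at hij
      rw [← pow_mod_orderOf ζ i, ← pow_mod_orderOf ζ j, ← hζ.eq_orderOf,
        hζP.pow_inj (Nat.mod_lt _ ht) (Nat.mod_lt _ ht) hij]
    have hroot : ∀ x : 𝓞 K ⧸ P, x ^ t = 1 → ∃ w, ψ w = x := by
      intro x hx
      obtain ⟨i, -, hi⟩ := hzP.eq_pow_of_pow_eq_one hx
      exact ⟨z ^ i, by rw [map_pow, hi]⟩
    apply hgen σ
    · have h1 := hintg ζ (hroot _ hζP.pow_eq_one) σ hσ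
      have h2 : (σ • ζ) ^ t = 1 := by rw [← smul_pow', hζ.pow_eq_one, smul_one]
      obtain ⟨i, -, hi⟩ := hζ.eq_pow_of_pow_eq_one h2
      rw [← hi, map_pow] at h1
      rw [← hi, hinj i 1 (by rw [h1, pow_one]), pow_one]
    · have hψδ : (ψ δ) ^ t = c := by rw [← map_pow, hδ, map_intCast]
      have hδ0 : ψ δ ≠ 0 := by
        intro h0
        rw [h0, zero_pow ht.ne'] at hψδ
        exact hcP hψδ.symm
      have hfin : Finite (𝓞 K ⧸ P) := Ideal.finiteQuotientOfFreeOfNeBot P fun hbot => by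
        rw [hbot, Ideal.mem_bot] at hpP
        exact hp.ne_zero (by exact_mod_cast hpP)
      let _ : Field (𝓞 K ⧸ P) := (Finite.isDomain_to_isField (𝓞 K ⧸ P)).toField
      obtain ⟨w, hw⟩ := hroot (Ideal.Quotient.mk P β / ψ δ) (by
        rw [div_pow, hβP, hψδ, div_self hcP])
      have h1 := hintg β ⟨w * δ, by rw [map_mul, hw, div_mul_cancel₀ _ hδ0]⟩ σ hσ
      have hβne : β ≠ 0 := by
        rintro rfl
        exact hβ0 (map_zero _)
      have h2 : (σ • β) ^ t = β ^ t := by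
        rw [← smul_pow', hβ]
        exact map_intCast (MulSemiringAction.toRingHom Gal(K/ℚ) (𝓞 K) σ) c
      obtain ⟨i, hi⟩ : ∃ i, σ • β = ζ ^ i * β := by
        have hζK : IsPrimitiveRoot (ζ : K) t := hζ.map_of_injective RingOfIntegers.coe_injective
        have h3 : (((σ • β : 𝓞 K) : K) / (β : K)) ^ t = 1 := by
          rw [div_pow, ← map_pow, ← map_pow, h2, div_self]
          exact (map_ne_zero_iff _ RingOfIntegers.coe_injective).2 (pow_ne_zero t hβne)
        obtain ⟨i, -, hi⟩ := hζK.eq_pow_of_pow_eq_one h3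
        refine ⟨i, RingOfIntegers.coe_injective ?_⟩
        rw [map_mul, map_pow, hi, div_mul_cancel₀]
        exact (map_ne_zero_iff _ RingOfIntegers.coe_injective).2 hβne
      rw [hi, map_mul, map_pow, mul_eq_right₀ hβ0] at h1
      rw [hi, hinj i 0 (by rw [h1, pow_zero]), pow_zero, one_mul]
  · rw [Nat.card_eq_zero]
    left
    refine ⟨fun ⟨Q, hQ⟩ => h ?_⟩
    have hpQ : (p : 𝓞 K) ∈ Q.asIdeal := by
      rw [← hQ]
      exact Ideal.absNorm_mem Q.asIdeal
    have hcard : Nat.card (𝓞 K ⧸ Q.asIdeal) = p := by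
      rw [← hQ, Ideal.absNorm_apply, Submodule.cardQuot_apply]
    have hchar : CharP (𝓞 K ⧸ Q.asIdeal) p := by
      rw [CharP.charP_iff_prime_eq_zero hp, ← map_natCast (Ideal.Quotient.mk Q.asIdeal)]
      exact Ideal.Quotient.eq_zero_iff_mem.2 hpQ
    have hfin : Finite (𝓞 K ⧸ Q.asIdeal) := Nat.finite_of_card_ne_zero (by
      rw [hcard]; exact hp.ne_zero)
    have := Fintype.ofFinite (𝓞 K ⧸ Q.asIdeal)
    set ψ : ZMod p ≃+* 𝓞 K ⧸ Q.asIdeal := ZMod.ringEquiv _ (by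
      rw [← Nat.card_eq_fintype_card, hcard]) with hψ
    have hζP : IsPrimitiveRoot (Ideal.Quotient.mk Q.asIdeal ζ) t :=
      hζ.idealQuotient_mk (by rw [hQ]; exact hp.one_lt.ne') (by rwa [hQ])
    refine ⟨⟨ψ.symm (Ideal.Quotient.mk Q.asIdeal ζ), hζP.map_of_injective ψ.symm.injective⟩,
      ψ.symm (Ideal.Quotient.mk Q.asIdeal β), ?_⟩
    rw [← map_pow, ← map_pow, hβ, map_intCast, map_intCast]

end Primes

end Splitting

/-! ### The splitting field of `X ^ t - g` -/

namespace Splitting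
open NumberField IsDedekindDomain

theorem ratCast_eq (g : ℚ) : (g.den : ℚ) * g = g.num := Rat.den_mul_eq_num g

theorem pow_mul_eq {R : Type*} [CommRing R] {t : ℕ} (ht : 0 < t) {b c a : R} (h : b * c = a) :
    b ^ t * c = a * b ^ (t - 1) := by
  rw [← pow_sub_one_mul ht.ne' b, mul_assoc, h, mul_comm]

instance isGalois_splitField (g : ℚ) (t : ℕ) : IsGalois ℚ (splitField g t) :=
  have : Normal ℚ (splitField g t) := Polynomial.SplittingField.instNormal (X ^ t - C g)
  ⟨⟩

/-- The field `ℚ(ζ_t, g ^ (1 / t))` is generated by a primitive `t`-th root of unity `ζ` and a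
`t`-th root `β` of the integer `a * b ^ (t - 1)`, where `g = a / b`. -/
theorem exists_generators {g : ℚ} (hg : g ≠ 0) {t : ℕ} (ht : 0 < t) :
    ∃ ζ β : 𝓞 (splitField g t), IsPrimitiveRoot ζ t ∧
      β ^ t = ((g.num * (g.den : ℤ) ^ (t - 1) : ℤ) : 𝓞 (splitField g t)) ∧
      ∀ σ : Gal(splitField g t/ℚ), σ • ζ = ζ → σ • β = β → σ = 1 := by
  have hsp := SplittingField.splits (X ^ t - C g : ℚ[X])
  have hsp1 := splits_X_pow_sub_one_of_X_pow_sub_C (algebraMap ℚ (splitField g t)) t hg hsp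
  have : NeZero t := ⟨ht.ne'⟩
  obtain ⟨z, hz⟩ : ∃ z : splitField g t, IsPrimitiveRoot z t := by
    have hdvd : cyclotomic t (splitField g t) ∣ ((X ^ t - 1 : ℚ[X]).map
        (algebraMap ℚ (splitField g t))) := by
      simpa using cyclotomic.dvd_X_pow_sub_one t (splitField g t)
    have hne : ((X ^ t - 1 : ℚ[X]).map (algebraMap ℚ (splitField g t))) ≠ 0 := by
      simpa using X_pow_sub_C_ne_zero ht (1 : splitField g t)
    obtain ⟨z, hz⟩ := (hsp1.of_dvd hne hdvd).exists_eval_eq_zero (by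
      rw [degree_cyclotomic]
      exact_mod_cast (Nat.totient_pos.2 ht).ne')
    exact ⟨z, isRoot_cyclotomic_iff.1 hz⟩
  have hdeg : (X ^ t - C g : ℚ[X]).degree ≠ 0 := by
    rw [degree_X_pow_sub_C ht]
    exact_mod_cast ht.ne'
  obtain ⟨α, hα⟩ : ∃ α : splitField g t, α ^ t = algebraMap ℚ _ g := by
    obtain ⟨α, hα⟩ := hsp.exists_eval_eq_zero (by rwa [degree_map])
    refine ⟨α, ?_⟩
    simpa [sub_eq_zero] using hα
  have hb : ((g.den : ℕ) : splitField g t) ≠ 0 := by exact_mod_cast g.den_nz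
  have hβ : ((g.den : splitField g t) * α) ^ t =
      ((g.num * (g.den : ℤ) ^ (t - 1) : ℤ) : splitField g t) := by
    have h1 := congrArg (algebraMap ℚ (splitField g t)) (ratCast_eq g)
    rw [map_mul, map_natCast, map_intCast] at h1
    rw [mul_pow, hα, pow_mul_eq ht h1]
    push_cast
    rfl
  have hβi : IsIntegral ℤ ((g.den : splitField g t) * α) := by
    refine IsIntegral.of_pow ht ?_
    rw [hβ]
    exact isIntegral_intCast _
  have hzi : IsIntegral ℤ z := hz.isIntegral ht
  refine ⟨⟨z, hzi⟩, ⟨_, hβi⟩, ?_, ?_, ?_⟩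
  · exact IsPrimitiveRoot.of_map_of_injective (f := algebraMap (𝓞 (splitField g t)) (splitField g t))
      hz RingOfIntegers.coe_injective
  · refine RingOfIntegers.coe_injective ?_
    exact hβ.trans (map_intCast (algebraMap (𝓞 (splitField g t)) (splitField g t)) _).symm
  · intro σ h1 h2
    have h1 : σ z = z := congrArg (fun x : 𝓞 (splitField g t) => (x : splitField g t)) h1
    have h2 : σ ((g.den : splitField g t) * α) = (g.den : splitField g t) * α :=
      congrArg (fun x : 𝓞 (splitField g t) => (x : splitField g t)) h2
    rw [map_mul, map_natCast] at h2
    have h2 := mul_left_cancel₀ hb h2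
    refine Gal.ext (p := (X ^ t - C g : ℚ[X])) fun x hx => ?_
    have hx1 : x ^ t = algebraMap ℚ _ g := by
      have := (mem_rootSet.1 hx).2
      simpa [sub_eq_zero] using this
    have hα0 : α ≠ 0 := by
      rintro rfl
      rw [zero_pow ht.ne'] at hα
      exact hg (by simpa using hα.symm)
    obtain ⟨i, -, hi⟩ := hz.eq_pow_of_pow_eq_one (show (x / α) ^ t = 1 by
      rw [div_pow, hx1, hα, div_self]
      rw [← hα]
      exact pow_ne_zero t hα0)
    have hx2 : x = z ^ i * α := by rw [hi, div_mul_cancel₀ _ hα0]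
    change σ x = x
    rw [hx2, map_mul, map_pow, h1, h2]

/-- At a rational prime `p` the von Mangoldt function of `K` sees only the prime ideals of norm `p`,
since a proper power has composite norm. -/
theorem mangoldt_prime (K : Type*) [Field K] [NumberField K] {p : ℕ} (hp : p.Prime) :
    PrimeIdeals.mangoldt K p =
      Nat.card {Q : HeightOneSpectrum (𝓞 K) // Ideal.absNorm Q.asIdeal = p} * Real.log p := by
  have hk : ∀ t : PrimeIdeals.normPow (K := K) ⁻¹' {p}, t.1.2 = 0 ∧
      Ideal.absNorm t.1.1.asIdeal = p := by
    rintro ⟨⟨Q, k⟩, h⟩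
    have h : Ideal.absNorm Q.asIdeal ^ (k + 1) = p := h
    have hk : k + 1 = 1 := by
      by_contra hne
      rw [← h] at hp
      exact hp.not_prime_pow' hne
    rw [hk, pow_one] at h
    exact ⟨by simpa using hk, h⟩
  let e : (PrimeIdeals.normPow (K := K) ⁻¹' {p}) ≃
      {Q : HeightOneSpectrum (𝓞 K) // Ideal.absNorm Q.asIdeal = p} :=
    { toFun := fun t => ⟨t.1.1, (hk t).2⟩
      invFun := fun Q => ⟨(Q.1, 0), by
        change Ideal.absNorm Q.1.asIdeal ^ (0 + 1) = p
        rw [zero_add, pow_one, Q.2]⟩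
      left_inv := fun t => Subtype.ext (Prod.ext rfl (hk t).1.symm)
      right_inv := fun Q => rfl }
  rw [PrimeIdeals.mangoldt, ← Nat.card_congr e, ← nsmul_eq_mul, ← tsum_const]
  refine tsum_congr fun t => ?_
  rw [PrimeIdeals.logNorm, (hk t).2]

theorem ratRed_ne_zero {g : ℚ} {p : ℕ} [Fact p.Prime] (h : OrdZero g p) : ratRed g p ≠ 0 := by
  refine mul_ne_zero ?_ (inv_ne_zero ?_)
  · rw [Ne, ZMod.intCast_zmod_eq_zero_iff_dvd]
    exact h.1
  · rw [Ne, ZMod.natCast_eq_zero_iff]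
    exact h.2

/-- Outside finitely many primes, the prime ideals of norm `p` detect whether `t ∣ r_g(p)`. -/
theorem mangoldt_splitField {g : ℚ} (hg : g ≠ 0) {t : ℕ} (ht : 0 < t) {p : ℕ} (hp : p.Prime)
    (h : OrdZero g p) (hpt : ¬ p ∣ t) :
    PrimeIdeals.mangoldt (splitField g t) p =
      if t ∣ resIndex g p then Module.finrank ℚ (splitField g t) * Real.log p else 0 := by
  have := Fact.mk hp
  obtain ⟨ζ, β, hζ, hβ, hgen⟩ := exists_generators hg ht
  have hb : ((g.den : ℕ) : ZMod p) ≠ 0 := by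
    rw [Ne, ZMod.natCast_eq_zero_iff]
    exact h.2
  have hpc : ¬ (p : ℤ) ∣ g.num * (g.den : ℤ) ^ (t - 1) := by
    intro hd
    rcases (Nat.prime_iff_prime_int.1 hp).dvd_or_dvd hd with h1 | h1
    · exact h.1 h1
    · exact h.2 (by exact_mod_cast (Nat.prime_iff_prime_int.1 hp).dvd_of_dvd_pow h1)
  have hdvd : t ∣ resIndex g p ↔ _ := dvd_index_iff ht (ratRed_ne_zero h)
  rw [mangoldt_prime _ hp, card_norm_eq ht hζ hβ hgen hpt hpc]
  have hiff : (∃ δ : ZMod p, δ ^ t = ((g.num * (g.den : ℤ) ^ (t - 1) : ℤ) : ZMod p)) ↔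
      ∃ δ : ZMod p, δ ^ t = ratRed g p := by
    have h1 : ((g.num * (g.den : ℤ) ^ (t - 1) : ℤ) : ZMod p) =
        ((g.den : ℕ) : ZMod p) ^ t * ratRed g p := by
      rw [ratRed]
      conv_rhs => rw [← Nat.sub_one_add_one ht.ne', pow_succ]
      push_cast
      field_simp
    rw [h1]
    constructor
    · rintro ⟨δ, hδ⟩
      exact ⟨δ / (g.den : ZMod p), by rw [div_pow, hδ, mul_div_cancel_left₀ _ (pow_ne_zero t hb)]⟩
    · rintro ⟨δ, hδ⟩
      exact ⟨(g.den : ZMod p) * δ, by rw [mul_pow, hδ]⟩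
  rw [← hiff] at hdvd
  by_cases hd : t ∣ resIndex g p
  · rw [if_pos hd, if_pos (hdvd.1 hd)]
  · rw [if_neg hd, if_neg (fun h1 => hd (hdvd.2 h1)), Nat.cast_zero, zero_mul]

end Splitting

/-! ### From weighted to unweighted prime counts -/

namespace PrimeCount
open MeasureTheory

/-- The indicator function of the primes satisfying `P`, weighted by `log`. -/
noncomputable def logIndicator (P : ℕ → Prop) (m : ℕ) : ℝ :=
  if m.Prime ∧ P m then Real.log m else 0

theorem logIndicator_nonneg (P : ℕ → Prop) (m : ℕ) : 0 ≤ logIndicator P m := by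
  rw [logIndicator]
  split_ifs
  · exact Real.log_natCast_nonneg m
  · exact le_rfl

theorem logIndicator_le (P : ℕ → Prop) (m : ℕ) : logIndicator P m ≤ Real.log m := by
  rw [logIndicator]
  split_ifs
  · exact le_rfl
  · exact Real.log_natCast_nonneg m

theorem log_ne_zero {u : ℝ} (hu : 2 ≤ u) : Real.log u ≠ 0 :=
  (Real.log_pos (by linarith)).ne'

theorem continuousOn_weight (x : ℝ) :
    ContinuousOn (fun u : ℝ => 1 / (u * Real.log u ^ 2)) (Set.Icc 2 x) := by
  intro u hu
  have h1 : u ≠ 0 := by linarith [hu.1]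
  have h2 : u * Real.log u ^ 2 ≠ 0 := mul_ne_zero h1 (pow_ne_zero 2 (log_ne_zero hu.1))
  exact ContinuousAt.continuousWithinAt (by fun_prop (disch := assumption))

theorem integrable_summ (b : ℕ → ℝ) {x : ℝ} (hx : 2 ≤ x) :
    IntervalIntegrable (fun u => summ b u * (1 / (u * Real.log u ^ 2))) volume 2 x := by
  rw [intervalIntegrable_iff_integrableOn_Icc_of_le hx]
  have h := integrableOn_mul_sum_Icc (m := 0) b (by norm_num : (0:ℝ) ≤ 2)
    ((continuousOn_weight x).integrableOn_Icc (μ := volume))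
  refine h.congr_fun (fun u _ => ?_) measurableSet_Icc
  simp only [summ, Nat.range_succ_eq_Icc_zero]
  ring

theorem integrable_id {x : ℝ} (hx : 2 ≤ x) :
    IntervalIntegrable (fun u => u * (1 / (u * Real.log u ^ 2))) volume 2 x := by
  refine ContinuousOn.intervalIntegrable ?_
  rw [Set.uIcc_of_le hx]
  exact continuousOn_id.mul (continuousOn_weight x)

/-- Abel summation for the number of primes satisfying `P`. -/
theorem countPrimes_eq (P : ℕ → Prop) {x : ℝ} (hx : 2 ≤ x) :
    (countPrimes x P : ℝ) = summ (logIndicator P) x / Real.log x +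
      ∫ u in (2:ℝ)..x, summ (logIndicator P) u * (1 / (u * Real.log u ^ 2)) := by
  have h1 : (countPrimes x P : ℝ) =
      ∑ k ∈ Finset.Icc 0 ⌊x⌋₊, (Real.log k)⁻¹ * logIndicator P k := by
    rw [countPrimes, Finset.card_eq_sum_ones, Finset.sum_filter, Nat.range_succ_eq_Icc_zero]
    push_cast
    refine Finset.sum_congr rfl fun m _ => ?_
    rw [logIndicator]
    split_ifs with h
    · rw [inv_mul_cancel₀ (log_ne_zero (by exact_mod_cast h.1.two_le))]
    · rw [mul_zero]
  rw [h1, sum_mul_eq_sub_integral_mul₁ (logIndicator P) (f := fun u => (Real.log u)⁻¹)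
    (by simp [logIndicator]) (by simp [logIndicator]) x, ← intervalIntegral.integral_of_le hx]
  · have h2 : ∫ u in (2:ℝ)..x, deriv (fun u => (Real.log u)⁻¹) u *
        ∑ k ∈ Finset.Icc 0 ⌊u⌋₊, logIndicator P k =
        ∫ u in (2:ℝ)..x, -(summ (logIndicator P) u * (1 / (u * Real.log u ^ 2))) := by
      refine intervalIntegral.integral_congr fun u _ => ?_
      simp only [summ, Nat.range_succ_eq_Icc_zero]
      rw [Real.deriv_inv_log_apply]
      ring
    rw [h2, intervalIntegral.integral_neg, sub_neg_eq_add, summ, Nat.range_succ_eq_Icc_zero]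
    ring
  · intro u hu
    have h3 : u ≠ 0 := by linarith [hu.1]
    have h4 := log_ne_zero hu.1
    fun_prop (disch := assumption)
  · refine ContinuousOn.integrableOn_Icc ?_
    refine (continuousOn_weight x).neg.congr fun u _ => ?_
    rw [Real.deriv_inv_log_apply]
    simp only [Pi.neg_apply]
    ring

/-- Integration by parts for the logarithmic integral. -/
theorem Li_eq {x : ℝ} (hx : 2 ≤ x) :
    Li x = x / Real.log x - 2 / Real.log 2 +
      ∫ u in (2:ℝ)..x, u * (1 / (u * Real.log u ^ 2)) := by
  have hd : ∀ u ∈ Set.uIcc 2 x, HasDerivAt (fun u => u / Real.log u)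
      (1 / Real.log u - u * (1 / (u * Real.log u ^ 2))) u := by
    intro u hu
    rw [Set.uIcc_of_le hx] at hu
    have h3 : u ≠ 0 := by linarith [hu.1]
    have h4 := log_ne_zero hu.1
    refine ((hasDerivAt_id' u).fun_div (Real.hasDerivAt_log h3) h4).congr_deriv ?_
    field_simp
  have h1 : IntervalIntegrable (fun u => 1 / Real.log u) volume 2 x := by
    refine ContinuousOn.intervalIntegrable fun u hu => ?_
    rw [Set.uIcc_of_le hx] at hu
    have h3 : u ≠ 0 := by linarith [hu.1]
    have h4 := log_ne_zero hu.1
    exact ContinuousAt.continuousWithinAt (by fun_prop (disch := assumption))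
  have h := intervalIntegral.integral_eq_sub_of_hasDerivAt hd (h1.sub (integrable_id hx))
  rw [intervalIntegral.integral_sub h1 (integrable_id hx)] at h
  rw [Li]
  linarith

/-- The function `√u * exp (-c * √(log u))` is increasing up to a constant factor. -/
theorem exp_sqrt_log_le {c u x : ℝ} (hu : 1 ≤ u) (hux : u ≤ x) :
    Real.exp (-c * √(Real.log u)) ≤
      Real.exp (c ^ 2 / 2) * √x * Real.exp (-c * √(Real.log x)) * (√u)⁻¹ := by
  have hu0 : 0 < u := by linarith
  have hx0 : 0 < x := by linarith
  have hlu := Real.log_nonneg hu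
  have hlx := Real.log_nonneg (hu.trans hux)
  have e1 : √x = Real.exp (Real.log x / 2) := by
    rw [← Real.log_sqrt hx0.le, Real.exp_log (Real.sqrt_pos.2 hx0)]
  have e2 : (√u)⁻¹ = Real.exp (-(Real.log u / 2)) := by
    rw [← Real.log_sqrt hu0.le, Real.exp_neg, Real.exp_log (Real.sqrt_pos.2 hu0)]
  rw [e1, e2, ← Real.exp_add, ← Real.exp_add, ← Real.exp_add, Real.exp_le_exp]
  have h1 := Real.sq_sqrt hlu
  have h2 := Real.sq_sqrt hlx
  have h3 : √(Real.log u) ≤ √(Real.log x) := Real.sqrt_le_sqrt (Real.log_le_log hu0 hux)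
  have h4 := Real.sqrt_nonneg (Real.log u)
  nlinarith [sq_nonneg (√(Real.log x) - √(Real.log u) - c),
    mul_nonneg h4 (sub_nonneg.2 h3)]

/-- An error `O(√x)` is absorbed by the error term of the prime number theorem. -/
theorem sqrt_le {c x : ℝ} (hx : 1 ≤ x) :
    √x ≤ Real.exp (c ^ 2 / 2) * x * Real.exp (-c * √(Real.log x)) := by
  have h := exp_sqrt_log_le (c := c) le_rfl hx
  simp only [Real.log_one, Real.sqrt_zero, mul_zero, Real.exp_zero, Real.sqrt_one, inv_one,
    mul_one] at h
  calc √x = √x * 1 := (mul_one _).symm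
    _ ≤ √x * (Real.exp (c ^ 2 / 2) * √x * Real.exp (-c * √(Real.log x))) := by gcongr
    _ = Real.exp (c ^ 2 / 2) * (√x * √x) * Real.exp (-c * √(Real.log x)) := by ring
    _ = _ := by rw [Real.mul_self_sqrt (by linarith)]

theorem integral_inv_sqrt_le {x : ℝ} (hx : 2 ≤ x) : ∫ u in (2:ℝ)..x, (√u)⁻¹ ≤ 2 * √x := by
  have h : ∫ u in (2:ℝ)..x, (√u)⁻¹ = 2 * √x - 2 * √2 := by
    refine intervalIntegral.integral_eq_sub_of_hasDerivAt (f := fun u => 2 * √u) ?_ ?_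
    · intro u hu
      rw [Set.uIcc_of_le hx] at hu
      have h3 : u ≠ 0 := by linarith [hu.1]
      have h5 := (Real.hasDerivAt_sqrt h3).const_mul 2
      rwa [show 2 * (1 / (2 * √u)) = (√u)⁻¹ by ring] at h5
    · refine ContinuousOn.intervalIntegrable fun u hu => ?_
      rw [Set.uIcc_of_le hx] at hu
      have h3 : √u ≠ 0 := (Real.sqrt_pos.2 (by linarith [hu.1])).ne'
      exact ContinuousAt.continuousWithinAt (by fun_prop (disch := assumption))
  rw [h]
  linarith [Real.sqrt_nonneg 2]

/-- Passage from the weighted to the unweighted count of primes. -/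
theorem countPrimes_bound (P : ℕ → Prop) {κ c M : ℝ} (hM : 0 ≤ M)
    (h : ∀ u, 2 ≤ u → |summ (logIndicator P) u - κ * u| ≤
      M * u * Real.exp (-c * √(Real.log u))) :
    ∃ M', ∀ x, 2 ≤ x →
      |(countPrimes x P : ℝ) - κ * Li x| ≤ M' * x * Real.exp (-c * √(Real.log x)) := by
  have hl2 : 0 < Real.log 2 := Real.log_pos (by norm_num)
  set A := Real.exp (c ^ 2 / 2) with hA
  have hA0 : 0 < A := Real.exp_pos _
  refine ⟨M / Real.log 2 + |2 * κ / Real.log 2| * A + M / Real.log 2 ^ 2 * (2 * A),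
    fun x hx => ?_⟩
  have hx0 : 0 < x := by linarith
  set S := Real.exp (-c * √(Real.log x)) with hS
  have hS0 : 0 < S := Real.exp_pos _
  have hlx : Real.log 2 ≤ Real.log x := Real.log_le_log (by norm_num) hx
  have hsub : (∫ u in (2:ℝ)..x, summ (logIndicator P) u * (1 / (u * Real.log u ^ 2))) -
      κ * ∫ u in (2:ℝ)..x, u * (1 / (u * Real.log u ^ 2)) =
      ∫ u in (2:ℝ)..x, (summ (logIndicator P) u - κ * u) * (1 / (u * Real.log u ^ 2)) := by
    rw [← intervalIntegral.integral_const_mul,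
      ← intervalIntegral.integral_sub (integrable_summ _ hx) ((integrable_id hx).const_mul κ)]
    refine intervalIntegral.integral_congr fun u _ => ?_
    ring
  have hdec : (countPrimes x P : ℝ) - κ * Li x =
      (summ (logIndicator P) x - κ * x) / Real.log x + 2 * κ / Real.log 2 +
      ∫ u in (2:ℝ)..x, (summ (logIndicator P) u - κ * u) * (1 / (u * Real.log u ^ 2)) := by
    rw [← hsub, countPrimes_eq P hx, Li_eq hx]
    ring
  have b1 : |(summ (logIndicator P) x - κ * x) / Real.log x| ≤ M / Real.log 2 * x * S := by
    rw [abs_div, abs_of_pos (hl2.trans_le hlx)]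
    calc _ ≤ M * x * S / Real.log 2 := by
          gcongr
          exact h x hx
      _ = _ := by ring
  have b2 : |2 * κ / Real.log 2| ≤ |2 * κ / Real.log 2| * A * x * S := by
    have h1 : 1 ≤ A * x * S :=
      (Real.one_le_sqrt.2 (by linarith)).trans (sqrt_le (by linarith))
    calc _ = |2 * κ / Real.log 2| * 1 := (mul_one _).symm
      _ ≤ |2 * κ / Real.log 2| * (A * x * S) := by gcongr
      _ = _ := by ring
  have b3 : |∫ u in (2:ℝ)..x, (summ (logIndicator P) u - κ * u) * (1 / (u * Real.log u ^ 2))| ≤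
      M / Real.log 2 ^ 2 * (2 * A) * x * S := by
    have hintg : IntervalIntegrable (fun u => M / Real.log 2 ^ 2 * (A * √x * S) * (√u)⁻¹)
        volume 2 x := by
      refine ContinuousOn.intervalIntegrable fun u hu => ?_
      rw [Set.uIcc_of_le hx] at hu
      have h3 : √u ≠ 0 := (Real.sqrt_pos.2 (by linarith [hu.1])).ne'
      exact ContinuousAt.continuousWithinAt (by fun_prop (disch := assumption))
    have h1 := intervalIntegral.norm_integral_le_of_norm_le (μ := volume) hx
      (f := fun u => (summ (logIndicator P) u - κ * u) * (1 / (u * Real.log u ^ 2)))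
      (g := fun u => M / Real.log 2 ^ 2 * (A * √x * S) * (√u)⁻¹) (ae_of_all _ fun u hu => ?_) hintg
    · rw [Real.norm_eq_abs, intervalIntegral.integral_const_mul] at h1
      refine h1.trans ?_
      calc _ ≤ M / Real.log 2 ^ 2 * (A * √x * S) * (2 * √x) := by
            gcongr
            exact integral_inv_sqrt_le hx
        _ = M / Real.log 2 ^ 2 * (2 * A) * (√x * √x) * S := by ring
        _ = _ := by rw [Real.mul_self_sqrt hx0.le]
    · have hu2 : 2 ≤ u := hu.1.le
      have hu0 : 0 < u := by linarith
      have hlu : Real.log 2 ≤ Real.log u := Real.log_le_log (by norm_num) hu2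
      rw [Real.norm_eq_abs, abs_mul, abs_of_pos (show 0 < 1 / (u * Real.log u ^ 2) by
        have := hl2.trans_le hlu
        positivity)]
      calc _ ≤ M * u * Real.exp (-c * √(Real.log u)) * (1 / (u * Real.log 2 ^ 2)) := by
            gcongr
            exact h u hu2
        _ = M / Real.log 2 ^ 2 * Real.exp (-c * √(Real.log u)) := by field_simp
        _ ≤ M / Real.log 2 ^ 2 * (A * √x * S * (√u)⁻¹) := by
            gcongr
            exact exp_sqrt_log_le (by linarith) hu.2
        _ = _ := by ring
  rw [hdec]
  calc _ ≤ M / Real.log 2 * x * S + |2 * κ / Real.log 2| * A * x * S +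
        M / Real.log 2 ^ 2 * (2 * A) * x * S :=
      (abs_add_le _ _).trans (add_le_add ((abs_add_le _ _).trans (add_le_add b1 b2)) b3)
    _ = _ := by ring

end PrimeCount

/-! ### Counting the primes with `t ∣ r_g(p)` -/

namespace PrimeCount
open PrimeIdeals Splitting

section Comparison

variable (g : ℚ) (t : ℕ)

/-- The condition cutting out the primes counted by `R_{g,t}`. -/
def IndexCond (p : ℕ) : Prop := Odd p ∧ OrdZero g p ∧ t ∣ resIndex g p

/-- The excluded primes are those dividing this number. -/
def badNumber : ℕ := 2 * g.num.natAbs * g.den * t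

variable {g t}

/-- Away from the excluded primes, `Λ_K(p)` is `[K : ℚ] log p` or `0` according to whether `p` is
counted by `R_{g,t}`. -/
theorem mangoldt_eq (hg : g ≠ 0) (ht : 0 < t) {p : ℕ} (hp : p.Prime) (hb : ¬ p ∣ badNumber g t) :
    mangoldt (splitField g t) p =
      Module.finrank ℚ (splitField g t) * logIndicator (IndexCond g t) p := by
  have h2 : ¬ p ∣ 2 := fun h => hb (((h.mul_right _).mul_right _).mul_right _)
  have h3 : OrdZero g p := by
    refine ⟨fun h => hb ?_, fun h => hb ((h.mul_left _).mul_right _)⟩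
    exact (((Int.natCast_dvd.1 h).mul_left _).mul_right _).mul_right _
  have h4 : ¬ p ∣ t := fun h => hb (h.mul_left _)
  have h5 : Odd p := hp.odd_of_ne_two (by rintro rfl; exact h2 dvd_rfl)
  rw [mangoldt_splitField hg ht hp h3 h4, logIndicator]
  by_cases h : t ∣ resIndex g p
  · rw [if_pos h, if_pos ⟨hp, h5, h3, h⟩]
  · rw [if_neg h, if_neg (fun h6 => h h6.2.2.2), mul_zero]

/-- The difference of the two weights is supported on proper prime powers and on excluded primes. -/
theorem mangoldt_sub_le (hg : g ≠ 0) (ht : 0 < t) (m : ℕ) :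
    |mangoldt (splitField g t) m -
        Module.finrank ℚ (splitField g t) * logIndicator (IndexCond g t) m| ≤
      Module.finrank ℚ (splitField g t) *
        ((if ¬ m.Prime then ArithmeticFunction.vonMangoldt m else 0) +
          if m ∈ (badNumber g t).divisors then Real.log m else 0) := by
  have hn : (0:ℝ) ≤ Module.finrank ℚ (splitField g t) := Nat.cast_nonneg _
  have h0 := mangoldt_nonneg (K := splitField g t) m
  have h1 := mangoldt_le (K := splitField g t) m
  have hlog := Real.log_natCast_nonneg m
  by_cases hp : m.Prime
  · rw [if_neg (not_not.2 hp), zero_add]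
    by_cases hd : m ∣ badNumber g t
    · have hN : badNumber g t ≠ 0 := by
        have := Rat.num_ne_zero.2 hg
        have := g.den_nz
        have := ht.ne'
        simp only [badNumber, ne_eq, mul_eq_zero, Int.natAbs_eq_zero]
        tauto
      rw [if_pos (Nat.mem_divisors.2 ⟨hd, hN⟩)]
      rw [ArithmeticFunction.vonMangoldt_apply_prime hp] at h1
      have h2 := mul_le_mul_of_nonneg_left (logIndicator_le (IndexCond g t) m) hn
      have h3 := mul_nonneg hn (logIndicator_nonneg (IndexCond g t) m)
      rw [abs_le]
      constructor <;> linarith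
    · rw [mangoldt_eq hg ht hp hd, sub_self, abs_zero]
      refine mul_nonneg hn ?_
      split_ifs
      · exact hlog
      · exact le_rfl
  · have h2 : logIndicator (IndexCond g t) m = 0 := if_neg fun h => hp h.1
    rw [h2, mul_zero, sub_zero, abs_of_nonneg h0, if_pos hp]
    refine h1.trans (mul_le_mul_of_nonneg_left ?_ hn)
    have : (0:ℝ) ≤ if m ∈ (badNumber g t).divisors then Real.log m else 0 := by
      split_ifs
      · exact hlog
      · exact le_rfl
    linarith

/-- The proper prime powers contribute `ψ - θ`. -/
theorem summ_vonMangoldt_not_prime (x : ℝ) :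
    summ (fun m => if ¬ m.Prime then ArithmeticFunction.vonMangoldt m else 0) x =
      Chebyshev.psi x - Chebyshev.theta x := by
  rw [Chebyshev.psi_sub_theta_eq_sum_not_prime, Finset.sum_filter, summ,
    Nat.range_succ_eq_Icc_zero, ← Finset.insert_Icc_add_one_left_eq_Icc (Nat.zero_le _),
    Finset.sum_insert (by simp)]
  simp only [ArithmeticFunction.map_zero, ite_self, zero_add]
  rfl

/-- Replacing `Λ_K` by the weighted indicator of the primes counted by `R_{g,t}` costs `O(√x)`. -/
theorem summ_sub_le (hg : g ≠ 0) (ht : 0 < t) : ∃ C, 0 ≤ C ∧ ∀ x, 1 ≤ x →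
    |summ (mangoldt (splitField g t)) x -
      Module.finrank ℚ (splitField g t) * summ (logIndicator (IndexCond g t)) x| ≤ C * √x := by
  obtain ⟨C, hC⟩ := Chebyshev.psi_sub_theta_le_mul_sqrt
  set n : ℝ := ((Module.finrank ℚ (splitField g t) : ℕ) : ℝ) with hn
  have hn0 : 0 ≤ n := Nat.cast_nonneg _
  set D := ∑ m ∈ (badNumber g t).divisors, Real.log m with hD
  have hD0 : 0 ≤ D := Finset.sum_nonneg fun m _ => Real.log_natCast_nonneg m
  have hC0 : 0 ≤ C := by
    have := hC 1
    rw [Chebyshev.psi_one, Chebyshev.theta_one, Real.sqrt_one] at this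
    linarith
  refine ⟨n * (C + D), by positivity, fun x hx => ?_⟩
  have h1 : |summ (mangoldt (splitField g t)) x - n * summ (logIndicator (IndexCond g t)) x| ≤
      n * (summ (fun m => if ¬ m.Prime then ArithmeticFunction.vonMangoldt m else 0) x +
        summ (fun m => if m ∈ (badNumber g t).divisors then Real.log m else 0) x) := by
    simp only [summ]
    rw [Finset.mul_sum, ← Finset.sum_sub_distrib, ← Finset.sum_add_distrib, Finset.mul_sum]
    exact (Finset.abs_sum_le_sum_abs _ _).trans
      (Finset.sum_le_sum fun m _ => mangoldt_sub_le hg ht m)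
  have h2 : summ (fun m => if m ∈ (badNumber g t).divisors then Real.log m else 0) x ≤ D := by
    rw [summ, ← Finset.sum_filter]
    refine Finset.sum_le_sum_of_subset_of_nonneg (fun m hm => (Finset.mem_filter.1 hm).2)
      fun m _ _ => Real.log_natCast_nonneg m
  have h3 : 1 ≤ √x := Real.one_le_sqrt.2 hx
  refine h1.trans ?_
  rw [summ_vonMangoldt_not_prime, mul_assoc]
  refine mul_le_mul_of_nonneg_left ?_ hn0
  nlinarith [hC x]

/-- The prime ideal theorem for `K = ℚ(ζ_t, g^{1/t})` in terms of rational primes: the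
logarithmically weighted count of the primes `p ≤ u` with `t ∣ r_g(p)` is asymptotic to
`u / [K : ℚ]`. -/
theorem summ_logIndicator_bound (hg : g ≠ 0) (ht : 0 < t) : ∃ c M : ℝ, 0 < c ∧ 0 ≤ M ∧
    ∀ u, 2 ≤ u → |summ (logIndicator (IndexCond g t)) u -
      1 / (Module.finrank ℚ (splitField g t) : ℝ) * u| ≤
        M * u * Real.exp (-c * √(Real.log u)) := by
  obtain ⟨c, M, X, hc, hM, hX, h⟩ := pnt_mangoldt (splitField g t)
  obtain ⟨C, hC0, hC⟩ := summ_sub_le hg ht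
  set n : ℝ := ((Module.finrank ℚ (splitField g t) : ℕ) : ℝ) with hn
  have hn1 : 1 ≤ n := by
    rw [hn]
    exact_mod_cast (Module.finrank_pos (R := ℚ) (M := splitField g t))
  have hn0 : 0 < n := by linarith
  set A := Real.exp (c ^ 2 / 2) with hA
  set B := (n * Real.log 4 + C + 1) * Real.exp (c * √(Real.log X)) with hB
  have hl4 : 0 ≤ Real.log 4 := Real.log_nonneg (by norm_num)
  have hB0 : 0 ≤ B := by positivity
  refine ⟨c, M + C * A + B, hc, by positivity, fun u hu => ?_⟩
  have hu0 : 0 < u := by linarith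
  set S := Real.exp (-c * √(Real.log u)) with hS
  have hS0 : 0 < S := Real.exp_pos _
  suffices hmain : |n * summ (logIndicator (IndexCond g t)) u - u| ≤ (M + C * A + B) * u * S by
    have h1 : summ (logIndicator (IndexCond g t)) u - 1 / n * u =
        (n * summ (logIndicator (IndexCond g t)) u - u) / n := by field_simp
    rw [h1, abs_div, abs_of_pos hn0]
    exact (div_le_self (abs_nonneg _) hn1).trans hmain
  -- for `u ≤ X` the trivial bound `θ(u) ≤ u log 4` suffices, with the constant `exp (c √(log X))`
  rcases le_total X u with hXu | hXu
  · have h1 := hC u (by linarith)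
    have h2 := h u hXu
    have h3 : C * √u ≤ C * (A * u * S) :=
      mul_le_mul_of_nonneg_left (sqrt_le (by linarith)) hC0
    have h4 : 0 ≤ B * u * S := by positivity
    rw [abs_le] at *
    constructor <;> nlinarith
  · have h1 : summ (logIndicator (IndexCond g t)) u ≤ Real.log 4 * u := by
      refine le_trans ?_ (Chebyshev.theta_le_log4_mul_x hu0.le)
      rw [Chebyshev.theta_eq_sum_Icc, Finset.sum_filter, summ, Nat.range_succ_eq_Icc_zero]
      refine Finset.sum_le_sum fun m _ => ?_
      by_cases hm : m.Prime
      · rw [if_pos hm]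
        exact logIndicator_le _ m
      · rw [if_neg hm, logIndicator, if_neg (fun h => hm h.1)]
    have h2 : 0 ≤ summ (logIndicator (IndexCond g t)) u :=
      Finset.sum_nonneg fun m _ => logIndicator_nonneg _ m
    have h3 : 1 ≤ Real.exp (c * √(Real.log X)) * S := by
      rw [hS, ← Real.exp_add, Real.one_le_exp_iff]
      have := Real.sqrt_le_sqrt (Real.log_le_log hu0 hXu)
      nlinarith
    have h4 : |n * summ (logIndicator (IndexCond g t)) u - u| ≤ (n * Real.log 4 + C + 1) * u := by
      have h5 : n * summ (logIndicator (IndexCond g t)) u ≤ n * (Real.log 4 * u) := by gcongr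
      have h6 : 0 ≤ n * summ (logIndicator (IndexCond g t)) u := by positivity
      have h7 : 0 ≤ C * u := by positivity
      have h8 : 0 ≤ n * (Real.log 4 * u) := by positivity
      rw [abs_le]
      constructor <;> nlinarith
    calc _ ≤ (n * Real.log 4 + C + 1) * u * 1 := by rw [mul_one]; exact h4
      _ ≤ (n * Real.log 4 + C + 1) * u * (Real.exp (c * √(Real.log X)) * S) := by gcongr
      _ = B * u * S := by rw [hB]; ring
      _ ≤ _ := by
        gcongr
        have : 0 ≤ C * A := by positivity
        linarith

end Comparison

end PrimeCount

/-- the asymptotic behaviour of `R_{g,t}(x)`. -/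
theorem stmt10 (g : ℚ) (hg₁ : g ≠ -1) (hg₂ : g ≠ 0) (hg₃ : g ≠ 1) (t : ℕ) (ht : 1 ≤ t) :
    ∃ c₄ : ℝ, 0 < c₄ ∧
      (fun x : ℝ => (Rgt g t x : ℝ) -
          Li x / (Module.finrank ℚ (splitField g t) : ℝ)) =O[atTop]
        fun x : ℝ => x * Real.exp (-c₄ * Real.sqrt (Real.log x)) := by
  obtain ⟨c, M, hc, hM, h⟩ := PrimeCount.summ_logIndicator_bound hg₂ ht
  obtain ⟨M', h'⟩ := PrimeCount.countPrimes_bound _ hM h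
  refine ⟨c, hc, Asymptotics.IsBigO.of_bound M' ?_⟩
  filter_upwards [eventually_ge_atTop 2] with x hx
  have h1 := h' x hx
  have hx0 : 0 < x := by linarith
  rw [one_div_mul_eq_div] at h1
  rw [Real.norm_eq_abs, Real.norm_of_nonneg (by positivity), ← mul_assoc]
  exact h1
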